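/- arXiv:2002.07925 — 3 statements merged into one kernel-verified Lean document; each statement's English description precedes it below -/
import Mathlib

section
/- Let G be an irreducible robust graph and let x, y be distinct vertices of G with deg(x) ≤ 6, deg(y) ≤ 6, and |N(x) ∪ N(y)| ≤ 7. Then (a) deg(x) = deg(y) = 5; (b) |N(x) ∩ N(y)| = 3; and (c) the induced subgraphs G[N(x)] and G[N(y)] are both complete graphs on 5 vertices. -/
/-!
Suppose that the graph induced on `N(v)` has a matching `M` and a set `Q` of at most `|M|` vertices
such that every edge outside `M` meets `Q`. Then the triangles spanned by `v` and the edges in `M`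
pay for the edges in `M` and the edges from `v` to `Q`, so `V₀ = {v}` gives a reducing triple. If
`v` has at most six neighbours, robustness makes the graph induced on `N(v)` connected with at least
five vertices, and a connected graph on five or six vertices in which some vertex has two
non-neighbours always has such `M` and `Q`. Hence, in an irreducible robust graph, the missing edges
inside `N(v)` form a matching whenever `v` has degree at most six.

For `x` and `y` as in the theorem only a few sizes of `N(x) ∩ N(y)`, `N(x) \ N(y)` and `N(y) \ N(x)`
are possible. Since both neighbourhoods are nearly complete, each case other than that of three
common neighbours and complete neighbourhoods admits an explicit reducing triple with `V₀ = {x, y}`.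
-/

open SimpleGraph

variable {V : Type*}

/-- A triangle transversal of `G`: a set of edges of `G` meeting every triangle of `G`
(so that its removal leaves a triangle-free graph). -/
def IsTriangleTransversal (G : SimpleGraph V) (X : Finset (Sym2 V)) : Prop :=
  ↑X ⊆ G.edgeSet ∧
    ∀ t : Finset V, G.IsNClique 3 t → ∃ e ∈ X, ∀ v ∈ e, v ∈ t

/-- A triangle packing of `G`: a set of pairwise edge-disjoint triangles of `G`. -/
def IsTrianglePacking (G : SimpleGraph V) (Y : Finset (Finset V)) : Prop :=
  (∀ t ∈ Y, G.IsNClique 3 t) ∧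
    ∀ s ∈ Y, ∀ t ∈ Y, s ≠ t →
      ∀ e ∈ G.edgeSet, ¬ ((∀ v ∈ e, v ∈ s) ∧ (∀ v ∈ e, v ∈ t))

/-- `tau G` is the minimum size of a triangle transversal of `G`. -/
noncomputable def tau (G : SimpleGraph V) : ℕ :=
  sInf {n | ∃ X : Finset (Sym2 V), IsTriangleTransversal G X ∧ X.card = n}

/-- `nu G` is the maximum size of a triangle packing of `G`. -/
noncomputable def nu (G : SimpleGraph V) : ℕ :=
  sSup {n | ∃ Y : Finset (Finset V), IsTrianglePacking G Y ∧ Y.card = n}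

/-- `(V₀, X, Y)` is a reducing triple for `G`: `V₀` is a nonempty set of vertices,
`X` a set of edges of `G`, `Y` a triangle packing of `G`, with (i) `|X| ≤ 2|Y|`;
(ii) every triangle of `G` containing a vertex of `V₀` contains an edge of `X`;
(iii) every edge of a triangle of `Y` with both endpoints outside `V₀` lies in `X`. -/
def IsReducingTriple (G : SimpleGraph V) (V₀ : Finset V) (X : Finset (Sym2 V))
    (Y : Finset (Finset V)) : Prop :=
  V₀.Nonempty ∧ ↑X ⊆ G.edgeSet ∧ IsTrianglePacking G Y ∧
    X.card ≤ 2 * Y.card ∧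
    (∀ t : Finset V, G.IsNClique 3 t → (∃ v ∈ V₀, v ∈ t) → ∃ e ∈ X, ∀ v ∈ e, v ∈ t) ∧
    (∀ t ∈ Y, ∀ u v : V, u ∈ t → v ∈ t → G.Adj u v →
      u ∉ V₀ → v ∉ V₀ → s(u, v) ∈ X)

/-- `G` is irreducible if it admits no reducing triple. -/
def IrreducibleGraph (G : SimpleGraph V) : Prop :=
  ¬ ∃ (V₀ : Finset V) (X : Finset (Sym2 V)) (Y : Finset (Finset V)),
      IsReducingTriple G V₀ X Y

/-- `G` is robust: for every vertex `v`, each connected component of the subgraph induced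
on the neighborhood of `v` has at least `5` vertices. -/
def Robust (G : SimpleGraph V) : Prop :=
  ∀ v : V, ∀ c : (G.induce (G.neighborSet v)).ConnectedComponent, 5 ≤ c.supp.ncard

section Enumeration

variable {α : Type*} {S : Set α} {l : List α}

/-- The list `l` enumerates the set `S` without repetition. -/
structure Enumerates (l : List α) (S : Set α) : Prop where
  nodup : l.Nodup
  mem_iff : ∀ {w}, w ∈ S ↔ w ∈ l

theorem Enumerates.of_subset (hl : Enumerates l S) (l' : List α) (hsub : l ⊆ l')
    (hlen : l'.length ≤ l.length) : Enumerates l' S := by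
  have hperm : l.Perm l' := (List.subperm_of_subset hl.nodup hsub).perm_of_length_le hlen
  exact ⟨hperm.nodup_iff.1 hl.nodup, hl.mem_iff.trans hperm.mem_iff⟩

theorem Enumerates.encard_eq (hl : Enumerates l S) : S.encard = l.length := by
  classical
  have hS : S = (l.toFinset : Set α) := by ext; simp [hl.mem_iff]
  rw [hS, Set.encard_coe_eq_coe_finsetCard, List.toFinset_card_of_nodup hl.nodup]

theorem exists_enumerates_append (hS : S.Finite) (hl : l.Nodup) (hsub : ∀ w ∈ l, w ∈ S) :
    ∃ r, Enumerates (l ++ r) S := by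
  classical
  refine ⟨(hS.toFinset \ l.toFinset).toList, List.Nodup.append hl (Finset.nodup_toList _) ?_, ?_⟩
  · intro w hw
    simp [hw]
  · intro w
    simp only [List.mem_append, Finset.mem_toList, Finset.mem_sdiff, Set.Finite.mem_toFinset,
      List.mem_toFinset]
    grind

end Enumeration

section TriangleLists

/-- The edges of a triangle listed as a triple of vertices. Explicit packings are given as lists of
such triples, so that edge-disjointness is `Nodup` of the list of all sides. -/
def sides (t : V × V × V) : List (Sym2 V) := [s(t.1, t.2.1), s(t.1, t.2.2), s(t.2.1, t.2.2)]

/-- The vertices of a triangle listed as a triple, in the form used by `IsTrianglePacking`. -/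
def corners [DecidableEq V] (t : V × V × V) : Finset V := {t.1, t.2.1, t.2.2}

variable {G : SimpleGraph V} {T : List (V × V × V)}

theorem mk_mem_sides [DecidableEq V] {t : V × V × V} {u v : V} (huv : u ≠ v)
    (hu : u ∈ corners t) (hv : v ∈ corners t) : s(u, v) ∈ sides t := by
  simp only [corners, Finset.mem_insert, Finset.mem_singleton] at hu hv
  simp only [sides, List.mem_cons, List.not_mem_nil, or_false, Sym2.eq_iff]
  grind

theorem isNClique_three_corners [DecidableEq V] {t : V × V × V}
    (ht : ∀ e ∈ sides t, e ∈ G.edgeSet) : G.IsNClique 3 (corners t) :=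
  is3Clique_triple_iff.2 (by simpa [sides] using ht)

theorem eq_of_mem_sides_of_mem_sides (hdisj : (T.flatMap sides).Nodup) {t t' : V × V × V}
    (ht : t ∈ T) (ht' : t' ∈ T) {e : Sym2 V} (he : e ∈ sides t) (he' : e ∈ sides t') :
    t = t' := by
  by_contra hne
  have : Std.Symm (Function.onFun List.Disjoint (sides (V := V))) := ⟨fun _ _ h => h.symm⟩
  exact (List.nodup_flatMap.1 hdisj).2.forall ht ht' hne he he'

theorem isTrianglePacking_toFinset_map_corners [DecidableEq V]
    (hT : ∀ e ∈ T.flatMap sides, e ∈ G.edgeSet) (hdisj : (T.flatMap sides).Nodup) :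
    IsTrianglePacking G (T.map corners).toFinset := by
  simp only [IsTrianglePacking, List.mem_toFinset, List.mem_map, forall_exists_index, and_imp,
    forall_apply_eq_imp_iff₂]
  refine ⟨fun t ht => isNClique_three_corners fun e he => ?_, ?_⟩
  · exact hT e (List.mem_flatMap.2 ⟨t, ht, he⟩)
  rintro t ht t' ht' hne e he ⟨hmem, hmem'⟩
  induction e with | _ u v
  have huv : u ≠ v := ((mem_edgeSet G).1 he).ne
  exact hne <| congrArg corners <| eq_of_mem_sides_of_mem_sides hdisj ht ht'
    (mk_mem_sides huv (hmem u (by simp)) (hmem v (by simp)))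
    (mk_mem_sides huv (hmem' u (by simp)) (hmem' v (by simp)))

theorem card_toFinset_map_corners [DecidableEq V] (hT : ∀ e ∈ T.flatMap sides, e ∈ G.edgeSet)
    (hdisj : (T.flatMap sides).Nodup) : (T.map corners).toFinset.card = T.length := by
  rw [List.toFinset_card_of_nodup, List.length_map]
  refine List.pairwise_map.2 ((List.nodup_flatMap.1 hdisj).2.imp_of_mem ?_)
  intro t t' ht _ hd heq
  have hne : t.1 ≠ t.2.1 :=
    ((mem_edgeSet G).1 (hT s(t.1, t.2.1) (List.mem_flatMap.2 ⟨t, ht, by simp [sides]⟩))).ne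
  have h₁ : t.1 ∈ corners t := by simp [corners]
  have h₂ : t.2.1 ∈ corners t := by simp [corners]
  exact hd (mk_mem_sides hne h₁ h₂) (mk_mem_sides hne (heq ▸ h₁) (heq ▸ h₂))

theorem exists_adj_of_mem_isNClique_three {t : Finset V} (ht : G.IsNClique 3 t) {v : V}
    (hv : v ∈ t) : ∃ p ∈ t, ∃ q ∈ t, G.Adj v p ∧ G.Adj v q ∧ G.Adj p q := by
  classical
  obtain ⟨p, q, hpq, herase⟩ := Finset.card_eq_two.1
    ((Finset.card_erase_of_mem hv).trans (by rw [ht.card_eq]))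
  obtain ⟨hpv, hp⟩ := Finset.mem_erase.1 (show p ∈ t.erase v by simp [herase])
  obtain ⟨hqv, hq⟩ := Finset.mem_erase.1 (show q ∈ t.erase v by simp [herase])
  exact ⟨p, hp, q, hq, ht.isClique hv hp hpv.symm, ht.isClique hv hq hqv.symm,
    ht.isClique hp hq hpq⟩

theorem IrreducibleGraph.two_mul_length_lt (hirr : IrreducibleGraph G) {V₀ : List V}
    (hV₀ : V₀ ≠ []) {X : List (Sym2 V)}
    (hT : ∀ e ∈ T.flatMap sides, e ∈ G.edgeSet) (hdisj : (T.flatMap sides).Nodup)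
    (hout : ∀ e ∈ T.flatMap sides, (∀ v ∈ V₀, v ∉ e) → e ∈ X)
    (hcov : ∀ v ∈ V₀, ∀ p q, G.Adj v p → G.Adj v q → G.Adj p q →
      s(v, p) ∈ X ∨ s(v, q) ∈ X ∨ s(p, q) ∈ X) :
    2 * T.length < X.length := by
  classical
  by_contra! hlen
  refine hirr ⟨V₀.toFinset, X.toFinset.filter (· ∈ G.edgeSet), (T.map corners).toFinset,
    by simpa using hV₀, fun e he => (Finset.mem_filter.1 he).2,
    isTrianglePacking_toFinset_map_corners hT hdisj, ?_, ?_, ?_⟩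
  · rw [card_toFinset_map_corners hT hdisj]
    exact (Finset.card_filter_le _ _).trans ((List.toFinset_card_le X).trans hlen)
  · rintro t ht ⟨v, hv, hvt⟩
    obtain ⟨p, hp, q, hq, hvp, hvq, hpq⟩ := exists_adj_of_mem_isNClique_three ht hvt
    have mem_X {e} (heX : e ∈ X) (heG : e ∈ G.edgeSet) :
        e ∈ X.toFinset.filter (· ∈ G.edgeSet) :=
      Finset.mem_filter.2 ⟨List.mem_toFinset.2 heX, heG⟩
    rcases hcov v (by simpa using hv) p q hvp hvq hpq with h | h | h
    · exact ⟨_, mem_X h hvp, by simp [hvt, hp]⟩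
    · exact ⟨_, mem_X h hvq, by simp [hvt, hq]⟩
    · exact ⟨_, mem_X h hpq, by simp [hp, hq]⟩
  · simp only [List.mem_toFinset, List.mem_map, forall_exists_index, and_imp,
      forall_apply_eq_imp_iff₂]
    intro t ht u v hu hv huv hu₀ hv₀
    have hX : s(u, v) ∈ X :=
      hout _ (List.mem_flatMap.2 ⟨t, ht, mk_mem_sides huv.ne hu hv⟩) <| by
        rintro w hw hwe
        rcases Sym2.mem_iff.1 hwe with rfl | rfl <;> contradiction
    simpa [hX] using huv

end TriangleLists

section WeakKE

variable {W : Type*} {H : SimpleGraph W}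

/-- A graph is *weakly König–Egerváry* (Puleo) if it has a matching `M` and a set `Q` of at most
`|M|` vertices such that every edge outside `M` meets `Q`. -/
def IsWeakKE (H : SimpleGraph W) : Prop :=
  ∃ (M : List (W × W)) (Q : List W),
    (∀ e ∈ M, H.Adj e.1 e.2) ∧ (M.flatMap fun e => [e.1, e.2]).Nodup ∧
      Q.length ≤ M.length ∧
      ∀ p q, H.Adj p q → p ∈ Q ∨ q ∈ Q ∨ (p, q) ∈ M ∨ (q, p) ∈ M

theorem isWeakKE_of_pairwise {l : List W} (hl : Enumerates l (Set.univ : Set W))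
    (M : List (W × W)) (Q : List W)
    (h : (∀ e ∈ M, H.Adj e.1 e.2) ∧ (M.flatMap fun e => [e.1, e.2]).Nodup ∧
      Q.length ≤ M.length ∧
      l.Pairwise fun p q => H.Adj p q → p ∈ Q ∨ q ∈ Q ∨ (p, q) ∈ M ∨ (q, p) ∈ M) :
    IsWeakKE H := by
  obtain ⟨hM, hnodup, hlen, hcover⟩ := h
  have : Std.Symm fun p q => H.Adj p q → p ∈ Q ∨ q ∈ Q ∨ (p, q) ∈ M ∨ (q, p) ∈ M :=
    ⟨fun p q h hqp => by have := h hqp.symm; tauto⟩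
  exact ⟨M, Q, hM, hnodup, hlen, fun p q hpq =>
    hcover.forall (hl.mem_iff.1 trivial) (hl.mem_iff.1 trivial) hpq.ne hpq⟩

variable {a b c d e f : W}

theorem isWeakKE_of_indep_of_matching (hl : Enumerates [a, b, c, d, e, f] (Set.univ : Set W))
    (hab : ¬H.Adj a b) (hac : ¬H.Adj a c) (hbc : ¬H.Adj b c) (had : H.Adj a d)
    (hbe : H.Adj b e) (hcf : H.Adj c f) : IsWeakKE H := by
  have hn := hl.nodup
  simp only [List.nodup_cons, List.mem_cons, List.not_mem_nil] at hn
  exact isWeakKE_of_pairwise hl [(a, d), (b, e), (c, f)] [d, e, f] (by simp; grind)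

theorem isWeakKE_of_indep_of_neighbor_pair (hl : Enumerates [a, b, c, d, e, f] (Set.univ : Set W))
    (hab : ¬H.Adj a b) (hac : ¬H.Adj a c) (hbc : ¬H.Adj b c) (had : H.Adj a d)
    (hbe : H.Adj b e)
    (hf : ¬H.Adj a f ∧ ¬H.Adj b f ∧ ¬H.Adj c f) : IsWeakKE H := by
  have hn := hl.nodup
  simp only [List.nodup_cons, List.mem_cons, List.not_mem_nil] at hn
  exact isWeakKE_of_pairwise hl [(a, d), (b, e)] [d, e] (by simp; grind)

theorem isWeakKE_of_indep_of_common_unique_neighbor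
    (hl : Enumerates [a, b, c, d, e, f] (Set.univ : Set W))
    (hab : ¬H.Adj a b) (hac : ¬H.Adj a c) (hbc : ¬H.Adj b c) (had : H.Adj a d)
    (ha : ¬H.Adj a e ∧ ¬H.Adj a f) (hb : ¬H.Adj b e ∧ ¬H.Adj b f) : IsWeakKE H := by
  have hn := hl.nodup
  simp only [List.nodup_cons, List.mem_cons, List.not_mem_nil] at hn
  by_cases hef : H.Adj e f
  · exact isWeakKE_of_pairwise hl [(a, d), (e, f)] [c, d] (by simp; grind)
  by_cases hce : H.Adj c e
  · exact isWeakKE_of_pairwise hl [(a, d), (c, e)] [c, d] (by simp; grind)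
  by_cases hcf : H.Adj c f
  · exact isWeakKE_of_pairwise hl [(a, d), (c, f)] [c, d] (by simp; grind)
  exact isWeakKE_of_pairwise hl [(a, d)] [d] (by simp; grind)

theorem isWeakKE_of_indep_of_adj_of_adj (hl : Enumerates [a, b, c, d, e, f] (Set.univ : Set W))
    (hab : ¬H.Adj a b) (hac : ¬H.Adj a c) (hbc : ¬H.Adj b c) (had : H.Adj a d)
    (hbe : H.Adj b e) (hc : H.Adj c d ∨ H.Adj c e ∨ H.Adj c f) : IsWeakKE H := by
  by_contra hH
  have no_matching {p q r} (h : [a, b, c, d, e, f] ⊆ [a, b, c, p, q, r]) (hap : H.Adj a p)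
      (hbq : H.Adj b q) : ¬H.Adj c r := fun hcr =>
    hH (isWeakKE_of_indep_of_matching (hl.of_subset _ h le_rfl) hab hac hbc hap hbq hcr)
  have hcf : ¬H.Adj c f := no_matching (by simp) had hbe
  have haf_or_hbf : H.Adj a f ∨ H.Adj b f := by
    by_contra! hf
    exact hH (isWeakKE_of_indep_of_neighbor_pair hl hab hac hbc had hbe ⟨hf.1, hf.2, hcf⟩)
  by_cases hcd : H.Adj c d
  · have haf : ¬H.Adj a f := fun haf => no_matching (by simp) haf hbe hcd
    have hbf : H.Adj b f := haf_or_hbf.resolve_left haf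
    have hae : ¬H.Adj a e := fun hae => no_matching (by simp) hae hbf hcd
    have hce : ¬H.Adj c e := no_matching (by simp) had hbf
    exact hH (isWeakKE_of_indep_of_common_unique_neighbor
      (hl.of_subset [a, c, b, d, e, f] (by simp) le_rfl)
      hac hab (mt .symm hbc) had ⟨hae, haf⟩ ⟨hce, hcf⟩)
  · have hce : H.Adj c e := (hc.resolve_left hcd).resolve_right hcf
    have hbf : ¬H.Adj b f := fun hbf => no_matching (by simp) had hbf hce
    have haf : H.Adj a f := haf_or_hbf.resolve_right hbf
    have hbd : ¬H.Adj b d := fun hbd => no_matching (by simp) haf hbd hce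
    exact hH (isWeakKE_of_indep_of_common_unique_neighbor
      (hl.of_subset [b, c, a, e, d, f] (by simp) le_rfl)
      hbc (mt .symm hab) (mt .symm hac) hbe ⟨hbd, hbf⟩ ⟨hcd, hcf⟩)

theorem isWeakKE_of_indep (hl : Enumerates [a, b, c, d, e, f] (Set.univ : Set W))
    (hab : ¬H.Adj a b) (hac : ¬H.Adj a c) (hbc : ¬H.Adj b c)
    (ha : H.Adj a d ∨ H.Adj a e ∨ H.Adj a f) (hb : H.Adj b d ∨ H.Adj b e ∨ H.Adj b f)
    (hc : H.Adj c d ∨ H.Adj c e ∨ H.Adj c f) : IsWeakKE H := by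
  wlog had : H.Adj a d generalizing d e f
  · rcases ha.resolve_left had with hae | haf
    · exact this (hl.of_subset [a, b, c, e, d, f] (by simp) le_rfl)
        (.inl hae) (or_left_comm.1 hb) (or_left_comm.1 hc) hae
    · exact this (hl.of_subset [a, b, c, f, d, e] (by simp) le_rfl)
        (.inl haf) (or_rotate.2 hb) (or_rotate.2 hc) haf
  by_cases hbe : H.Adj b e
  · exact isWeakKE_of_indep_of_adj_of_adj hl hab hac hbc had hbe hc
  by_cases hbf : H.Adj b f
  · exact isWeakKE_of_indep_of_adj_of_adj
      (hl.of_subset [a, b, c, d, f, e] (by simp) le_rfl) hab hac hbc had hbf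
      (or_congr_right or_comm |>.1 hc)
  by_cases hce : H.Adj c e
  · exact isWeakKE_of_indep_of_adj_of_adj
      (hl.of_subset [a, c, b, d, e, f] (by simp) le_rfl) hac hab
      (mt .symm hbc) had hce hb
  by_cases hcf : H.Adj c f
  · exact isWeakKE_of_indep_of_adj_of_adj
      (hl.of_subset [a, c, b, d, f, e] (by simp) le_rfl) hac hab
      (mt .symm hbc) had hcf (or_congr_right or_comm |>.1 hb)
  have hbd : H.Adj b d := by tauto
  exact isWeakKE_of_indep_of_common_unique_neighbor
    (hl.of_subset [b, c, a, d, e, f] (by simp) le_rfl)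
    hbc (mt .symm hab) (mt .symm hac) hbd ⟨hbe, hbf⟩ ⟨hce, hcf⟩

theorem isWeakKE_of_adj_of_adj_of_adj (hl : Enumerates [a, b, c, d, e, f] (Set.univ : Set W))
    (hab : ¬H.Adj a b) (hac : ¬H.Adj a c) (hbc : H.Adj b c) (had : H.Adj a d)
    (hef : H.Adj e f) : IsWeakKE H := by
  have hn := hl.nodup
  simp only [List.nodup_cons, List.mem_cons, List.not_mem_nil] at hn
  exact isWeakKE_of_pairwise hl [(b, c), (a, d), (e, f)] [d, e, f] (by simp; grind)

theorem isWeakKE_of_adj_of_one_neighbor (hl : Enumerates [a, b, c, d, e, f] (Set.univ : Set W))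
    (hab : ¬H.Adj a b) (hac : ¬H.Adj a c) (hbc : H.Adj b c) (had : H.Adj a d)
    (hae : ¬H.Adj a e) (haf : ¬H.Adj a f) : IsWeakKE H := by
  have hn := hl.nodup
  simp only [List.nodup_cons, List.mem_cons, List.not_mem_nil] at hn
  by_cases hef : H.Adj e f
  · exact isWeakKE_of_adj_of_adj_of_adj hl hab hac hbc had hef
  by_cases hce : H.Adj c e <;> by_cases hcf : H.Adj c f
  · by_cases hbe : H.Adj b e
    · by_cases hbf : H.Adj b f
      · exact isWeakKE_of_pairwise hl [(a, d), (b, e), (c, f)] [b, c, d] (by simp; grind)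
      · exact isWeakKE_of_pairwise hl [(a, d), (b, e)] [c, d] (by simp; grind)
    · by_cases hbf : H.Adj b f
      · exact isWeakKE_of_pairwise hl [(a, d), (b, f)] [c, d] (by simp; grind)
      · exact isWeakKE_of_pairwise hl [(a, d), (b, c)] [c, d] (by simp; grind)
  · exact isWeakKE_of_pairwise hl [(a, d), (c, e)] [b, d] (by simp; grind)
  · exact isWeakKE_of_pairwise hl [(a, d), (c, f)] [b, d] (by simp; grind)
  · exact isWeakKE_of_pairwise hl [(a, d), (b, c)] [b, d] (by simp; grind)

theorem exists_adj_of_enumerates_append {l₁ l₂ : List W} (hH : H.Preconnected)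
    (hl : Enumerates (l₁ ++ l₂) (Set.univ : Set W)) (h₁ : l₁ ≠ []) (h₂ : l₂ ≠ []) :
    ∃ p ∈ l₁, ∃ q ∈ l₂, H.Adj p q := by
  obtain ⟨u, hu⟩ := List.exists_mem_of_ne_nil l₁ h₁
  obtain ⟨w, hw⟩ := List.exists_mem_of_ne_nil l₂ h₂
  obtain ⟨walk⟩ := hH u w
  obtain ⟨dart, -, hfst, hsnd⟩ := walk.exists_boundary_dart {p | p ∈ l₁} hu
    fun hw₁ => List.disjoint_of_nodup_append hl.nodup hw₁ hw
  exact ⟨dart.fst, hfst, dart.snd,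
    (List.mem_append.1 (hl.mem_iff.1 trivial)).resolve_left hsnd, dart.adj⟩

theorem isWeakKE_of_adj_of_two_neighbors (hH : H.Preconnected)
    (hl : Enumerates [a, b, c, d, e, f] (Set.univ : Set W))
    (hab : ¬H.Adj a b) (hac : ¬H.Adj a c) (hbc : H.Adj b c) (had : H.Adj a d)
    (hae : H.Adj a e) (haf : ¬H.Adj a f) : IsWeakKE H := by
  by_cases hef : H.Adj e f
  · exact isWeakKE_of_adj_of_adj_of_adj hl hab hac hbc had hef
  by_cases hdf : H.Adj d f
  · exact isWeakKE_of_adj_of_adj_of_adj (hl.of_subset [a, b, c, e, d, f] (by simp) le_rfl)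
      hab hac hbc hae hdf
  wlog hcf : H.Adj c f generalizing b c
  · obtain ⟨q, hq, hqf⟩ : ∃ q ∈ [a, b, c, d, e], H.Adj f q := by
      simpa using exists_adj_of_enumerates_append (l₁ := [f]) (l₂ := [a, b, c, d, e]) hH
        (hl.of_subset _ (by simp) le_rfl) (by simp) (by simp)
    have hbf : H.Adj b f := by grind [hqf.symm]
    exact this (hl.of_subset [a, c, b, d, e, f] (by simp) le_rfl) hac hab hbc.symm hbf
  have hn := hl.nodup
  simp only [List.nodup_cons, List.mem_cons, List.not_mem_nil] at hn
  by_cases hbd : H.Adj b d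
  · exact isWeakKE_of_pairwise hl [(a, e), (b, d), (c, f)] [b, d, e] (by simp; grind)
  by_cases hbe : H.Adj b e
  · exact isWeakKE_of_pairwise hl [(a, d), (b, e), (c, f)] [b, d, e] (by simp; grind)
  by_cases hbf : H.Adj b f
  · obtain ⟨p, hp, q, hq, hpq⟩ : ∃ p ∈ [b, c, f], ∃ q ∈ [a, d, e], H.Adj p q :=
      exists_adj_of_enumerates_append hH (hl.of_subset _ (by simp) le_rfl) (by simp) (by simp)
    obtain hcd | hce : H.Adj c d ∨ H.Adj c e := by grind [hpq.symm]
    · exact isWeakKE_of_pairwise hl [(a, e), (b, f), (c, d)] [c, d, e] (by simp; grind)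
    · exact isWeakKE_of_pairwise hl [(a, d), (b, f), (c, e)] [c, d, e] (by simp; grind)
  · exact isWeakKE_of_pairwise hl [(a, e), (b, c)] [c, d] (by simp; grind)

theorem isWeakKE_of_adj_of_three_neighbors (hl : Enumerates [a, b, c, d, e, f] (Set.univ : Set W))
    (hab : ¬H.Adj a b) (hac : ¬H.Adj a c) (hbc : H.Adj b c) (had : H.Adj a d)
    (hae : H.Adj a e) (haf : H.Adj a f) : IsWeakKE H := by
  by_contra hH
  have hef : ¬H.Adj e f := fun hef => hH (isWeakKE_of_adj_of_adj_of_adj hl hab hac hbc had hef)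
  have hdf : ¬H.Adj d f := fun hdf => hH (isWeakKE_of_adj_of_adj_of_adj
    (hl.of_subset [a, b, c, e, d, f] (by simp) le_rfl) hab hac hbc hae hdf)
  have hde : ¬H.Adj d e := fun hde => hH (isWeakKE_of_adj_of_adj_of_adj
    (hl.of_subset [a, b, c, f, d, e] (by simp) le_rfl) hab hac hbc haf hde)
  wlog hbd : H.Adj b d generalizing d e f
  · by_cases hbe : H.Adj b e
    · exact this (hl.of_subset [a, b, c, e, d, f] (by simp) le_rfl) hae had haf hdf hef
        (mt .symm hde) hbe
    by_cases hbf : H.Adj b f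
    · exact this (hl.of_subset [a, b, c, f, d, e] (by simp) le_rfl) haf had hae hde
        (mt .symm hef) (mt .symm hdf) hbf
    have hn := hl.nodup
    simp only [List.nodup_cons, List.mem_cons, List.not_mem_nil] at hn
    exact hH (isWeakKE_of_pairwise hl [(a, d), (b, c)] [a, c] (by simp; grind))
  have hn := hl.nodup
  simp only [List.nodup_cons, List.mem_cons, List.not_mem_nil] at hn
  apply hH
  by_cases hce : H.Adj c e
  · exact isWeakKE_of_pairwise hl [(a, f), (b, d), (c, e)] [a, b, c] (by simp; grind)
  by_cases hcf : H.Adj c f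
  · exact isWeakKE_of_pairwise hl [(a, e), (b, d), (c, f)] [a, b, c] (by simp; grind)
  by_cases hbe : H.Adj b e
  · by_cases hcd : H.Adj c d
    · exact isWeakKE_of_pairwise hl [(a, f), (b, e), (c, d)] [a, b, c] (by simp; grind)
    · exact isWeakKE_of_pairwise hl [(a, e), (b, c)] [a, b] (by simp; grind)
  by_cases hbf : H.Adj b f
  · by_cases hcd : H.Adj c d
    · exact isWeakKE_of_pairwise hl [(a, e), (b, f), (c, d)] [a, b, c] (by simp; grind)
    · exact isWeakKE_of_pairwise hl [(a, e), (b, c)] [a, b] (by simp; grind)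
  exact isWeakKE_of_pairwise hl [(a, e), (b, c)] [a, d] (by simp; grind)

theorem adj_of_not_adj_of_not_adj (hH : H.Preconnected)
    (hl : Enumerates [a, b, c, d, e, f] (Set.univ : Set W)) (hab : ¬H.Adj a b)
    (hac : ¬H.Adj a c) : H.Adj a d ∨ H.Adj a e ∨ H.Adj a f := by
  simpa [hab, hac] using
    exists_adj_of_enumerates_append (l₁ := [a]) (l₂ := [b, c, d, e, f]) hH hl (by simp) (by simp)

theorem isWeakKE_of_adj (hH : H.Preconnected)
    (hl : Enumerates [a, b, c, d, e, f] (Set.univ : Set W)) (hab : ¬H.Adj a b)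
    (hac : ¬H.Adj a c) (hbc : H.Adj b c) : IsWeakKE H := by
  wlog had : H.Adj a d generalizing d e f
  · rcases (adj_of_not_adj_of_not_adj hH hl hab hac).resolve_left had with hae | haf
    · exact this (hl.of_subset [a, b, c, e, d, f] (by simp) le_rfl) hae
    · exact this (hl.of_subset [a, b, c, f, d, e] (by simp) le_rfl) haf
  by_cases hae : H.Adj a e <;> by_cases haf : H.Adj a f
  · exact isWeakKE_of_adj_of_three_neighbors hl hab hac hbc had hae haf
  · exact isWeakKE_of_adj_of_two_neighbors hH hl hab hac hbc had hae haf
  · exact isWeakKE_of_adj_of_two_neighbors hH (hl.of_subset [a, b, c, d, f, e] (by simp) le_rfl)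
      hab hac hbc had haf hae
  · exact isWeakKE_of_adj_of_one_neighbor hl hab hac hbc had hae haf

theorem isWeakKE_of_six (hH : H.Preconnected)
    (hl : Enumerates [a, b, c, d, e, f] (Set.univ : Set W)) (hab : ¬H.Adj a b)
    (hac : ¬H.Adj a c) : IsWeakKE H := by
  by_cases hbc : H.Adj b c
  · exact isWeakKE_of_adj hH hl hab hac hbc
  · exact isWeakKE_of_indep hl hab hac hbc (adj_of_not_adj_of_not_adj hH hl hab hac)
      (adj_of_not_adj_of_not_adj hH (hl.of_subset [b, a, c, d, e, f] (by simp) le_rfl)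
        (mt .symm hab) hbc)
      (adj_of_not_adj_of_not_adj hH (hl.of_subset [c, a, b, d, e, f] (by simp) le_rfl)
        (mt .symm hac) (mt .symm hbc))

theorem isWeakKE_of_five (hH : H.Preconnected)
    (hl : Enumerates [a, b, c, d, e] (Set.univ : Set W)) (hab : ¬H.Adj a b)
    (hac : ¬H.Adj a c) : IsWeakKE H := by
  wlog had : H.Adj a d generalizing d e
  · have had_or_hae : H.Adj a d ∨ H.Adj a e := by
      simpa [hab, hac] using
        exists_adj_of_enumerates_append (l₁ := [a]) (l₂ := [b, c, d, e]) hH hl (by simp) (by simp)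
    exact this (hl.of_subset [a, b, c, e, d] (by simp) le_rfl) (had_or_hae.resolve_left had)
  have hn := hl.nodup
  simp only [List.nodup_cons, List.mem_cons, List.not_mem_nil] at hn
  by_cases hbc : H.Adj b c
  · exact isWeakKE_of_pairwise hl [(a, d), (b, c)] [d, e] (by simp; grind)
  by_cases hbe : H.Adj b e
  · exact isWeakKE_of_pairwise hl [(a, d), (b, e)] [d, e] (by simp; grind)
  by_cases hce : H.Adj c e
  · exact isWeakKE_of_pairwise hl [(a, d), (c, e)] [d, e] (by simp; grind)
  by_cases hae : H.Adj a e
  · have hbd : H.Adj b d := by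
      simpa [mt .symm hab, hbc, hbe] using
        exists_adj_of_enumerates_append (l₁ := [b]) (l₂ := [a, c, d, e]) hH
          (hl.of_subset _ (by simp) le_rfl) (by simp) (by simp)
    exact isWeakKE_of_pairwise hl [(a, e), (b, d)] [d, e] (by simp; grind)
  · exact isWeakKE_of_pairwise hl [(a, d)] [d] (by simp; grind)

end WeakKE

section Neighborhoods

variable {G : SimpleGraph V} {v : V}

theorem disjoint_sides_of_disjoint {a b c d : V} (hv : v ∉ [a, b, c, d])
    (h : [a, b].Disjoint [c, d]) : (sides (v, a, b)).Disjoint (sides (v, c, d)) := by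
  simp only [sides, List.disjoint_left, List.mem_cons, List.not_mem_nil] at *
  grind [Sym2.eq_iff]

theorem IrreducibleGraph.not_isWeakKE_induce (hirr : IrreducibleGraph G) (v : V) :
    ¬IsWeakKE (G.induce (G.neighborSet v)) := by
  rintro ⟨M, Q, hM, hnodup, hlen, hcover⟩
  have hne (w : G.neighborSet v) : (w : V) ≠ v := (show G.Adj v w from w.2).ne'
  refine absurd (hirr.two_mul_length_lt (V₀ := [v]) (T := M.map fun e => (v, e.1.1, e.2.1))
    (X := (M.map fun e => s(e.1.1, e.2.1)) ++ Q.map fun w => s(v, w.1)) (by simp) ?_ ?_ ?_ ?_) ?_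
  · simp only [sides, List.flatMap_map, List.mem_flatMap, List.mem_cons, List.not_mem_nil,
      or_false, forall_exists_index, and_imp]
    rintro - e he (rfl | rfl | rfl)
    exacts [e.1.2, e.2.2, hM e he]
  · simp only [List.flatMap_map, List.nodup_flatMap] at hnodup ⊢
    refine ⟨fun e he => ?_, hnodup.2.imp fun {e e'} hd => ?_⟩
    · grind [sides, SimpleGraph.Adj.ne, Sym2.eq_iff]
    · exact disjoint_sides_of_disjoint (by simp [(hne _).symm])
        (List.disjoint_map Subtype.val_injective hd)
  · simp only [sides, List.flatMap_map, List.mem_flatMap, List.mem_cons, List.not_mem_nil,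
      or_false, forall_exists_index, and_imp]
    rintro - e he (rfl | rfl | rfl) hv
    · simp at hv
    · simp at hv
    · exact List.mem_append_left _ (List.mem_map_of_mem he)
  · simp only [List.mem_singleton, forall_eq, List.mem_append, List.mem_map]
    intro p q hp hq hpq
    rcases hcover ⟨p, hp⟩ ⟨q, hq⟩ hpq with h | h | h | h
    · exact .inl (.inr ⟨_, h, rfl⟩)
    · exact .inr (.inl (.inr ⟨_, h, rfl⟩))
    · exact .inr (.inr (.inl ⟨_, h, rfl⟩))
    · exact .inr (.inr (.inl ⟨_, h, Sym2.eq_swap⟩))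
  · simp only [List.length_append, List.length_map]
    lia

theorem Robust.preconnected_induce (hrob : Robust G) (hv : (G.neighborSet v).encard < 10) :
    (G.induce (G.neighborSet v)).Preconnected := by
  intro u w
  by_contra hreach
  have hne := mt ConnectedComponent.exact hreach
  have hcard (c : (G.induce (G.neighborSet v)).ConnectedComponent) : 5 ≤ c.supp.encard :=
    (Nat.cast_le.2 (hrob v c)).trans (Set.ncard_le_encard _)
  refine hv.not_ge ?_
  calc (10 : ℕ∞) = 5 + 5 := by norm_num
    _ ≤ _ := add_le_add (hcard _) (hcard _)
    _ = _ := (Set.encard_union_eq (pairwise_disjoint_supp_connectedComponent _ hne)).symm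
    _ ≤ _ := Set.encard_le_encard (Set.subset_univ _)
    _ = (G.neighborSet v).encard := by simp

theorem Robust.five_le_encard (hrob : Robust G) (hirr : IrreducibleGraph G) (v : V) :
    5 ≤ (G.neighborSet v).encard := by
  obtain hempty | ⟨⟨u⟩⟩ := isEmpty_or_nonempty (G.neighborSet v)
  · exact absurd ⟨[], [], by simp⟩ (hirr.not_isWeakKE_induce v)
  calc (5 : ℕ∞) ≤ _ := (Nat.cast_le.2 (hrob v (connectedComponentMk _ u))).trans
        (Set.ncard_le_encard _)
    _ ≤ _ := Set.encard_le_encard (Set.subset_univ _)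
    _ = (G.neighborSet v).encard := by simp

theorem Robust.exists_enumerates_induce (hrob : Robust G) (hirr : IrreducibleGraph G)
    (hv : (G.neighborSet v).encard ≤ 6) {l : List (G.neighborSet v)} (hl : l.Nodup) :
    ∃ r, Enumerates (l ++ r) Set.univ ∧ 5 ≤ (l ++ r).length ∧ (l ++ r).length ≤ 6 := by
  have : Finite (G.neighborSet v) := Set.finite_of_encard_le_coe hv
  obtain ⟨r, hr⟩ := exists_enumerates_append Set.finite_univ hl (by simp)
  have hcard : ((l ++ r).length : ℕ∞) = (G.neighborSet v).encard := by
    rw [← hr.encard_eq, Set.encard_univ, ENat.card_coe_set_eq]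
  exact ⟨r, hr, by exact_mod_cast hcard ▸ hrob.five_le_encard hirr v, by exact_mod_cast hcard ▸ hv⟩

/-- Every vertex of `S` is adjacent to all other vertices of `S`, with at most one exception. -/
def IsNearClique (G : SimpleGraph V) (S : Set V) : Prop :=
  ∀ u ∈ S, {w ∈ S | w ≠ u ∧ ¬G.Adj u w}.Subsingleton

theorem Robust.isNearClique_neighborSet (hrob : Robust G) (hirr : IrreducibleGraph G)
    (hv : (G.neighborSet v).encard ≤ 6) : IsNearClique G (G.neighborSet v) := by
  rintro a ha b ⟨hb, hba, hab⟩ c ⟨hc, hca, hac⟩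
  by_contra hbc
  let a' : G.neighborSet v := ⟨a, ha⟩
  let b' : G.neighborSet v := ⟨b, hb⟩
  let c' : G.neighborSet v := ⟨c, hc⟩
  have hnodup : [a', b', c'].Nodup := by simp [a', b', c', hba.symm, hca.symm, hbc]
  obtain ⟨r, hr, hlen⟩ := hrob.exists_enumerates_induce hirr hv hnodup
  have hH := hrob.preconnected_induce (hv.trans_lt (by norm_num))
  have hab' : ¬(G.induce (G.neighborSet v)).Adj a' b' := hab
  have hac' : ¬(G.induce (G.neighborSet v)).Adj a' c' := hac
  refine hirr.not_isWeakKE_induce v ?_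
  match r with
  | [d, e] => exact isWeakKE_of_five hH hr hab' hac'
  | [d, e, f] => exact isWeakKE_of_six hH hr hab' hac'
  | [] | [_] | _ :: _ :: _ :: _ :: _ => exact absurd hlen (by simp)

end Neighborhoods

section NearCliques

variable {G : SimpleGraph V} {v : V} {S : Set V} {l : List V}

theorem IsNearClique.adj_of_not_adj (hS : IsNearClique G S) {p q r : V} (hp : p ∈ S) (hq : q ∈ S)
    (hr : r ∈ S) (hpq : p ≠ q) (hpr : p ≠ r) (hqr : q ≠ r) (hadj : ¬G.Adj p q) : G.Adj p r := by
  by_contra hadj'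
  exact hqr (hS p hp ⟨hq, hpq.symm, hadj⟩ ⟨hr, hpr.symm, hadj'⟩)

theorem exists_perm_cons_of_mem {p : V} (hp : p ∈ l) : ∃ r, l.Perm (p :: r) := by
  obtain ⟨r₁, r₂, rfl⟩ := List.append_of_mem hp
  exact ⟨r₁ ++ r₂, List.perm_middle⟩

theorem exists_perm_cons_cons_of_mem {p q : V} (hp : p ∈ l) (hq : q ∈ l) (hpq : p ≠ q) :
    ∃ r, l.Perm (p :: q :: r) := by
  obtain ⟨r, hr⟩ := exists_perm_cons_of_mem hp
  obtain ⟨r', hr'⟩ := exists_perm_cons_of_mem (List.mem_of_ne_of_mem hpq.symm (hr.mem_iff.1 hq))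
  exact ⟨r', hr.trans (hr'.cons p)⟩

theorem IsNearClique.exists_perm_cons_cons (hS : IsNearClique G S) (hl : l.Nodup)
    (hsub : ∀ w ∈ l, w ∈ S) (hlen : 2 ≤ l.length) :
    ∃ p q r, l.Perm (p :: q :: r) ∧ ∀ w ∈ r, G.Adj p w ∧ G.Adj q w := by
  by_cases hex : ∃ p ∈ l, ∃ q ∈ l, p ≠ q ∧ ¬G.Adj p q
  · obtain ⟨p, hp, q, hq, hpq, hadj⟩ := hex
    obtain ⟨r, hr⟩ := exists_perm_cons_cons_of_mem hp hq hpq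
    have hn := hr.nodup_iff.1 hl
    simp only [List.nodup_cons, List.mem_cons, not_or] at hn
    refine ⟨p, q, r, hr, fun w hw => ⟨?_, ?_⟩⟩
    · exact hS.adj_of_not_adj (hsub p hp) (hsub q hq) (hsub w (hr.mem_iff.2 (by simp [hw]))) hpq
        (by grind) (by grind) hadj
    · exact hS.adj_of_not_adj (hsub q hq) (hsub p hp) (hsub w (hr.mem_iff.2 (by simp [hw])))
        hpq.symm (by grind) (by grind) (mt .symm hadj)
  · push Not at hex
    match l with
    | p :: q :: r =>
      simp only [List.nodup_cons, List.mem_cons, not_or] at hl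
      exact ⟨p, q, r, .rfl, fun w hw => ⟨hex p (by simp) w (by simp [hw]) (by grind),
        hex q (by simp) w (by simp [hw]) (by grind)⟩⟩

theorem IsNearClique.exists_mem_adj_adj {S' : Set V} {a b : V} (hS : IsNearClique G S)
    (hS' : IsNearClique G S') (hl : l.Nodup) (hsub : ∀ w ∈ l, w ∈ S ∧ w ∈ S') (ha : a ∈ S)
    (ha' : a ∉ l) (hb : b ∈ S') (hb' : b ∉ l) (hlen : 3 ≤ l.length) :
    ∃ c ∈ l, G.Adj a c ∧ G.Adj b c := by
  match l with
  | p :: q :: r :: _ =>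
    simp only [List.nodup_cons, List.mem_cons, not_or, forall_eq_or_imp] at hl hsub ha' hb'
    simp only [List.mem_cons, exists_eq_or_imp]
    grind [hS.adj_of_not_adj ha, hS'.adj_of_not_adj hb]

theorem mem_or_mem_or_mem_of_pairwise (hl : Enumerates l (G.neighborSet v)) {X : List (Sym2 V)}
    (hX : l.Pairwise fun p q => G.Adj p q → s(v, p) ∈ X ∨ s(v, q) ∈ X ∨ s(p, q) ∈ X) (p q : V)
    (hp : G.Adj v p) (hq : G.Adj v q) (hpq : G.Adj p q) :
    s(v, p) ∈ X ∨ s(v, q) ∈ X ∨ s(p, q) ∈ X := by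
  have : Std.Symm fun p q => G.Adj p q → s(v, p) ∈ X ∨ s(v, q) ∈ X ∨ s(p, q) ∈ X :=
    ⟨fun p q h hqp => by have := h hqp.symm; rw [Sym2.eq_swap (a := q)]; tauto⟩
  exact hX.forall (hl.mem_iff.1 hp) (hl.mem_iff.1 hq) hpq.ne hpq

variable {p p' q q' r : V}

theorem not_irreducibleGraph_of_two_nonadjacent_pairs (hnear : IsNearClique G (G.neighborSet v))
    (hl : Enumerates [p, p', q, q', r] (G.neighborSet v)) (hp : ¬G.Adj p p')
    (hq : ¬G.Adj q q') : ¬IrreducibleGraph G := by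
  intro hirr
  have hn := hl.nodup
  have hv : ∀ w ∈ [p, p', q, q', r], G.Adj v w := fun _ => hl.mem_iff.2
  have hvl : v ∉ [p, p', q, q', r] := mt hl.mem_iff.2 G.irrefl
  simp only [List.nodup_cons, List.mem_cons, List.not_mem_nil, forall_eq_or_imp] at hn hv hvl
  have hadj {a b c : V} (ha : G.Adj v a) (hb : G.Adj v b) (hc : G.Adj v c) :=
    hnear.adj_of_not_adj ha hb hc
  have hcross : G.Adj p q ∧ G.Adj p q' ∧ G.Adj q p' ∧ G.Adj q' p' ∧
      G.Adj p r ∧ G.Adj p' r ∧ G.Adj q r ∧ G.Adj q' r := by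
    grind [SimpleGraph.Adj.symm]
  refine (hirr.two_mul_length_lt (V₀ := [v])
    (T := [(p, q, r), (v, p, q'), (v, q, p'), (q', p', r)])
    (X := [s(p, q), s(p, r), s(q, r), s(p, q'), s(q, p'), s(q', p'), s(p', r), s(q', r)])
    (by simp) (by simp [sides]; grind) ?_ (by simp [sides]) ?_).false
  · simp [sides]
    grind
  · simp only [List.mem_singleton, forall_eq]
    exact mem_or_mem_or_mem_of_pairwise hl (by simp; grind)

theorem IrreducibleGraph.mk_eq_mk_of_not_adj (hirr : IrreducibleGraph G)
    (hnear : IsNearClique G (G.neighborSet v)) (hcard : (G.neighborSet v).encard = 5)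
    (hp : p ∈ G.neighborSet v) (hp' : p' ∈ G.neighborSet v) (hq : q ∈ G.neighborSet v)
    (hq' : q' ∈ G.neighborSet v) (hpp : p ≠ p') (hqq : q ≠ q') (hadj : ¬G.Adj p p')
    (hadj' : ¬G.Adj q q') : s(p, p') = s(q, q') := by
  by_contra hne
  have hdisj : p ≠ q ∧ p ≠ q' ∧ p' ≠ q ∧ p' ≠ q' := by
    grind [hnear.adj_of_not_adj, SimpleGraph.Adj.symm, Sym2.eq_iff]
  obtain ⟨r, hr⟩ := exists_enumerates_append (Set.finite_of_encard_eq_coe hcard)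
    (l := [p, p', q, q']) (by simp; grind) (by simpa using ⟨hp, hp', hq, hq'⟩)
  have hlen : r.length = 1 := by
    have := hr.encard_eq.symm.trans hcard
    norm_cast at this
    simpa using this
  obtain ⟨w, rfl⟩ := List.length_eq_one_iff.1 hlen
  exact not_irreducibleGraph_of_two_nonadjacent_pairs hnear hr hadj hadj' hirr

end NearCliques

section NeighborPartition

variable {G : SimpleGraph V} {x y : V}

theorem not_irreducibleGraph_of_pairwise {lx ly : List V} (hx : Enumerates lx (G.neighborSet x))
    (hy : Enumerates ly (G.neighborSet y)) (T : List (V × V × V)) (X : List (Sym2 V))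
    (hlen : X.length ≤ 2 * T.length) (hT : ∀ e ∈ T.flatMap sides, e ∈ G.edgeSet)
    (hdisj : (T.flatMap sides).Nodup) (hout : ∀ e ∈ T.flatMap sides, x ∉ e → y ∉ e → e ∈ X)
    (hlx : lx.Pairwise fun p q => G.Adj p q → s(x, p) ∈ X ∨ s(x, q) ∈ X ∨ s(p, q) ∈ X)
    (hly : ly.Pairwise fun p q => G.Adj p q → s(y, p) ∈ X ∨ s(y, q) ∈ X ∨ s(p, q) ∈ X) :
    ¬IrreducibleGraph G := by
  intro hirr
  refine (hirr.two_mul_length_lt (V₀ := [x, y]) (by simp) hT hdisj ?_ ?_).not_ge hlen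
  · exact fun e he h => hout e he (h x (by simp)) (h y (by simp))
  · simpa using ⟨mem_or_mem_or_mem_of_pairwise hx hlx, mem_or_mem_or_mem_of_pairwise hy hly⟩

/-- A labelling of the neighbourhoods of two distinct vertices `x` and `y`: the list `C` consists of
their common neighbours, `A` of the remaining neighbours of `x`, and `B` of those of `y`. If `x` and
`y` are adjacent then `y ∈ A` and `x ∈ B`. -/
structure IsNeighborPartition (G : SimpleGraph V) (x y : V) (C A B : List V) : Prop where
  ne : x ≠ y
  nodup : (C ++ A ++ B).Nodup
  adj_left_iff : ∀ {w}, G.Adj x w ↔ w ∈ C ++ A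
  adj_right_iff : ∀ {w}, G.Adj y w ↔ w ∈ C ++ B

namespace IsNeighborPartition

variable {C A B : List V}

theorem symm (h : IsNeighborPartition G x y C A B) : IsNeighborPartition G y x C B A where
  ne := h.ne.symm
  nodup := by
    have := h.nodup
    grind
  adj_left_iff := h.adj_right_iff
  adj_right_iff := h.adj_left_iff

theorem perm (h : IsNeighborPartition G x y C A B) {C' A' B' : List V} (hC : C.Perm C')
    (hA : A.Perm A') (hB : B.Perm B') : IsNeighborPartition G x y C' A' B' where
  ne := h.ne
  nodup := ((hC.append hA).append hB).nodup_iff.1 h.nodup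
  adj_left_iff := h.adj_left_iff.trans (hC.append hA).mem_iff
  adj_right_iff := h.adj_right_iff.trans (hC.append hB).mem_iff

theorem enumerates_left (h : IsNeighborPartition G x y C A B) :
    Enumerates (C ++ A) (G.neighborSet x) :=
  ⟨h.nodup.of_append_left, h.adj_left_iff⟩

theorem enumerates_right (h : IsNeighborPartition G x y C A B) :
    Enumerates (C ++ B) (G.neighborSet y) :=
  h.symm.enumerates_left

theorem mem_left_iff (h : IsNeighborPartition G x y C A B) : y ∈ A ↔ G.Adj x y := by
  have : y ∉ C := fun hy => G.irrefl (h.adj_right_iff.2 (List.mem_append_left B hy))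
  simp [h.adj_left_iff, this]

theorem adj_left (h : IsNeighborPartition G x y C A B) : ∀ w ∈ C ++ A, G.Adj x w :=
  fun _ => h.adj_left_iff.2

theorem adj_right (h : IsNeighborPartition G x y C A B) : ∀ w ∈ C ++ B, G.Adj y w :=
  h.symm.adj_left

theorem not_mem_left (h : IsNeighborPartition G x y C A B) : x ∉ C ++ A :=
  mt h.adj_left_iff.2 G.irrefl

theorem not_mem_right (h : IsNeighborPartition G x y C A B) : y ∉ C ++ B :=
  h.symm.not_mem_left

theorem nodup_cons_cons (h : IsNeighborPartition G x y C A B) (hxy : ¬G.Adj x y) :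
    (x :: y :: (C ++ A ++ B)).Nodup := by
  have hn := h.nodup
  have hx := h.not_mem_left
  have hy := h.not_mem_right
  have hyA := mt h.mem_left_iff.1 hxy
  have hxB := mt h.symm.mem_left_iff.1 (mt .symm hxy)
  have hne := h.ne
  simp only [List.mem_append, List.nodup_cons, List.mem_cons] at *
  tauto

end IsNeighborPartition

theorem IsNearClique.exists_perm_four_cycle {S : Set V} {l : List V} (hS : IsNearClique G S)
    (hl : l.Nodup) (hsub : ∀ w ∈ l, w ∈ S) (hlen : l.length = 4) :
    ∃ c₀ c₁ c₂ c₃, l.Perm [c₀, c₁, c₂, c₃] ∧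
      G.Adj c₀ c₁ ∧ G.Adj c₁ c₂ ∧ G.Adj c₂ c₃ ∧ G.Adj c₃ c₀ := by
  obtain ⟨p, q, r, hperm, hadj⟩ := hS.exists_perm_cons_cons hl hsub (by lia)
  obtain ⟨s, t, rfl⟩ := List.length_eq_two.1 (show r.length = 2 by grind [hperm.length_eq])
  have hps := hadj s (by simp)
  have hpt := hadj t (by simp)
  exact ⟨p, s, q, t, hperm.trans ((List.Perm.swap s q [t]).cons p), hps.1, hps.2.symm, hpt.2,
    hpt.1.symm⟩

/-- The four triangles `x c₀ c₁`, `y c₁ c₂`, `x c₂ c₃`, `y c₃ c₀` pay for the six pairs of the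
four common neighbours and for two further edges. -/
theorem not_irreducibleGraph_of_four_cycle {c₀ c₁ c₂ c₃ : V} {A B : List V} (hxy : x ≠ y)
    (hx : Enumerates ([c₀, c₁, c₂, c₃] ++ A) (G.neighborSet x))
    (hy : Enumerates ([c₀, c₁, c₂, c₃] ++ B) (G.neighborSet y))
    (h₀₁ : G.Adj c₀ c₁) (h₁₂ : G.Adj c₁ c₂) (h₂₃ : G.Adj c₂ c₃) (h₃₀ : G.Adj c₃ c₀)
    (Z : List (V × V × V)) (D : List (Sym2 V)) (hlen : D.length ≤ 2 * Z.length + 2)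
    (hZ : ∀ e ∈ Z.flatMap sides, e ∈ G.edgeSet) (hdisj : (Z.flatMap sides).Nodup)
    (hmeet : ∀ e ∈ Z.flatMap sides, ∀ c ∈ [c₀, c₁, c₂, c₃], c ∉ e)
    (hout : ∀ e ∈ Z.flatMap sides, x ∉ e → y ∉ e → e ∈ D)
    (hA : ∀ a ∈ A, s(x, a) ∈ D) (hB : ∀ b ∈ B, s(y, b) ∈ D) : ¬IrreducibleGraph G := by
  have hadjx : ∀ w ∈ [c₀, c₁, c₂, c₃], G.Adj x w :=
    fun _ hw => hx.mem_iff.2 (List.mem_append_left A hw)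
  have hadjy : ∀ w ∈ [c₀, c₁, c₂, c₃], G.Adj y w :=
    fun _ hw => hy.mem_iff.2 (List.mem_append_left B hw)
  have hn := hx.nodup.of_append_left
  have hxl : x ∉ [c₀, c₁, c₂, c₃] := fun h => G.irrefl (hadjx x h)
  have hyl : y ∉ [c₀, c₁, c₂, c₃] := fun h => G.irrefl (hadjy y h)
  refine not_irreducibleGraph_of_pairwise hx hy
    ([(x, c₀, c₁), (y, c₁, c₂), (x, c₂, c₃), (y, c₃, c₀)] ++ Z)
    ([s(c₀, c₁), s(c₀, c₂), s(c₀, c₃), s(c₁, c₂), s(c₁, c₃), s(c₂, c₃)] ++ D)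
    (by simp; lia) ?_ ?_ ?_ ?_ ?_
  · rw [List.flatMap_append]
    simp only [List.forall_mem_append]
    refine ⟨?_, hZ⟩
    simp [sides]
    grind [SimpleGraph.Adj.symm]
  · rw [List.flatMap_append]
    refine List.Nodup.append ?_ hdisj ?_
    · simp [sides]
      grind
    · have hbase : ∀ e ∈ [(x, c₀, c₁), (y, c₁, c₂), (x, c₂, c₃), (y, c₃, c₀)].flatMap sides,
          ∃ c ∈ [c₀, c₁, c₂, c₃], c ∈ e := by
        simp [sides]
      intro e he heZ
      obtain ⟨c, hc, hce⟩ := hbase e he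
      exact hmeet e heZ c hc hce
  · rw [List.flatMap_append]
    simp only [List.forall_mem_append]
    refine ⟨by simp [sides], fun e he h h' => List.mem_append_right _ (hout e he h h')⟩
  · refine List.pairwise_append.2 ⟨by simp, ?_, ?_⟩
    · exact List.pairwise_of_forall_mem_list fun a ha _ _ _ => by simp [hA a ha]
    · exact fun c _ a ha _ => by simp [hA a ha]
  · refine List.pairwise_append.2 ⟨by simp, ?_, ?_⟩
    · exact List.pairwise_of_forall_mem_list fun b hb _ _ _ => by simp [hB b hb]
    · exact fun c _ b hb _ => by simp [hB b hb]

namespace IsNeighborPartition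

variable {S R A B : List V} {a b b' c : V}

theorem not_irreducibleGraph_of_four_common (h : IsNeighborPartition G x y (S ++ R) A B)
    (hnear : IsNearClique G (G.neighborSet x)) (hS : S.length = 4)
    (Z : List (V × V × V)) (D : List (Sym2 V)) (hlen : D.length ≤ 2 * Z.length + 2)
    (hZ : ∀ e ∈ Z.flatMap sides, e ∈ G.edgeSet) (hdisj : (Z.flatMap sides).Nodup)
    (hZS : ∀ t ∈ Z, t.1 ∉ S ∧ t.2.1 ∉ S ∧ t.2.2 ∉ S)
    (hout : ∀ e ∈ Z.flatMap sides, x ∉ e → y ∉ e → e ∈ D)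
    (hA : ∀ a ∈ R ++ A, s(x, a) ∈ D) (hB : ∀ b ∈ R ++ B, s(y, b) ∈ D) :
    ¬IrreducibleGraph G := by
  have hn : S.Nodup := h.nodup.of_append_left.of_append_left.of_append_left
  obtain ⟨c₀, c₁, c₂, c₃, hperm, h₀₁, h₁₂, h₂₃, h₃₀⟩ := hnear.exists_perm_four_cycle hn
    (fun w hw => h.adj_left_iff.2 (by simp [hw])) hS
  have h' := h.perm (hperm.append (.refl R)) (.refl A) (.refl B)
  have hx := h'.enumerates_left
  have hy := h'.enumerates_right
  rw [List.append_assoc] at hx hy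
  refine not_irreducibleGraph_of_four_cycle h.ne hx hy h₀₁ h₁₂ h₂₃ h₃₀ Z D hlen hZ hdisj ?_
    hout hA hB
  intro e he c hc hce
  obtain ⟨t, ht, het⟩ := List.mem_flatMap.1 he
  rw [← hperm.mem_iff] at hc
  simp only [sides, List.mem_cons, List.not_mem_nil, or_false] at het
  grind

theorem not_irreducibleGraph_of_four_one_one (h : IsNeighborPartition G x y S [a] [b])
    (hnear : IsNearClique G (G.neighborSet x)) (hS : S.length = 4) : ¬IrreducibleGraph G :=
  not_irreducibleGraph_of_four_common (R := []) (by simpa using h) hnear hS [] [s(x, a), s(y, b)]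
    (by simp) (by simp) (by simp) (by simp) (by simp) (by simp) (by simp)

theorem not_irreducibleGraph_of_four_one_two_of_adj (h : IsNeighborPartition G x y S [a] [b, b'])
    (hnear : IsNearClique G (G.neighborSet x)) (hS : S.length = 4) (hxy : G.Adj x y) :
    ¬IrreducibleGraph G := by
  obtain rfl : y = a := by simpa using h.mem_left_iff.2 hxy
  obtain ⟨b'', hperm⟩ : ∃ b'', [b, b'].Perm [x, b''] := by
    rcases List.mem_pair.1 (h.symm.mem_left_iff.2 hxy.symm) with rfl | rfl
    exacts [⟨b', .rfl⟩, ⟨b, .swap ..⟩]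
  exact not_irreducibleGraph_of_four_common (R := []) (by simpa using h.perm .rfl .rfl hperm) hnear
    hS [] [s(x, y), s(y, b'')] (by simp) (by simp) (by simp) (by simp) (by simp) (by simp)
    (by simp)

theorem not_irreducibleGraph_of_four_one_two_of_adj_right
    (h : IsNeighborPartition G x y S [a] [b, b'])
    (hnear : IsNearClique G (G.neighborSet x)) (hS : S.length = 4) (hbb : G.Adj b b') :
    ¬IrreducibleGraph G := by
  have hn := h.nodup
  have hy := h.not_mem_right
  have hb : G.Adj y b := h.adj_right_iff.2 (by simp)
  have hb' : G.Adj y b' := h.adj_right_iff.2 (by simp)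
  refine not_irreducibleGraph_of_four_common (R := []) (by simpa using h) hnear hS [(y, b, b')]
    [s(x, a), s(y, b), s(y, b'), s(b, b')] (by simp) (by simp [sides, hb, hb', hbb])
    (by simp [sides]; grind) ?_ (by simp [sides]) (by simp) (by simp)
  grind

theorem not_irreducibleGraph_of_five_zero_zero (h : IsNeighborPartition G x y (S ++ [c]) [] [])
    (hnear : IsNearClique G (G.neighborSet x)) (hS : S.length = 4) : ¬IrreducibleGraph G :=
  not_irreducibleGraph_of_four_common h hnear hS [] [s(x, c), s(y, c)]
    (by simp) (by simp) (by simp) (by simp) (by simp) (by simp) (by simp)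

theorem not_irreducibleGraph_of_five_zero_one (h : IsNeighborPartition G x y (S ++ [c]) [] [b])
    (hnear : IsNearClique G (G.neighborSet x)) (hS : S.length = 4) (hbc : G.Adj b c) :
    ¬IrreducibleGraph G := by
  have hn := h.nodup
  have hy := h.not_mem_right
  have hc : G.Adj y c := h.adj_right_iff.2 (by simp)
  have hb : G.Adj y b := h.adj_right_iff.2 (by simp)
  refine not_irreducibleGraph_of_four_common h hnear hS [(y, c, b)]
    [s(x, c), s(y, c), s(y, b), s(c, b)] (by simp) (by simp [sides, hc, hb, hbc.symm])
    (by simp [sides]; grind) ?_ (by simp [sides]) (by simp) (by simp)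
  grind

theorem not_irreducibleGraph_of_five_one_one (h : IsNeighborPartition G x y (S ++ [c]) [a] [b])
    (hnear : IsNearClique G (G.neighborSet x)) (hS : S.length = 4) (hxy : ¬G.Adj x y)
    (hac : G.Adj a c) (hbc : G.Adj b c) : ¬IrreducibleGraph G := by
  have hn := h.nodup_cons_cons hxy
  simp only [List.nodup_cons, List.nodup_append, List.mem_append, List.mem_cons] at hn
  have hadj : G.Adj x c ∧ G.Adj x a ∧ G.Adj y c ∧ G.Adj y b := by
    simp [h.adj_left_iff, h.adj_right_iff]
  refine not_irreducibleGraph_of_four_common h hnear hS [(x, c, a), (y, c, b)]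
    [s(x, c), s(x, a), s(y, c), s(y, b), s(c, a), s(c, b)] (by simp)
    (by simp [sides, hadj, hac.symm, hbc.symm]) ?_ ?_ (by simp [sides]) (by simp) (by simp)
  · simp [sides]
    grind
  · simp only [List.mem_cons, List.not_mem_nil, or_false, forall_eq_or_imp, forall_eq]
    grind

theorem not_irreducibleGraph_of_five_one_one_of_adj
    (h : IsNeighborPartition G x y (S ++ [c]) [a] [b])
    (hnear : IsNearClique G (G.neighborSet x)) (hS : S.length = 4) (hxy : G.Adj x y) :
    ¬IrreducibleGraph G := by
  obtain rfl : y = a := by simpa using h.mem_left_iff.2 hxy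
  obtain rfl : x = b := by simpa using h.symm.mem_left_iff.2 hxy.symm
  have hn := h.nodup
  have hadj : G.Adj x c ∧ G.Adj y c := by simp [h.adj_left_iff, h.adj_right_iff]
  refine not_irreducibleGraph_of_four_common h hnear hS [(x, c, y)]
    [s(x, c), s(y, c), s(x, y)] (by simp) (by simp [sides, hadj.1, hadj.2.symm, hxy])
    (by simp [sides]; grind) ?_ (by simp [sides]) (by simp) (by simp)
  grind

variable {c₀ c₁ c₂ c₃ a₀ a₁ b₀ b₁ p p' q q' r r' : V}

theorem not_irreducibleGraph_of_six (h : IsNeighborPartition G x y [p, p', q, q', r, r'] [] [])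
    (hp : ∀ w ∈ [q, q', r, r'], G.Adj p w ∧ G.Adj p' w)
    (hq : ∀ w ∈ [r, r'], G.Adj q w ∧ G.Adj q' w) : ¬IrreducibleGraph G := by
  have hn := h.nodup_cons_cons (h.mem_left_iff.not.1 (by simp))
  have hx := h.adj_left
  have hy := h.adj_right
  simp only [List.append_nil, List.nodup_cons, List.mem_cons, forall_eq_or_imp] at hn hx hy hp hq
  refine not_irreducibleGraph_of_pairwise h.enumerates_left h.enumerates_right
    [(q, p', r'), (p, r', y), (q', r', x), (q', p', y), (q, r, y), (p', r, x), (p, q, x)]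
    [s(p, p'), s(p, q), s(p, r'), s(p', q), s(p', q'), s(p', r), s(p', r'), s(q, r), s(q, r'),
      s(q', r'), s(x, q'), s(y, q'), s(x, r), s(y, r)] (by simp)
    (by simp [sides]; grind [SimpleGraph.Adj.symm]) (by simp [sides]; grind) (by simp [sides])
    (by simp) (by simp)

theorem not_irreducibleGraph_of_four_one_two
    (h : IsNeighborPartition G x y [c₀, c₁, c₂, c₃] [a] [b, b']) (hxy : ¬G.Adj x y)
    (hc : ∀ w ∈ [c₂, c₃], G.Adj c₀ w ∧ G.Adj c₁ w) (h₂₃ : G.Adj c₂ c₃)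
    (ha : G.Adj a c₀) (hb : G.Adj b c₃) (hb' : G.Adj b' c₀) : ¬IrreducibleGraph G := by
  have hn := h.nodup_cons_cons hxy
  have hx := h.adj_left
  have hy := h.adj_right
  simp only [List.cons_append, List.nil_append, List.nodup_cons, List.mem_cons,
    forall_eq_or_imp] at hn hx hy hc
  refine not_irreducibleGraph_of_pairwise h.enumerates_left h.enumerates_right
    [(c₀, a, x), (c₂, c₀, c₃), (c₀, b', y), (c₁, c₃, x), (c₃, b, y), (c₁, c₂, y)]
    [s(c₀, a), s(c₂, c₀), s(c₂, c₃), s(c₀, c₃), s(c₀, b'), s(c₁, c₃), s(c₃, b), s(c₁, c₂),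
      s(c₁, c₀), s(x, a), s(y, b), s(y, b')] (by simp)
    (by simp [sides]; grind [SimpleGraph.Adj.symm]) (by simp [sides]; grind) (by simp [sides])
    (by simp) (by simp)

theorem not_irreducibleGraph_of_three_of_adj
    (h : IsNeighborPartition G x y [c₀, c₁, c₂] [y, a] [x, b])
    (ha : G.Adj a c₂) (hb : G.Adj b c₁) : ¬IrreducibleGraph G := by
  have hn := h.nodup
  have hx := h.adj_left
  have hy := h.adj_right
  simp only [List.cons_append, List.nil_append, List.nodup_cons, List.mem_cons,
    forall_eq_or_imp] at hn hx hy
  have hya : ¬G.Adj y a := h.adj_right_iff.not.2 (by simp; grind)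
  have hxb : ¬G.Adj x b := h.adj_left_iff.not.2 (by simp; grind)
  refine not_irreducibleGraph_of_pairwise h.enumerates_left h.enumerates_right
    [(c₂, a, x), (c₀, x, y), (c₁, b, y)]
    [s(c₂, a), s(c₁, b), s(c₀, x), s(c₀, y), s(c₁, x), s(c₂, y)] (by simp)
    (by simp [sides]; grind [SimpleGraph.Adj.symm]) (by simp [sides]; grind) (by simp [sides])
    (by simp [hya]) (by simp [hxb])

theorem not_irreducibleGraph_of_three_of_not_adj_common
    (h : IsNeighborPartition G x y [c₀, c₁, c₂] [a₀, a₁] [b₀, b₁]) (hxy : ¬G.Adj x y)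
    (h₀₁ : ¬G.Adj c₀ c₁) (h₂ : G.Adj c₀ c₂ ∧ G.Adj c₁ c₂) (ha : G.Adj a₀ c₀) (hb : G.Adj b₀ c₁) :
    ¬IrreducibleGraph G := by
  have hn := h.nodup_cons_cons hxy
  have hx := h.adj_left
  have hy := h.adj_right
  simp only [List.cons_append, List.nil_append, List.nodup_cons, List.mem_cons,
    forall_eq_or_imp] at hn hx hy
  refine not_irreducibleGraph_of_pairwise h.enumerates_left h.enumerates_right
    [(c₂, c₁, x), (c₂, c₀, y), (c₀, a₀, x), (c₁, b₀, y)]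
    [s(x, a₀), s(x, a₁), s(y, b₀), s(y, b₁), s(c₂, c₁), s(c₂, c₀), s(c₀, a₀), s(c₁, b₀)] (by simp)
    (by simp [sides]; grind [SimpleGraph.Adj.symm]) (by simp [sides]; grind) (by simp [sides])
    (by simp [h₀₁]) (by simp [h₀₁])

theorem not_irreducibleGraph_of_three_of_not_adj_mixed
    (h : IsNeighborPartition G x y [c₀, c₁, c₂] [a₀, a₁] [b₀, b₁]) (hxy : ¬G.Adj x y)
    (hca : ¬G.Adj c₀ a₀) (hc : G.Adj c₀ c₁ ∧ G.Adj c₀ c₂ ∧ G.Adj c₁ c₂) (ha₁ : G.Adj a₁ c₂)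
    (ha₀ : G.Adj a₀ c₂ ∧ G.Adj a₀ c₁) (hb : G.Adj b₀ c₁) : ¬IrreducibleGraph G := by
  have hn := h.nodup_cons_cons hxy
  have hx := h.adj_left
  have hy := h.adj_right
  simp only [List.cons_append, List.nil_append, List.nodup_cons, List.mem_cons,
    forall_eq_or_imp] at hn hx hy
  refine not_irreducibleGraph_of_pairwise h.enumerates_left h.enumerates_right
    [(c₂, c₀, y), (c₂, a₁, x), (c₁, b₀, y), (c₂, c₁, a₀), (c₁, c₀, x)]
    [s(c₂, c₀), s(c₂, a₁), s(c₁, b₀), s(c₂, c₁), s(c₂, a₀), s(c₁, a₀), s(c₁, c₀), s(y, b₀),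
      s(y, b₁), s(x, a₁)] (by simp)
    (by simp [sides]; grind [SimpleGraph.Adj.symm]) (by simp [sides]; grind) (by simp [sides])
    (by simp [hca]) (by simp)

theorem not_irreducibleGraph_of_three_of_not_adj_private
    (h : IsNeighborPartition G x y [c₀, c₁, c₂] [a₀, a₁] [b₀, b₁]) (hxy : ¬G.Adj x y)
    (haa : ¬G.Adj a₀ a₁) (hc : G.Adj c₀ c₁ ∧ G.Adj c₀ c₂ ∧ G.Adj c₁ c₂)
    (ha : ∀ c ∈ [c₀, c₁, c₂], G.Adj a₀ c ∧ G.Adj a₁ c) (hb : G.Adj b₀ c₀) :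
    ¬IrreducibleGraph G := by
  have hn := h.nodup_cons_cons hxy
  have hx := h.adj_left
  have hy := h.adj_right
  simp only [List.cons_append, List.nil_append, List.nodup_cons, List.mem_cons,
    forall_eq_or_imp] at hn hx hy ha
  refine not_irreducibleGraph_of_pairwise h.enumerates_left h.enumerates_right
    [(c₂, c₀, a₀), (c₂, a₁, x), (c₁, a₀, x), (c₀, b₀, y), (c₁, c₀, a₁), (c₂, c₁, y)]
    [s(c₂, c₀), s(c₂, a₀), s(c₀, a₀), s(c₂, a₁), s(c₁, a₀), s(c₀, b₀), s(c₁, c₀), s(c₁, a₁),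
      s(c₀, a₁), s(c₂, c₁), s(y, b₀), s(y, b₁)] (by simp)
    (by simp [sides]; grind [SimpleGraph.Adj.symm]) (by simp [sides]; grind) (by simp [sides])
    (by simp [haa]) (by simp)

theorem exists_perm_adj_of_length_four (h : IsNeighborPartition G x y S [a] B)
    (hirr : IrreducibleGraph G) (hx : IsNearClique G (G.neighborSet x)) (hS : S.length = 4) :
    ∃ p q s t, S.Perm [p, q, s, t] ∧ (∀ w ∈ [s, t], G.Adj p w ∧ G.Adj q w) ∧ G.Adj s t ∧
      G.Adj a p := by
  have hn := h.nodup.of_append_left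
  have hadj := h.adj_left
  simp only [List.forall_mem_append] at hadj
  have hcard : (G.neighborSet x).encard = 5 := by
    rw [h.enumerates_left.encard_eq]
    simp [hS]
  obtain ⟨p, q, s, t, hperm, hcross, hst⟩ : ∃ p q s t, S.Perm [p, q, s, t] ∧
      (∀ w ∈ [s, t], G.Adj p w ∧ G.Adj q w) ∧ G.Adj s t := by
    obtain ⟨p, q, r, hperm, hcross⟩ := hx.exists_perm_cons_cons hn.of_append_left
      hadj.1 (by lia)
    obtain ⟨s, t, rfl⟩ := List.length_eq_two.1 (show r.length = 2 by grind [hperm.length_eq])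
    by_cases hst : G.Adj s t
    · exact ⟨p, q, s, t, hperm, hcross, hst⟩
    refine ⟨s, t, p, q, hperm.trans (List.perm_append_comm (l₁ := [p, q])), ?_, ?_⟩
    · simp only [List.mem_cons, List.not_mem_nil, or_false, forall_eq_or_imp, forall_eq] at hcross ⊢
      exact ⟨⟨hcross.1.1.symm, hcross.2.1.symm⟩, hcross.1.2.symm, hcross.2.2.symm⟩
    · by_contra hpq
      have hmem := fun w hw => hadj.1 w (hperm.mem_iff.2 hw)
      have hn' := hperm.nodup_iff.1 hn.of_append_left
      simp only [List.nodup_cons, List.mem_cons, forall_eq_or_imp] at hmem hn'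
      have := hirr.mk_eq_mk_of_not_adj hx hcard hmem.1 hmem.2.1 hmem.2.2.1 hmem.2.2.2.1
        (by grind) (by grind) hpq hst
      grind [Sym2.eq_iff]
  by_cases hap : G.Adj a p
  · exact ⟨p, q, s, t, hperm, hcross, hst, hap⟩
  · refine ⟨q, p, s, t, hperm.trans (.swap ..), fun w hw => (hcross w hw).symm, hst, ?_⟩
    have hn' := (hperm.append_right [a]).nodup_iff.1 hn
    simp only [List.cons_append, List.nil_append, List.nodup_cons, List.mem_cons] at hn'
    exact hx.adj_of_not_adj (hadj.2 a (by simp)) (hadj.1 p (hperm.mem_iff.2 (by simp)))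
      (hadj.1 q (hperm.mem_iff.2 (by simp))) (by grind) (by grind) (by grind) hap

theorem not_irreducibleGraph_of_length_four (h : IsNeighborPartition G x y S A B)
    (hx : IsNearClique G (G.neighborSet x)) (hy : IsNearClique G (G.neighborSet y))
    (hS : S.length = 4) (hA : A.length = 1) (hB : B.length = 1 ∨ B.length = 2) :
    ¬IrreducibleGraph G := by
  intro hirr
  obtain ⟨a, rfl⟩ := List.length_eq_one_iff.1 hA
  rcases hB with hB | hB
  · obtain ⟨b, rfl⟩ := List.length_eq_one_iff.1 hB
    exact h.not_irreducibleGraph_of_four_one_one hx hS hirr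
  obtain ⟨b, b', rfl⟩ := List.length_eq_two.1 hB
  by_cases hxy : G.Adj x y
  · exact h.not_irreducibleGraph_of_four_one_two_of_adj hx hS hxy hirr
  by_cases hbb : G.Adj b b'
  · exact h.not_irreducibleGraph_of_four_one_two_of_adj_right hx hS hbb hirr
  obtain ⟨p, q, s, t, hperm, hcross, hst, hap⟩ := h.exists_perm_adj_of_length_four hirr hx hS
  have h' := h.perm hperm .rfl .rfl
  have hn := h'.nodup
  simp only [List.cons_append, List.nil_append, List.nodup_cons, List.mem_cons] at hn
  have hb : G.Adj b t := hy.adj_of_not_adj (h'.adj_right b (by simp)) (h'.adj_right b' (by simp))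
    (h'.adj_right t (by simp)) (by grind) (by grind) (by grind) hbb
  have hb' : G.Adj b' p := hy.adj_of_not_adj (h'.adj_right b' (by simp))
    (h'.adj_right b (by simp)) (h'.adj_right p (by simp)) (by grind) (by grind) (by grind)
    (mt .symm hbb)
  exact h'.not_irreducibleGraph_of_four_one_two hxy hcross hst hap hb hb' hirr

theorem exists_append_singleton (h : IsNeighborPartition G x y C A B) (hc : c ∈ C) :
    ∃ S, IsNeighborPartition G x y (S ++ [c]) A B ∧ S.length + 1 = C.length := by
  obtain ⟨S, hS⟩ := exists_perm_cons_of_mem hc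
  exact ⟨S, h.perm (hS.trans (List.perm_append_singleton c S).symm) .rfl .rfl, hS.length_eq.symm⟩

theorem not_irreducibleGraph_of_length_five (h : IsNeighborPartition G x y C A B)
    (hx : IsNearClique G (G.neighborSet x)) (hy : IsNearClique G (G.neighborSet y))
    (hC : C.length = 5) (hA : A.length ≤ 1) (hB : B.length ≤ 1) : ¬IrreducibleGraph G := by
  have hn := h.nodup
  have hCx : ∀ w ∈ C, G.Adj x w := fun w hw => h.adj_left w (by simp [hw])
  have hCy : ∀ w ∈ C, G.Adj y w := fun w hw => h.adj_right w (by simp [hw])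
  have hn' := hn.of_append_left.of_append_left
  match A, B with
  | [], [] =>
    obtain ⟨c, hc⟩ := List.exists_mem_of_length_pos (l := C) (by lia)
    obtain ⟨S, h', hS⟩ := h.exists_append_singleton hc
    exact h'.not_irreducibleGraph_of_five_zero_zero hx (by lia)
  | [], [b] =>
    obtain ⟨c, hc, hbc, -⟩ := hy.exists_mem_adj_adj hy hn' (fun w hw => ⟨hCy w hw, hCy w hw⟩)
      (h.adj_right b (by simp)) (by grind) (h.adj_right b (by simp)) (by grind) (by lia)
    obtain ⟨S, h', hS⟩ := h.exists_append_singleton hc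
    exact h'.not_irreducibleGraph_of_five_zero_one hx (by lia) hbc
  | [a], [] =>
    obtain ⟨c, hc, hac, -⟩ := hx.exists_mem_adj_adj hx hn' (fun w hw => ⟨hCx w hw, hCx w hw⟩)
      (h.adj_left a (by simp)) (by grind) (h.adj_left a (by simp)) (by grind) (by lia)
    obtain ⟨S, h', hS⟩ := h.exists_append_singleton hc
    exact h'.symm.not_irreducibleGraph_of_five_zero_one hy (by lia) hac
  | [a], [b] =>
    obtain ⟨c, hc, hac, hbc⟩ := hx.exists_mem_adj_adj hy hn' (fun w hw => ⟨hCx w hw, hCy w hw⟩)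
      (h.adj_left a (by simp)) (by grind) (h.adj_right b (by simp)) (by grind) (by lia)
    obtain ⟨S, h', hS⟩ := h.exists_append_singleton hc
    by_cases hxy : G.Adj x y
    · exact h'.not_irreducibleGraph_of_five_one_one_of_adj hx (by lia) hxy
    · exact h'.not_irreducibleGraph_of_five_one_one hx (by lia) hxy hac hbc

theorem not_irreducibleGraph_of_length_six (h : IsNeighborPartition G x y C [] [])
    (hx : IsNearClique G (G.neighborSet x)) (hC : C.length = 6) : ¬IrreducibleGraph G := by
  have hn := h.nodup.of_append_left.of_append_left
  have hadj := h.adj_left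
  rw [List.append_nil] at hadj
  obtain ⟨p, p', s, hperm, hp⟩ := hx.exists_perm_cons_cons hn hadj (by lia)
  have hn' := (hperm.nodup_iff.1 hn).of_cons.of_cons
  obtain ⟨q, q', r, hperm', hq⟩ := hx.exists_perm_cons_cons hn'
    (fun w hw => hadj w (hperm.mem_iff.2 (by simp [hw]))) (by grind [hperm.length_eq])
  obtain ⟨r, r', rfl⟩ := List.length_eq_two.1
    (show r.length = 2 by grind [hperm.length_eq, hperm'.length_eq])
  exact (h.perm (hperm.trans ((hperm'.cons p').cons p)) .rfl .rfl).not_irreducibleGraph_of_six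
    (fun w hw => hp w (hperm'.mem_iff.2 hw)) hq

variable {u w : V}

theorem pairwise_adj_of_not_adj (h : IsNeighborPartition G x y C A B) (hirr : IrreducibleGraph G)
    (hx : IsNearClique G (G.neighborSet x)) (hlen : (C ++ A).length = 5) (hu : u ∈ C ++ A)
    (hw : w ∈ C ++ A) (huw : u ≠ w) (hadj : ¬G.Adj u w) :
    (C ++ A).Pairwise fun p q => s(p, q) ≠ s(u, w) → G.Adj p q := by
  refine h.nodup.of_append_left.imp_of_mem fun {p q} hp hq hpq hne => ?_
  by_contra hpq'
  exact hne <| hirr.mk_eq_mk_of_not_adj hx (by rw [h.enumerates_left.encard_eq, hlen]; rfl)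
    (h.adj_left p hp) (h.adj_left q hq) (h.adj_left u hu) (h.adj_left w hw) hpq huw hpq' hadj

theorem not_adj_of_length_three (h : IsNeighborPartition G x y C A B) (hirr : IrreducibleGraph G)
    (hx : IsNearClique G (G.neighborSet x)) (hy : IsNearClique G (G.neighborSet y))
    (hC : C.length = 3) (hA : A.length = 2) (hB : B.length = 2) : ¬G.Adj x y := by
  intro hxy
  obtain ⟨c₀, c₁, c₂, rfl⟩ := List.length_eq_three.1 hC
  obtain ⟨A', hA'⟩ := exists_perm_cons_of_mem (h.mem_left_iff.2 hxy)
  obtain ⟨B', hB'⟩ := exists_perm_cons_of_mem (h.symm.mem_left_iff.2 hxy.symm)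
  obtain ⟨a, rfl⟩ := List.length_eq_one_iff.1 (show A'.length = 1 by grind [hA'.length_eq])
  obtain ⟨b, rfl⟩ := List.length_eq_one_iff.1 (show B'.length = 1 by grind [hB'.length_eq])
  have h' := h.perm .rfl hA' hB'
  have hn := h'.nodup
  simp only [List.cons_append, List.nil_append, List.nodup_cons, List.mem_cons] at hn
  have hya : ¬G.Adj y a := h'.adj_right_iff.not.2 (by simp; grind)
  have hxb : ¬G.Adj x b := h'.adj_left_iff.not.2 (by simp; grind)
  have ha : G.Adj a c₂ := hx.adj_of_not_adj (h'.adj_left a (by simp)) (h'.adj_left y (by simp))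
    (h'.adj_left c₂ (by simp)) (by grind) (by grind) (by grind) (mt .symm hya)
  have hb : G.Adj b c₁ := hy.adj_of_not_adj (h'.adj_right b (by simp)) (h'.adj_right x (by simp))
    (h'.adj_right c₁ (by simp)) (by grind) (by grind) (by grind) (mt .symm hxb)
  exact h'.not_irreducibleGraph_of_three_of_adj ha hb hirr

theorem adj_of_mem_common_of_mem_common (h : IsNeighborPartition G x y C A B)
    (hirr : IrreducibleGraph G) (hx : IsNearClique G (G.neighborSet x))
    (hy : IsNearClique G (G.neighborSet y)) (hC : C.length = 3) (hA : A.length = 2)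
    (hB : B.length = 2) (hu : u ∈ C) (hw : w ∈ C) (huw : u ≠ w) : G.Adj u w := by
  by_contra hadj
  obtain ⟨C', hC'⟩ := exists_perm_cons_cons_of_mem hu hw huw
  obtain ⟨c, rfl⟩ := List.length_eq_one_iff.1 (show C'.length = 1 by grind [hC'.length_eq])
  obtain ⟨a₀, a₁, rfl⟩ := List.length_eq_two.1 hA
  obtain ⟨b₀, b₁, rfl⟩ := List.length_eq_two.1 hB
  have hxy := h.not_adj_of_length_three hirr hx hy hC hA hB
  have h' := h.perm hC' .rfl .rfl
  have hn := h'.nodup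
  simp only [List.cons_append, List.nil_append, List.nodup_cons, List.mem_cons] at hn
  have hxadj := h'.pairwise_adj_of_not_adj hirr hx rfl (by simp) (by simp) huw hadj
  have hyadj := h'.symm.pairwise_adj_of_not_adj hirr hy rfl (by simp) (by simp) huw hadj
  simp only [List.cons_append, List.nil_append, List.pairwise_cons, List.mem_cons,
    forall_eq_or_imp, ne_eq, Sym2.eq_iff] at hxadj hyadj
  have hcommon : G.Adj u c ∧ G.Adj w c := by grind
  have ha : G.Adj a₀ u := by grind [SimpleGraph.Adj.symm]
  have hb : G.Adj b₀ w := by grind [SimpleGraph.Adj.symm]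
  exact h'.not_irreducibleGraph_of_three_of_not_adj_common hxy hadj hcommon ha hb hirr

theorem adj_of_mem_common_of_mem_left (h : IsNeighborPartition G x y C A B)
    (hirr : IrreducibleGraph G) (hx : IsNearClique G (G.neighborSet x))
    (hy : IsNearClique G (G.neighborSet y)) (hC : C.length = 3) (hA : A.length = 2)
    (hB : B.length = 2) (hu : u ∈ C) (hw : w ∈ A) : G.Adj u w := by
  by_contra hadj
  obtain ⟨A', hA'⟩ := exists_perm_cons_of_mem hw
  obtain ⟨a₁, rfl⟩ := List.length_eq_one_iff.1 (show A'.length = 1 by grind [hA'.length_eq])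
  obtain ⟨b₀, b₁, rfl⟩ := List.length_eq_two.1 hB
  obtain ⟨p, q, hC', hb⟩ : ∃ p q, C.Perm [u, p, q] ∧ G.Adj b₀ p := by
    obtain ⟨C', hC'⟩ := exists_perm_cons_of_mem hu
    obtain ⟨p, q, rfl⟩ := List.length_eq_two.1 (show C'.length = 2 by grind [hC'.length_eq])
    by_cases hb : G.Adj b₀ p
    · exact ⟨p, q, hC', hb⟩
    have h' := h.perm hC' .rfl .rfl
    have hn := h'.nodup
    simp only [List.cons_append, List.nil_append, List.nodup_cons, List.mem_cons] at hn
    exact ⟨q, p, hC'.trans ((List.Perm.swap q p []).cons u),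
      hy.adj_of_not_adj (h'.adj_right b₀ (by simp)) (h'.adj_right p (by simp))
        (h'.adj_right q (by simp)) (by grind) (by grind) (by grind) hb⟩
  have hxy := h.not_adj_of_length_three hirr hx hy hC hA hB
  have h' := h.perm hC' hA' .rfl
  have hn := h'.nodup
  simp only [List.cons_append, List.nil_append, List.nodup_cons, List.mem_cons] at hn
  have hxadj := h'.pairwise_adj_of_not_adj hirr hx rfl (u := u) (w := w) (by simp)
    (by simp) (by grind) hadj
  simp only [List.cons_append, List.nil_append, List.pairwise_cons, List.mem_cons,
    forall_eq_or_imp, ne_eq, Sym2.eq_iff] at hxadj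
  have hc : G.Adj u p ∧ G.Adj u q ∧ G.Adj p q := by grind
  have hw' : G.Adj w q ∧ G.Adj w p := by grind [SimpleGraph.Adj.symm]
  have ha₁ : G.Adj a₁ q := by grind [SimpleGraph.Adj.symm]
  exact h'.not_irreducibleGraph_of_three_of_not_adj_mixed hxy hadj hc ha₁ hw' hb hirr

theorem adj_of_mem_left_of_mem_left (h : IsNeighborPartition G x y C A B)
    (hirr : IrreducibleGraph G) (hx : IsNearClique G (G.neighborSet x))
    (hy : IsNearClique G (G.neighborSet y)) (hC : C.length = 3) (hA : A.length = 2)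
    (hB : B.length = 2) (hu : u ∈ A) (hw : w ∈ A) (huw : u ≠ w) : G.Adj u w := by
  by_contra hadj
  obtain ⟨A', hA'⟩ := exists_perm_cons_cons_of_mem hu hw huw
  obtain rfl := List.length_eq_zero_iff.1 (show A'.length = 0 by grind [hA'.length_eq])
  obtain ⟨b₀, b₁, rfl⟩ := List.length_eq_two.1 hB
  have hxy := h.not_adj_of_length_three hirr hx hy hC hA hB
  obtain ⟨c₀, hc₀, hb, -⟩ := hy.exists_mem_adj_adj hy h.nodup.of_append_left.of_append_left
    (fun w hw => ⟨h.adj_right w (by simp [hw]), h.adj_right w (by simp [hw])⟩)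
    (h.adj_right b₀ (by simp)) (by grind [h.nodup]) (h.adj_right b₀ (by simp))
    (by grind [h.nodup]) hC.ge
  obtain ⟨C', hC'⟩ := exists_perm_cons_of_mem hc₀
  obtain ⟨c₁, c₂, rfl⟩ := List.length_eq_two.1 (show C'.length = 2 by grind [hC'.length_eq])
  have h' := h.perm hC' hA' .rfl
  have hn := h'.nodup
  simp only [List.cons_append, List.nil_append, List.nodup_cons, List.mem_cons] at hn
  have hxadj := h'.pairwise_adj_of_not_adj hirr hx rfl (by simp) (by simp) huw hadj
  simp only [List.cons_append, List.nil_append, List.pairwise_cons, List.mem_cons,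
    forall_eq_or_imp, ne_eq, Sym2.eq_iff] at hxadj
  have hc : G.Adj c₀ c₁ ∧ G.Adj c₀ c₂ ∧ G.Adj c₁ c₂ := by grind
  have ha : ∀ c ∈ [c₀, c₁, c₂], G.Adj u c ∧ G.Adj w c := by
    simp only [List.mem_cons, List.not_mem_nil, or_false, forall_eq_or_imp, forall_eq]
    grind [SimpleGraph.Adj.symm]
  exact h'.not_irreducibleGraph_of_three_of_not_adj_private hxy hadj hc ha hb hirr

theorem isClique_left (h : IsNeighborPartition G x y C A B) (hirr : IrreducibleGraph G)
    (hx : IsNearClique G (G.neighborSet x)) (hy : IsNearClique G (G.neighborSet y))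
    (hC : C.length = 3) (hA : A.length = 2) (hB : B.length = 2) :
    G.IsClique (G.neighborSet x) := by
  intro u hu w hw huw
  rcases List.mem_append.1 (h.adj_left_iff.1 hu) with hu | hu <;>
    rcases List.mem_append.1 (h.adj_left_iff.1 hw) with hw | hw
  · exact h.adj_of_mem_common_of_mem_common hirr hx hy hC hA hB hu hw huw
  · exact h.adj_of_mem_common_of_mem_left hirr hx hy hC hA hB hu hw
  · exact (h.adj_of_mem_common_of_mem_left hirr hx hy hC hA hB hw hu).symm
  · exact h.adj_of_mem_left_of_mem_left hirr hx hy hC hA hB hu hw huw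

theorem enumerates_inter (h : IsNeighborPartition G x y C A B) :
    Enumerates C (G.neighborSet x ∩ G.neighborSet y) where
  nodup := h.nodup.of_append_left.of_append_left
  mem_iff {w} := by
    have hn := h.nodup
    simp only [Set.mem_inter_iff, mem_neighborSet, h.adj_left_iff, h.adj_right_iff]
    grind

theorem enumerates_union (h : IsNeighborPartition G x y C A B) :
    Enumerates (C ++ A ++ B) (G.neighborSet x ∪ G.neighborSet y) where
  nodup := h.nodup
  mem_iff {w} := by
    simp only [Set.mem_union, mem_neighborSet, h.adj_left_iff, h.adj_right_iff]
    grind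

theorem length_eq_of_irreducibleGraph (h : IsNeighborPartition G x y C A B)
    (hirr : IrreducibleGraph G) (hx : IsNearClique G (G.neighborSet x))
    (hy : IsNearClique G (G.neighborSet y)) (hA : 5 ≤ (C ++ A).length)
    (hA' : (C ++ A).length ≤ 6) (hB : 5 ≤ (C ++ B).length) (hB' : (C ++ B).length ≤ 6)
    (hAB : (C ++ A ++ B).length ≤ 7) : C.length = 3 ∧ A.length = 2 ∧ B.length = 2 := by
  simp only [List.length_append] at hA hA' hB hB' hAB
  obtain ⟨hC, hA, hB⟩ | ⟨hC, hA, hB⟩ | ⟨hC, hB, hA⟩ | ⟨hC, hA, hB⟩ | hthree :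
      (C.length = 6 ∧ A.length = 0 ∧ B.length = 0) ∨
      (C.length = 5 ∧ A.length ≤ 1 ∧ B.length ≤ 1) ∨
      (C.length = 4 ∧ B.length = 1 ∧ (A.length = 1 ∨ A.length = 2)) ∨
      (C.length = 4 ∧ A.length = 1 ∧ (B.length = 1 ∨ B.length = 2)) ∨
      C.length = 3 ∧ A.length = 2 ∧ B.length = 2 := by lia
  · rw [List.length_eq_zero_iff] at hA hB
    subst hA hB
    exact (h.not_irreducibleGraph_of_length_six hx hC hirr).elim
  · exact (h.not_irreducibleGraph_of_length_five hx hy hC hA hB hirr).elim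
  · exact (h.symm.not_irreducibleGraph_of_length_four hy hx hC hB hA hirr).elim
  · exact (h.not_irreducibleGraph_of_length_four hx hy hC hA hB hirr).elim
  · exact hthree

end IsNeighborPartition

theorem exists_isNeighborPartition (hxy : x ≠ y) (hx : (G.neighborSet x).Finite)
    (hy : (G.neighborSet y).Finite) : ∃ C A B, IsNeighborPartition G x y C A B := by
  obtain ⟨C, hC⟩ := exists_enumerates_append (hx.inter_of_left (G.neighborSet y)) List.nodup_nil
    (by simp)
  rw [List.nil_append] at hC
  obtain ⟨A, hA⟩ := exists_enumerates_append hx hC.nodup fun _ hw => (hC.mem_iff.2 hw).1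
  obtain ⟨B, hB⟩ := exists_enumerates_append hy hC.nodup fun _ hw => (hC.mem_iff.2 hw).2
  refine ⟨C, A, B, hxy, hA.nodup.append hB.nodup.of_append_right fun w hw hwB => ?_, hA.mem_iff,
    hB.mem_iff⟩
  have hwC : w ∈ C :=
    hC.mem_iff.1 ⟨hA.mem_iff.2 hw, hB.mem_iff.2 (List.mem_append_right C hwB)⟩
  exact List.disjoint_of_nodup_append hB.nodup hwC hwB

end NeighborPartition

theorem degrees_of_irreducible_robust_general {G : SimpleGraph V} (hirr : IrreducibleGraph G)
    (hrob : Robust G) {x y : V} (hxy : x ≠ y) (hdx : (G.neighborSet x).encard ≤ 6)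
    (hdy : (G.neighborSet y).encard ≤ 6)
    (hun : (G.neighborSet x ∪ G.neighborSet y).encard ≤ 7) :
    ((G.neighborSet x).encard = 5 ∧ (G.neighborSet y).encard = 5) ∧
    (G.neighborSet x ∩ G.neighborSet y).encard = 3 ∧
    G.IsClique (G.neighborSet x) ∧ G.IsClique (G.neighborSet y) := by
  have hx := hrob.isNearClique_neighborSet hirr hdx
  have hy := hrob.isNearClique_neighborSet hirr hdy
  obtain ⟨C, A, B, h⟩ := exists_isNeighborPartition hxy (Set.finite_of_encard_le_coe hdx)
    (Set.finite_of_encard_le_coe hdy)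
  have hdx' := hrob.five_le_encard hirr x
  have hdy' := hrob.five_le_encard hirr y
  rw [h.enumerates_left.encard_eq] at hdx hdx' ⊢
  rw [h.enumerates_right.encard_eq] at hdy hdy' ⊢
  rw [h.enumerates_union.encard_eq] at hun
  rw [h.enumerates_inter.encard_eq]
  norm_cast at hdx hdx' hdy hdy' hun ⊢
  obtain ⟨hC, hA, hB⟩ := h.length_eq_of_irreducibleGraph hirr hx hy hdx' hdx hdy' hdy hun
  simp only [List.length_append, hC, hA, hB, true_and, Nat.reduceAdd]
  exact ⟨h.isClique_left hirr hx hy hC hA hB, h.symm.isClique_left hirr hy hx hC hB hA⟩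

/-- Let `G` be an irreducible robust graph and `x ≠ y` vertices with `deg x ≤ 6`,
`deg y ≤ 6` and `|N(x) ∪ N(y)| ≤ 7`.  Then `deg x = deg y = 5`, `|N(x) ∩ N(y)| = 3`,
and both `G[N(x)]` and `G[N(y)]` are complete graphs on five vertices. -/
theorem degrees_of_irreducible_robust (V : Type) [Fintype V] [DecidableEq V]
    (G : SimpleGraph V) (hirr : IrreducibleGraph G) (hrob : Robust G)
    (x y : V) (hxy : x ≠ y)
    (hdx : (G.neighborSet x).ncard ≤ 6) (hdy : (G.neighborSet y).ncard ≤ 6)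
    (hun : (G.neighborSet x ∪ G.neighborSet y).ncard ≤ 7) :
    ((G.neighborSet x).ncard = 5 ∧ (G.neighborSet y).ncard = 5) ∧
    (G.neighborSet x ∩ G.neighborSet y).ncard = 3 ∧
    (G.IsClique (G.neighborSet x) ∧ (G.neighborSet x).ncard = 5) ∧
    (G.IsClique (G.neighborSet y) ∧ (G.neighborSet y).ncard = 5) := by
  have h := degrees_of_irreducible_robust_general hirr hrob hxy
  simp only [← Set.Finite.cast_ncard_eq (Set.toFinite _)] at h
  norm_cast at h
  tauto
end

section
/- Every graph admits a rooted tree decomposition: a triple (𝒱, T, r) such that (T, 𝒱) is a full tree decomposition, r is a node of T, and for every node t ≠ r and every successor t' of t one has V_t ∩ V_{p(t)} ≠ V_t ∩ V_{t'}, where p(t) denotes the parent of t in the tree rooted at r. Moreover, the root r can be chosen arbitrarily. -/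
open SimpleGraph

variable {V : Type*}

/-- A tree decomposition of `G` with nodes indexed by `α`. -/
structure TreeDecomp (G : SimpleGraph V) (α : Type) where
  T : SimpleGraph α
  isTree : T.IsTree
  bag : α → Finset V
  covers : ∀ v : V, ∃ t : α, v ∈ bag t
  edge_mem : ∀ ⦃u w : V⦄, G.Adj u w → ∃ t : α, u ∈ bag t ∧ w ∈ bag t
  subtree : ∀ v : V, (T.induce {t : α | v ∈ bag t}).Connected

/-- `G` has a tree decomposition of width at most `k`. -/
def HasDecompOfWidthLE (G : SimpleGraph V) (k : ℕ) : Prop :=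
  ∃ (α : Type) (D : TreeDecomp G α), ∀ t : α, (D.bag t).card ≤ k + 1

/-- The treewidth of `G`. -/
noncomputable def treewidth (G : SimpleGraph V) : ℕ :=
  sInf {k | HasDecompOfWidthLE G k}

/-- A tree decomposition is full (for a graph of treewidth `k`) if every bag has exactly
`k + 1` vertices and the bags of any two adjacent nodes share exactly `k` vertices. -/
def IsFullDecomp [DecidableEq V] {G : SimpleGraph V} {α : Type}
    (D : TreeDecomp G α) (k : ℕ) : Prop :=
  (∀ t : α, (D.bag t).card = k + 1) ∧
    ∀ t t' : α, D.T.Adj t t' → (D.bag t ∩ D.bag t').card = k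

/-- In the tree `T` rooted at `r`, `p` is the parent of `t`: it is a neighbor of `t`
lying on the path from `t` to `r` (i.e. closer to `r` by one). -/
def IsParentOf {α : Type} (T : SimpleGraph α) (r t p : α) : Prop :=
  T.Adj t p ∧ T.dist p r + 1 = T.dist t r

/-- The rootedness condition: for every node `t ≠ r` with parent `p` and every
successor `t'` of `t`, `V_t ∩ V_p ≠ V_t ∩ V_{t'}`. -/
def RootCondition [DecidableEq V] {G : SimpleGraph V} {α : Type}
    (D : TreeDecomp G α) (r : α) : Prop :=
  ∀ t p t' : α, t ≠ r → IsParentOf D.T r t p → IsParentOf D.T r t' t →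
    D.bag t ∩ D.bag p ≠ D.bag t ∩ D.bag t'

/-!
*Choosing the root.* In a tree decomposition rooted at `r`, reattach every node `t ≠ r` to the node
closest to `r` whose bag contains `V_t ∩ V_{p(t)}`. The bags and the separators `V_t ∩ V_{p(t)}` do
not change, and the nodes whose bags contain a given vertex still form a subtree with the same top
node. If now `V_t ∩ V_{p(t)} = V_t ∩ V_{t'}` for a successor `t'` of `t`, then `t'` could have been
attached to `p(t)`, which is closer to `r` than `t`.

*Existence.* Take a decomposition of width `k = treewidth G`, rooted at a node with `k + 1` vertices
in its bag, and order the vertices by the distance to the root of the highest node containing them.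
Each vertex `v` has at most `k` predecessors in the bag of its highest node, and they become a
clique when `G` is filled in along this order. The first `k + 1` vertices form the root bag.
Processing the later vertices in order, `v` can be joined to exactly `k` earlier vertices, chosen
inside an existing `(k + 1)`-clique that contains its predecessors. The result is a `k`-tree
containing `G`, and its `(k + 1)`-cliques `{v} ∪ C_v` are the bags of a full tree decomposition.
-/

/-- The graph on the nodes of a rooted tree given by its parent map: every `t ≠ r` is joined to
`par t`. The value of `par` at the root `r` is irrelevant. -/
def parentGraph {α : Type*} (r : α) (par : α → α) : SimpleGraph α :=
  SimpleGraph.fromRel fun t p ↦ t ≠ r ∧ par t = p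

section ParentGraph

variable {α β : Type*} {r : α} {par : α → α} {rank : α → β}

theorem parentGraph_adj_par [Preorder β] (hpar : ∀ t ≠ r, rank (par t) < rank t) {t : α}
    (ht : t ≠ r) : (parentGraph r par).Adj t (par t) :=
  (SimpleGraph.fromRel_adj _ _ _).mpr
    ⟨fun h ↦ (hpar t ht).ne (congrArg rank h.symm), .inl ⟨ht, rfl⟩⟩

theorem eq_par_of_parentGraph_adj [Preorder β] (hpar : ∀ t ≠ r, rank (par t) < rank t)
    {t s : α} (hts : (parentGraph r par).Adj t s) (hle : rank s ≤ rank t) : s = par t := by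
  obtain ⟨-, ⟨-, h⟩ | ⟨hs, rfl⟩⟩ := (SimpleGraph.fromRel_adj _ _ _).mp hts
  · exact h.symm
  · exact absurd (hpar s hs) hle.not_gt

theorem isAcyclic_parentGraph [LinearOrder β] (hpar : ∀ t ≠ r, rank (par t) < rank t) :
    (parentGraph r par).IsAcyclic := by
  classical
  intro v c hc
  -- At a node of largest rank on a cycle, both neighbours on the cycle would be its parent.
  obtain ⟨u, hu, hmax⟩ := c.support.toFinset.exists_max_image rank ⟨v, by simp⟩
  have hu' : u ∈ c.support := List.mem_toFinset.mp hu
  have hrank {s : α} (hs : s ∈ (c.rotate u hu').support) : rank s ≤ rank u :=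
    hmax s (List.mem_toFinset.mpr ((c.mem_support_rotate_iff u hu').mp hs))
  have hc' : (c.rotate u hu').IsCycle := hc.rotate hu'
  have hsnd := eq_par_of_parentGraph_adj hpar (Walk.adj_snd hc'.not_nil)
    (hrank (Walk.getVert_mem_support _ _))
  have hpen := eq_par_of_parentGraph_adj hpar (Walk.adj_penultimate hc'.not_nil).symm
    (hrank (Walk.getVert_mem_support _ _))
  exact hc'.snd_ne_penultimate (hsnd.trans hpen.symm)

theorem connected_induce_parentGraph [Preorder β] [WellFoundedLT β]
    (hpar : ∀ t ≠ r, rank (par t) < rank t) {S : Set α} {m : α} (hm : m ∈ S)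
    (hS : ∀ t ∈ S, t ≠ m → t ≠ r ∧ par t ∈ S) :
    ((parentGraph r par).induce S).Connected := by
  have hreach (t : α) : ∀ ht : t ∈ S,
      ((parentGraph r par).induce S).Reachable ⟨t, ht⟩ ⟨m, hm⟩ := by
    induction t using (InvImage.wf rank wellFounded_lt).induction with
    | _ t ih =>
    intro ht
    by_cases htm : t = m
    · subst htm
      rfl
    obtain ⟨htr, hpS⟩ := hS t ht htm
    have hadj : ((parentGraph r par).induce S).Adj ⟨t, ht⟩ ⟨par t, hpS⟩ :=
      parentGraph_adj_par hpar htr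
    exact hadj.reachable.trans (ih (par t) (hpar t htr) hpS)
  exact (connected_iff _).mpr
    ⟨fun a b ↦ (hreach a a.2).trans (hreach b b.2).symm, ⟨⟨m, hm⟩⟩⟩

theorem isTree_parentGraph [LinearOrder β] [WellFoundedLT β]
    (hpar : ∀ t ≠ r, rank (par t) < rank t) : (parentGraph r par).IsTree where
  connected := (induceUnivIso _).connected_iff.mp <|
    connected_induce_parentGraph hpar (Set.mem_univ r) fun _ _ ht ↦ ⟨ht, Set.mem_univ _⟩
  isAcyclic := isAcyclic_parentGraph hpar

end ParentGraph

theorem exists_map_of_parent_step {α β γ : Type*} [Preorder β] [WellFoundedLT β] {r : α}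
    {par : α → α} {rank : α → β} (hpar : ∀ t ≠ r, rank (par t) < rank t) {P : α → γ → Prop}
    {Q : α → γ → γ → Prop} {b : γ} (hb : P r b)
    (hstep : ∀ t ≠ r, ∀ c, P (par t) c → ∃ d, P t d ∧ Q t c d) :
    ∃ g : α → γ, (∀ t, P t (g t)) ∧ ∀ t ≠ r, Q t (g (par t)) (g t) := by
  classical
  choose next hP hQ using hstep
  let wf : WellFounded (InvImage (· < ·) rank) := InvImage.wf rank wellFounded_lt
  let F (t : α) (ih : ∀ s, rank s < rank t → {c // P s c}) : {c // P t c} :=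
    if ht : t = r then ⟨b, ht ▸ hb⟩
    else ⟨next t ht (ih (par t) (hpar t ht)) (ih (par t) (hpar t ht)).2, hP ..⟩
  refine ⟨fun t ↦ wf.fix F t, fun t ↦ (wf.fix F t).2, fun t ht ↦ ?_⟩
  have hfix : (wf.fix F t).1 = next t ht (wf.fix F (par t)) (wf.fix F (par t)).2 := by
    rw [wf.fix_eq F t]
    simp only [F, dif_neg ht]
  change Q t (wf.fix F (par t)).1 (wf.fix F t).1
  rw [hfix]
  exact hQ ..

theorem exists_isParentOf {α : Type} {T : SimpleGraph α} (hT : T.Connected) {r t : α}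
    (ht : t ≠ r) : ∃ p, IsParentOf T r t p := by
  obtain ⟨w, hw⟩ := hT.exists_walk_length_eq_dist t r
  cases w with
  | nil => exact absurd rfl ht
  | @cons _ p _ h q =>
    refine ⟨p, h, le_antisymm ?_ ?_⟩
    · rw [← hw, Walk.length_cons]
      exact Nat.add_le_add_right (dist_le q) 1
    · rw [add_comm, ← dist_eq_one_iff_adj.mpr h]
      exact hT.dist_triangle

theorem IsParentOf.eq_par {α : Type} {β : Type*} [LinearOrder β] [WellFoundedLT β] {r : α}
    {par : α → α} {rank : α → β} (hpar : ∀ t ≠ r, rank (par t) < rank t) {t p : α}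
    (htp : IsParentOf (parentGraph r par) r t p) : t ≠ r ∧ p = par t := by
  induction hn : (parentGraph r par).dist t r generalizing t p with
  | zero => exact absurd (htp.2.trans hn) (Nat.succ_ne_zero _)
  | succ n ih =>
    obtain ⟨-, ⟨ht, h⟩ | ⟨hp, rfl⟩⟩ := (SimpleGraph.fromRel_adj _ _ _).mp htp.1
    · exact ⟨ht, h.symm⟩
    · obtain ⟨q, hq⟩ := exists_isParentOf (isTree_parentGraph hpar).connected hp
      have hpq := (ih hq (by have := htp.2; omega)).2
      have := htp.2
      have := hpq ▸ hq.2
      omega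

namespace IsParentOf

variable {α : Type} {T : SimpleGraph α} {r t p s : α}

theorem dist_lt (htp : IsParentOf T r t p) : T.dist p r < T.dist t r :=
  Nat.lt_of_succ_le htp.2.le

theorem unique (hT : T.IsTree) {q : α} (htp : IsParentOf T r t p) (htq : IsParentOf T r t q) :
    p = q := by
  have hpath {x : α} (htx : IsParentOf T r t x) :
      ∃ w : T.Walk t r, w.IsPath ∧ w.snd = x := by
    obtain ⟨w, hw⟩ := hT.connected.exists_walk_length_eq_dist x r
    exact ⟨.cons htx.1 w, Walk.isPath_of_length_eq_dist _ (by
      rw [Walk.length_cons, hw, htx.2]), Walk.snd_cons _ _⟩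
  obtain ⟨w, hw, rfl⟩ := hpath htp
  obtain ⟨w', hw', rfl⟩ := hpath htq
  rw [(hT.existsUnique_path t r).unique hw hw']

theorem dist_eq_add_length (hT : T.IsTree) (htp : IsParentOf T r t p) {w : T.Walk t s}
    (hw : w.IsPath) (hpw : p ∉ w.support) : T.dist s r = T.dist t r + w.length := by
  induction w generalizing p with
  | nil => rfl
  | @cons t x s h w ih =>
    obtain ⟨hw, htw⟩ := (Walk.cons_isPath_iff h w).mp hw
    have hne : p ≠ x := by
      rintro rfl
      simp at hpw
    have hxt : IsParentOf T r x t := by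
      refine ⟨h.symm, ?_⟩
      rcases hT.dist_eq_dist_add_one_of_adj r h with hd | hd
      · rw [dist_comm (u := r), dist_comm (u := r)] at hd
        exact absurd (htp.unique hT ⟨h, hd.symm⟩) hne
      · rw [dist_comm (u := t), dist_comm (u := x), hd]
    rw [ih hxt hw htw, ← hxt.2, Walk.length_cons]
    omega

theorem mem_of_preconnected_induce (hT : T.IsTree) (htp : IsParentOf T r t p) {S : Set α}
    (hS : (T.induce S).Preconnected) (ht : t ∈ S) (hs : s ∈ S) (hst : s ≠ t)
    (hle : T.dist s r ≤ T.dist t r) : p ∈ S := by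
  obtain ⟨w, hw⟩ := (hS ⟨t, ht⟩ ⟨s, hs⟩).exists_isPath
  by_contra hp
  have hpw : p ∉ (w.map (Embedding.induce S).toHom).support := by
    rw [Walk.support_map, List.mem_map]
    rintro ⟨x, -, rfl⟩
    exact hp x.2
  have hdist : T.dist s r = T.dist t r + (w.map (Embedding.induce S).toHom).length :=
    htp.dist_eq_add_length hT (hw.map Subtype.val_injective) hpw
  have hlen : (w.map (Embedding.induce S).toHom).length = 0 := by omega
  exact hst (Walk.eq_of_length_eq_zero hlen).symm

end IsParentOf

namespace TreeDecomp

section OfParent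

variable {G : SimpleGraph V} {α : Type} {β : Type*} [LinearOrder β] [WellFoundedLT β]

/-- The tree decomposition whose tree is given by a parent map. The subtree condition holds as soon
as the nodes containing a vertex `v` have a top node, from which all others are reached by passing
from a parent to its successors. -/
def ofParent (r : α) (par : α → α) (rank : α → β) (hpar : ∀ t ≠ r, rank (par t) < rank t)
    (bag : α → Finset V) (edge_mem : ∀ ⦃u w : V⦄, G.Adj u w → ∃ t, u ∈ bag t ∧ w ∈ bag t)
    (exists_top : ∀ v, ∃ m, v ∈ bag m ∧ ∀ t, v ∈ bag t → t ≠ m → t ≠ r ∧ v ∈ bag (par t)) :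
    TreeDecomp G α where
  T := parentGraph r par
  isTree := isTree_parentGraph hpar
  bag := bag
  covers v := (exists_top v).imp fun _ h ↦ h.1
  edge_mem := edge_mem
  subtree v :=
    have ⟨_, hm, htop⟩ := exists_top v
    connected_induce_parentGraph hpar hm htop

variable [DecidableEq V] {r : α} {par : α → α} {rank : α → β}
  {hpar : ∀ t ≠ r, rank (par t) < rank t} {bag : α → Finset V}
  {edge_mem : ∀ ⦃u w : V⦄, G.Adj u w → ∃ t, u ∈ bag t ∧ w ∈ bag t}
  {exists_top : ∀ v, ∃ m, v ∈ bag m ∧ ∀ t, v ∈ bag t → t ≠ m → t ≠ r ∧ v ∈ bag (par t)}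

theorem isFullDecomp_ofParent {k : ℕ} (hcard : ∀ t, (bag t).card = k + 1)
    (hinter : ∀ t ≠ r, (bag t ∩ bag (par t)).card = k) :
    IsFullDecomp (ofParent r par rank hpar bag edge_mem exists_top) k := by
  refine ⟨hcard, fun t s hts ↦ ?_⟩
  obtain ⟨-, ⟨ht, rfl⟩ | ⟨hs, rfl⟩⟩ := (SimpleGraph.fromRel_adj _ _ _).mp hts
  · exact hinter t ht
  · rw [Finset.inter_comm]
    exact hinter s hs

theorem rootCondition_ofParent (h : ∀ t ≠ r, par t ≠ r →
      bag (par t) ∩ bag (par (par t)) ≠ bag (par t) ∩ bag t) :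
    RootCondition (ofParent r par rank hpar bag edge_mem exists_top) r := by
  intro t p t' ht htp ht't
  obtain ⟨-, rfl⟩ := htp.eq_par hpar
  obtain ⟨ht', rfl⟩ := ht't.eq_par hpar
  exact h t' ht' ht

end OfParent

variable {G : SimpleGraph V} {α : Type} (D : TreeDecomp G α) {r s t p : α} {u v w : V}

theorem mem_bag_parent (htp : IsParentOf D.T r t p) (hvt : v ∈ D.bag t) (hvs : v ∈ D.bag s)
    (hst : s ≠ t) (hle : D.T.dist s r ≤ D.T.dist t r) : v ∈ D.bag p :=
  htp.mem_of_preconnected_induce D.isTree (D.subtree v).preconnected hvt hvs hst hle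

/-- The node closest to `r` whose bag contains `v`. -/
noncomputable def top (r : α) (v : V) : α :=
  Function.argminOn (D.T.dist · r) {t | v ∈ D.bag t} (D.covers v)

theorem mem_bag_top (r : α) (v : V) : v ∈ D.bag (D.top r v) :=
  Function.argminOn_mem (D.T.dist · r) {t | v ∈ D.bag t} (D.covers v)

theorem dist_top_le (r : α) (hv : v ∈ D.bag t) : D.T.dist (D.top r v) r ≤ D.T.dist t r :=
  Function.argminOn_le (D.T.dist · r) {t | v ∈ D.bag t} hv

theorem top_eq_root (hv : v ∈ D.bag r) : D.top r v = r :=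
  D.isTree.connected.dist_eq_zero_iff.mp <|
    Nat.le_zero.mp <| (D.dist_top_le r hv).trans_eq dist_self

theorem mem_bag_parent_of_ne_top (htp : IsParentOf D.T r t p) (hv : v ∈ D.bag t)
    (ht : t ≠ D.top r v) : v ∈ D.bag p :=
  D.mem_bag_parent htp hv (D.mem_bag_top r v) ht.symm (D.dist_top_le r hv)

theorem mem_bag_top_of_dist_le (hu : u ∈ D.bag t) (hw : w ∈ D.bag t)
    (hle : D.T.dist (D.top r u) r ≤ D.T.dist (D.top r w) r) : u ∈ D.bag (D.top r w) := by
  induction hn : D.T.dist t r using Nat.strong_induction_on generalizing t with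
  | _ n ih =>
  by_cases htw : t = D.top r w
  · exact htw ▸ hu
  have htr : t ≠ r := by
    rintro rfl
    exact htw (D.top_eq_root hw).symm
  obtain ⟨p, htp⟩ := exists_isParentOf D.isTree.connected htr
  have hwp : w ∈ D.bag p := D.mem_bag_parent_of_ne_top htp hw htw
  have htu : t ≠ D.top r u := by
    intro htu
    rw [← htu] at hle
    exact (hle.trans (D.dist_top_le r hwp)).not_gt htp.dist_lt
  exact ih _ (hn ▸ htp.dist_lt) (D.mem_bag_parent_of_ne_top htp hu htu) hwp rfl

section Reattach

variable [DecidableEq V]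

theorem exists_highest_attachment (ht : t ≠ r) :
    ∃ q, D.T.dist q r < D.T.dist t r ∧
      (∃ p, IsParentOf D.T r t p ∧ D.bag t ∩ D.bag q = D.bag t ∩ D.bag p) ∧
      ∀ s, D.bag t ∩ D.bag q ⊆ D.bag s → D.T.dist q r ≤ D.T.dist s r := by
  obtain ⟨p, htp⟩ := exists_isParentOf D.isTree.connected ht
  obtain ⟨q, hpq, hmin⟩ := exists_minimalFor_of_wellFoundedLT
    (fun s ↦ D.bag t ∩ D.bag p ⊆ D.bag s) (D.T.dist · r) ⟨p, Finset.inter_subset_right⟩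
  have hle {s : α} (hs : D.bag t ∩ D.bag p ⊆ D.bag s) : D.T.dist q r ≤ D.T.dist s r :=
    (le_total _ _).elim id (hmin hs)
  have hqt : D.T.dist q r < D.T.dist t r := (hle Finset.inter_subset_right).trans_lt htp.dist_lt
  have hinter : D.bag t ∩ D.bag q = D.bag t ∩ D.bag p := by
    refine subset_antisymm (fun v hv ↦ ?_) (Finset.subset_inter Finset.inter_subset_left hpq)
    obtain ⟨hvt, hvq⟩ := Finset.mem_inter.mp hv
    refine Finset.mem_inter.mpr ⟨hvt, D.mem_bag_parent htp hvt hvq ?_ hqt.le⟩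
    rintro rfl
    exact hqt.false
  exact ⟨q, hqt, ⟨p, htp, hinter⟩, fun s hs ↦ hle (hinter ▸ hs)⟩

theorem exists_rootCondition (r : α) : ∃ D' : TreeDecomp G α, D'.bag = D.bag ∧
    (∀ k, IsFullDecomp D k → IsFullDecomp D' k) ∧ RootCondition D' r := by
  have : Nonempty α := ⟨r⟩
  choose! par hdist hinter hmin using fun t (ht : t ≠ r) ↦ D.exists_highest_attachment ht
  have exists_top (v : V) : ∃ m, v ∈ D.bag m ∧
      ∀ t, v ∈ D.bag t → t ≠ m → t ≠ r ∧ v ∈ D.bag (par t) := by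
    refine ⟨D.top r v, D.mem_bag_top r v, fun t hv ht ↦ ?_⟩
    have htr : t ≠ r := by
      rintro rfl
      exact ht (D.top_eq_root hv).symm
    obtain ⟨p, htp, h⟩ := hinter t htr
    have hvp : v ∈ D.bag t ∩ D.bag p :=
      Finset.mem_inter.mpr ⟨hv, D.mem_bag_parent_of_ne_top htp hv ht⟩
    exact ⟨htr, Finset.inter_subset_right (h ▸ hvp)⟩
  refine ⟨ofParent r par (D.T.dist · r) hdist D.bag D.edge_mem exists_top, rfl, fun k hD ↦ ?_,
    rootCondition_ofParent fun t ht hpt heq ↦ ?_⟩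
  · refine isFullDecomp_ofParent hD.1 fun t ht ↦ ?_
    obtain ⟨p, htp, h⟩ := hinter t ht
    exact h ▸ hD.2 t p htp.1
  · -- Otherwise `t` could have been attached to the parent of `par t`, which is closer to `r`.
    refine (hmin t ht (par (par t)) ?_).not_gt (hdist _ hpt)
    rw [Finset.inter_comm, ← heq]
    exact Finset.inter_subset_right

end Reattach

end TreeDecomp

/-- Eliminating the vertices of `G` by decreasing rank is an elimination ordering of width at
most `k`: `back v` is the set of neighbours of smaller rank of `v` in some chordal supergraph of
`G`, in which it is a clique. -/
structure IsEliminationOrdering {β : Type*} [LT β] (G : SimpleGraph V) (k : ℕ)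
    (rank : V → β) (back : V → Finset V) : Prop where
  rank_injective : Function.Injective rank
  rank_lt : ∀ ⦃u v⦄, u ∈ back v → rank u < rank v
  mem_back_of_adj : ∀ ⦃u v⦄, G.Adj u v → rank u < rank v → u ∈ back v
  mem_back_of_rank_lt : ∀ ⦃u v w⦄, u ∈ back v → w ∈ back v → rank u < rank w → u ∈ back w
  card_back_le : ∀ v, (back v).card ≤ k

namespace TreeDecomp

variable {G : SimpleGraph V} {α : Type} (D : TreeDecomp G α) {r : α} {k : ℕ} {u v w : V}

/-- The lexicographic rank of a vertex by the distance from `r` to its top node, ties being broken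
by a well-order of the vertices. -/
noncomputable def topRank (r : α) (v : V) : ℕ ×ₗ Cardinal :=
  toLex (D.T.dist (D.top r v) r, embeddingToCardinal v)

/-- The vertices of the bag of the top node of `v` that precede `v`. -/
noncomputable def back (r : α) (v : V) : Finset V :=
  (D.bag (D.top r v)).filter (D.topRank r · < D.topRank r v)

theorem mem_back : u ∈ D.back r v ↔ u ∈ D.bag (D.top r v) ∧ D.topRank r u < D.topRank r v :=
  Finset.mem_filter

theorem dist_top_le_of_topRank_lt (h : D.topRank r u < D.topRank r v) :
    D.T.dist (D.top r u) r ≤ D.T.dist (D.top r v) r :=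
  Prod.Lex.monotone_fst _ _ h.le

theorem topRank_injective : Function.Injective (D.topRank r) := fun _ _ h ↦
  embeddingToCardinal.injective (congrArg (fun x ↦ (ofLex x).2) h)

theorem isEliminationOrdering (hk : ∀ t, (D.bag t).card ≤ k + 1) (r : α) :
    IsEliminationOrdering G k (D.topRank r) (D.back r) where
  rank_injective := D.topRank_injective
  rank_lt _ _ hu := (D.mem_back.mp hu).2
  mem_back_of_adj u v huv hlt := by
    obtain ⟨t, hu, hv⟩ := D.edge_mem huv
    exact D.mem_back.mpr
      ⟨D.mem_bag_top_of_dist_le hu hv (D.dist_top_le_of_topRank_lt hlt), hlt⟩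
  mem_back_of_rank_lt u v w hu hw hlt := D.mem_back.mpr
    ⟨D.mem_bag_top_of_dist_le (D.mem_back.mp hu).1 (D.mem_back.mp hw).1
      (D.dist_top_le_of_topRank_lt hlt), hlt⟩
  card_back_le v := by
    have hlt : (D.back r v).card < (D.bag (D.top r v)).card :=
      Finset.card_lt_card <| Finset.filter_ssubset.mpr ⟨v, D.mem_bag_top r v, lt_irrefl _⟩
    exact Nat.le_of_lt_succ (hlt.trans_le (hk _))

theorem exists_card_back_eq (hr : (D.bag r).card = k + 1) :
    ∃ m, (∀ u, D.topRank r u < D.topRank r m → u ∈ D.back r m) ∧ (D.back r m).card = k := by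
  classical
  have hne : (D.bag r).Nonempty := Finset.card_pos.mp (hr ▸ Nat.succ_pos k)
  obtain ⟨m, hm, hmax⟩ := (D.bag r).exists_max_image (D.topRank r) hne
  have hback : D.back r m = (D.bag r).erase m := by
    ext u
    rw [mem_back, D.top_eq_root hm, Finset.mem_erase, and_comm]
    refine and_congr_left fun hu ↦ ⟨?_, fun h ↦ (hmax u hu).lt_of_ne (D.topRank_injective.ne h)⟩
    rintro h rfl
    exact h.false
  refine ⟨m, fun u hu ↦ D.mem_back.mpr ⟨?_, hu⟩, ?_⟩
  · have hdist := D.dist_top_le_of_topRank_lt hu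
    rw [D.top_eq_root hm, dist_self, Nat.le_zero,
      D.isTree.connected.dist_eq_zero_iff] at hdist
    rw [D.top_eq_root hm, ← hdist]
    exact D.mem_bag_top r u
  · rw [hback, Finset.card_erase_of_mem hm, hr, Nat.add_sub_cancel]

end TreeDecomp

/-- The vertices from `m` on in the order given by `rank`, used as the nodes of a tree
decomposition: the earlier vertices all lie in the bag of `m`. -/
abbrev LaterVertex {β : Type*} [LE β] (rank : V → β) (m : V) :=
  {v // rank m ≤ rank v}

/-- The construction of a `k`-tree by successively joining each vertex `t` to the `k` vertices of
a clique `C t ⊇ back t` contained in the clique `insert (par t) (C (par t))`. It starts from the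
clique `insert m (C m)`; the value of `par` at `m` is irrelevant. -/
structure IsKTreeConstruction [DecidableEq V] {β : Type*} [Preorder β] (k : ℕ) (rank : V → β)
    (back : V → Finset V) (m : V) (par : LaterVertex rank m → LaterVertex rank m)
    (C : LaterVertex rank m → Finset V) : Prop where
  rank_par_lt : ∀ t ≠ ⟨m, le_rfl⟩, rank (par t) < rank t
  subset_insert_par : ∀ t ≠ ⟨m, le_rfl⟩, C t ⊆ insert ↑(par t) (C (par t))
  back_subset : ∀ t : LaterVertex rank m, back t ⊆ C t
  card_eq : ∀ t, (C t).card = k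
  rank_lt : ∀ t : LaterVertex rank m, ∀ u ∈ C t, rank u < rank t

namespace IsEliminationOrdering

variable [DecidableEq V] {β : Type*} [LinearOrder β] {G : SimpleGraph V} {k : ℕ} {rank : V → β}
  {back : V → Finset V} {m : V}

theorem exists_back_subset_insert (h : IsEliminationOrdering G k rank back)
    (hm : ∀ u, rank u < rank m → u ∈ back m) {v : V} (hmv : rank m < rank v) :
    ∃ w, rank m ≤ rank w ∧ rank w < rank v ∧ back v ⊆ insert w (back w) := by
  obtain ⟨w, hw, hmax⟩ := (insert m (back v)).exists_max_image rank (Finset.insert_nonempty _ _)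
  refine ⟨w, hmax m (Finset.mem_insert_self _ _), ?_, fun u hu ↦ Finset.mem_insert.mpr ?_⟩
  · rcases Finset.mem_insert.mp hw with rfl | hw
    · exact hmv
    · exact h.rank_lt hw
  · refine or_iff_not_imp_left.mpr fun hne ↦ ?_
    have hlt : rank u < rank w :=
      (hmax u (Finset.mem_insert_of_mem hu)).lt_of_ne (h.rank_injective.ne hne)
    rcases Finset.mem_insert.mp hw with rfl | hw
    · exact hm u hlt
    · exact h.mem_back_of_rank_lt hu hw hlt

theorem exists_isKTreeConstruction [WellFoundedLT β] (h : IsEliminationOrdering G k rank back)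
    (hm : ∀ u, rank u < rank m → u ∈ back m) (hk : (back m).card = k) :
    ∃ par C, IsKTreeConstruction k rank back m par C := by
  have hparent (t : LaterVertex rank m) (ht : t ≠ ⟨m, le_rfl⟩) :
      ∃ w : LaterVertex rank m, rank w < rank t ∧ back t ⊆ insert ↑w (back w) := by
    have hmt : rank m < rank t :=
      t.2.lt_of_ne fun heq ↦ ht (Subtype.ext (h.rank_injective heq).symm)
    obtain ⟨w, hmw, hwt, hback⟩ := h.exists_back_subset_insert hm hmt
    exact ⟨⟨w, hmw⟩, hwt, hback⟩
  have : Nonempty (LaterVertex rank m) := ⟨⟨m, le_rfl⟩⟩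
  choose! par hpar hback using hparent
  have hstep (t : LaterVertex rank m) (ht : t ≠ ⟨m, le_rfl⟩) (B : Finset V)
      (hB : back (par t) ⊆ B ∧ B.card = k ∧ ∀ u ∈ B, rank u < rank (par t)) :
      ∃ C, (back t ⊆ C ∧ C.card = k ∧ ∀ u ∈ C, rank u < rank t) ∧ C ⊆ insert ↑(par t) B := by
    obtain ⟨hB, hBk, hlt⟩ := hB
    obtain ⟨C, htC, hC, hCk⟩ := Finset.exists_subsuperset_card_eq
      ((hback t ht).trans (Finset.insert_subset_insert _ hB)) (h.card_back_le t)
      (hBk ▸ Finset.card_le_card (Finset.subset_insert _ _))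
    refine ⟨C, ⟨htC, hCk, fun u hu ↦ ?_⟩, hC⟩
    rcases Finset.mem_insert.mp (hC hu) with rfl | hu
    · exact hpar t ht
    · exact (hlt u hu).trans (hpar t ht)
  have hbase : back m ⊆ back m ∧ (back m).card = k ∧ ∀ u ∈ back m, rank u < rank m :=
    ⟨subset_rfl, hk, fun _ hu ↦ h.rank_lt hu⟩
  obtain ⟨C, hC, hCpar⟩ := exists_map_of_parent_step (rank := fun t : LaterVertex rank m ↦ rank t)
    (P := fun t C ↦ back t ⊆ C ∧ C.card = k ∧ ∀ u ∈ C, rank u < rank t) hpar hbase hstep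
  exact ⟨par, C, hpar, hCpar, fun t ↦ (hC t).1, fun t ↦ (hC t).2.1, fun t ↦ (hC t).2.2⟩

end IsEliminationOrdering

namespace IsKTreeConstruction

variable [DecidableEq V] {β : Type*} [LinearOrder β] {k : ℕ} {rank : V → β}
  {back : V → Finset V} {m : V} {par : LaterVertex rank m → LaterVertex rank m}
  {C : LaterVertex rank m → Finset V}

theorem exists_mem_bag_of_adj {G : SimpleGraph V} (hC : IsKTreeConstruction k rank back m par C)
    (h : IsEliminationOrdering G k rank back) (hm : ∀ u, rank u < rank m → u ∈ back m) {u w : V}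
    (huw : G.Adj u w) : ∃ t : LaterVertex rank m, u ∈ insert ↑t (C t) ∧ w ∈ insert ↑t (C t) := by
  wlog huw' : rank u < rank w generalizing u w
  · have hwu := (not_lt.mp huw').lt_of_ne (h.rank_injective.ne huw.ne')
    exact (this huw.symm hwu).imp fun _ ↦ And.symm
  by_cases hmw : rank m ≤ rank w
  · exact ⟨⟨w, hmw⟩, Finset.mem_insert_of_mem (hC.back_subset _ (h.mem_back_of_adj huw huw')),
      Finset.mem_insert_self _ _⟩
  · have hmem {x : V} (hx : rank x < rank m) : x ∈ insert m (C ⟨m, le_rfl⟩) :=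
      Finset.mem_insert_of_mem (hC.back_subset ⟨m, le_rfl⟩ (hm x hx))
    exact ⟨⟨m, le_rfl⟩, hmem (huw'.trans (not_le.mp hmw)), hmem (not_le.mp hmw)⟩

theorem exists_top (hC : IsKTreeConstruction k rank back m par C)
    (hm : ∀ u, rank u < rank m → u ∈ back m) (v : V) :
    ∃ s : LaterVertex rank m, v ∈ insert ↑s (C s) ∧
      ∀ t : LaterVertex rank m, v ∈ insert ↑t (C t) → t ≠ s →
        t ≠ ⟨m, le_rfl⟩ ∧ v ∈ insert ↑(par t) (C (par t)) := by
  by_cases hmv : rank m ≤ rank v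
  · refine ⟨⟨v, hmv⟩, Finset.mem_insert_self _ _, fun t hv hne ↦ ?_⟩
    have hvC : v ∈ C t := Finset.mem_of_mem_insert_of_ne hv fun heq ↦ hne (Subtype.ext heq.symm)
    have htm : t ≠ ⟨m, le_rfl⟩ := by
      rintro rfl
      exact (hC.rank_lt _ v hvC).not_ge hmv
    exact ⟨htm, hC.subset_insert_par t htm hvC⟩
  · have hvm : v ∈ C ⟨m, le_rfl⟩ := hC.back_subset _ (hm v (not_le.mp hmv))
    refine ⟨⟨m, le_rfl⟩, Finset.mem_insert_of_mem hvm, fun t hv htm ↦ ⟨htm, ?_⟩⟩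
    refine hC.subset_insert_par t htm (Finset.mem_of_mem_insert_of_ne hv ?_)
    rintro rfl
    exact hmv t.2

theorem card_bag (hC : IsKTreeConstruction k rank back m par C) (t : LaterVertex rank m) :
    (insert ↑t (C t)).card = k + 1 := by
  rw [Finset.card_insert_of_notMem fun ht ↦ (hC.rank_lt t t ht).false, hC.card_eq]

theorem card_bag_inter_par (hC : IsKTreeConstruction k rank back m par C) {t : LaterVertex rank m}
    (ht : t ≠ ⟨m, le_rfl⟩) : (insert ↑t (C t) ∩ insert ↑(par t) (C (par t))).card = k := by
  have hlt : rank (par t) < rank t := hC.rank_par_lt t ht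
  have htp : ↑t ∉ insert ↑(par t) (C (par t)) := by
    rw [Finset.mem_insert, not_or]
    exact ⟨fun heq ↦ hlt.ne' (congrArg rank heq), fun h ↦ (hC.rank_lt _ _ h).not_gt hlt⟩
  rw [Finset.insert_inter_of_notMem htp, Finset.inter_eq_left.mpr (hC.subset_insert_par t ht),
    hC.card_eq]

end IsKTreeConstruction

theorem IsEliminationOrdering.exists_isFullDecomp {V : Type} [DecidableEq V] {β : Type*}
    [LinearOrder β] [WellFoundedLT β] {G : SimpleGraph V} {k : ℕ} {rank : V → β}
    {back : V → Finset V} (h : IsEliminationOrdering G k rank back) {m : V}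
    (hm : ∀ u, rank u < rank m → u ∈ back m) (hk : (back m).card = k) :
    ∃ (α : Type) (D : TreeDecomp G α), IsFullDecomp D k := by
  obtain ⟨par, C, hC⟩ := h.exists_isKTreeConstruction hm hk
  exact ⟨LaterVertex rank m,
    .ofParent ⟨m, le_rfl⟩ par (fun t ↦ rank t) hC.rank_par_lt (fun t ↦ insert ↑t (C t))
      (fun _ _ ↦ hC.exists_mem_bag_of_adj h hm) (hC.exists_top hm),
    TreeDecomp.isFullDecomp_ofParent hC.card_bag fun _ ↦ hC.card_bag_inter_par⟩

theorem hasDecompOfWidthLE_card [Fintype V] (G : SimpleGraph V) :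
    HasDecompOfWidthLE G (Fintype.card V) := by
  refine ⟨Unit, ?_, ?_⟩
  · exact
      { T := ⊥
        isTree := .of_subsingleton
        bag := fun _ ↦ Finset.univ
        covers := by simp
        edge_mem := by simp
        subtree := fun v ↦
          have : Nonempty ({t | v ∈ Finset.univ} : Set Unit) := ⟨⟨(), by simp⟩⟩
          IsTree.of_subsingleton.connected }
  · exact fun _ ↦ (Finset.card_le_univ _).trans (Nat.le_succ _)

theorem TreeDecomp.exists_card_bag_eq [Nonempty V] {G : SimpleGraph V} {α : Type}
    (D : TreeDecomp G α) (hD : ∀ t, (D.bag t).card ≤ treewidth G + 1) :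
    ∃ r, (D.bag r).card = treewidth G + 1 := by
  by_contra! hne
  have hlt (t : α) : (D.bag t).card ≤ treewidth G := Nat.le_of_lt_succ ((hD t).lt_of_ne (hne t))
  obtain ⟨t, ht⟩ := D.covers (Classical.arbitrary V)
  have hpos : 1 ≤ treewidth G := (Finset.card_pos.mpr ⟨_, ht⟩).trans_le (hlt t)
  refine Nat.notMem_of_lt_sInf (s := {k | HasDecompOfWidthLE G k}) (m := treewidth G - 1)
    (Nat.sub_lt hpos one_pos) ⟨α, D, fun t ↦ ?_⟩
  rw [Nat.sub_add_cancel hpos]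
  exact hlt t

theorem exists_isFullDecomp_treewidth {V : Type} [DecidableEq V] [Nonempty V] {G : SimpleGraph V}
    (hG : ∃ k, HasDecompOfWidthLE G k) :
    ∃ (α : Type) (D : TreeDecomp G α), IsFullDecomp D (treewidth G) := by
  obtain ⟨α, D, hD⟩ : HasDecompOfWidthLE G (treewidth G) := Nat.sInf_mem hG
  obtain ⟨r, hr⟩ := D.exists_card_bag_eq hD
  obtain ⟨m, hm, hcard⟩ := D.exists_card_back_eq hr
  exact (D.isEliminationOrdering hD r).exists_isFullDecomp hm hcard

theorem exists_rooted_tree_decomposition_general (V : Type) [DecidableEq V] [Nonempty V]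
    (G : SimpleGraph V) (hG : ∃ k, HasDecompOfWidthLE G k) :
    (∃ (α : Type) (D : TreeDecomp G α) (r : α),
        IsFullDecomp D (treewidth G) ∧ RootCondition D r) ∧
    (∀ (α : Type) (D : TreeDecomp G α), IsFullDecomp D (treewidth G) → ∀ r : α,
        ∃ D' : TreeDecomp G α, D'.bag = D.bag ∧ IsFullDecomp D' (treewidth G) ∧
          RootCondition D' r) := by
  have hroot (α : Type) (D : TreeDecomp G α) (hD : IsFullDecomp D (treewidth G)) (r : α) :
      ∃ D' : TreeDecomp G α, D'.bag = D.bag ∧ IsFullDecomp D' (treewidth G) ∧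
        RootCondition D' r := by
    obtain ⟨D', hbag, hfull, hD'⟩ := D.exists_rootCondition r
    exact ⟨D', hbag, hfull _ hD, hD'⟩
  obtain ⟨α, D, hD⟩ := exists_isFullDecomp_treewidth hG
  obtain ⟨r⟩ := D.isTree.connected.nonempty
  obtain ⟨D', -, hfull, hD'⟩ := hroot α D hD r
  exact ⟨⟨α, D', r, hfull, hD'⟩, hroot⟩

/-- Every (nonempty) graph admits a rooted tree decomposition: a full tree decomposition
`D` together with a root `r` such that for every node `t ≠ r` with parent `p` and every
successor `t'` of `t` one has `V_t ∩ V_p ≠ V_t ∩ V_{t'}`.  Moreover, the root can be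
chosen arbitrarily: any full tree decomposition can be re-arranged (keeping its node set
and its bags) so that the rootedness condition holds for any prescribed root. -/
theorem exists_rooted_tree_decomposition (V : Type) [Fintype V] [DecidableEq V] [Nonempty V]
    (G : SimpleGraph V) :
    (∃ (α : Type) (D : TreeDecomp G α) (r : α),
        IsFullDecomp D (treewidth G) ∧ RootCondition D r) ∧
    (∀ (α : Type) (D : TreeDecomp G α), IsFullDecomp D (treewidth G) → ∀ r : α,
        ∃ D' : TreeDecomp G α, D'.bag = D.bag ∧ IsFullDecomp D' (treewidth G) ∧
          RootCondition D' r) := by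
  exact exists_rooted_tree_decomposition_general V G ⟨_, hasDecompOfWidthLE_card G⟩
end

section
/- If G is a planar graph on n vertices (with at least one edge and distinct from K3 when comparing sizes), then τ(G) ≤ n − 2. -/
open SimpleGraph

variable {V : Type*}

/-- A drawing of the graph `G` in the plane (identified with `ℂ`): vertices are mapped to
distinct points, each edge is realized by a simple continuous arc joining the images of its
endpoints, arcs of distinct edges meet only in common endpoints, and no arc passes through
the image of any other vertex. -/
structure PlaneEmbedding (G : SimpleGraph V) where
  vtx : V → ℂ
  arc : V → V → Set ℂ
  vtx_inj : Function.Injective vtx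
  arc_symm : ∀ u v : V, arc u v = arc v u
  arc_curve : ∀ ⦃u v : V⦄, G.Adj u v → ∃ γ : ℝ → ℂ,
    ContinuousOn γ (Set.Icc 0 1) ∧ Set.InjOn γ (Set.Icc 0 1) ∧
    γ 0 = vtx u ∧ γ 1 = vtx v ∧ arc u v = γ '' Set.Icc 0 1
  arc_inter : ∀ ⦃u v x y : V⦄, G.Adj u v → G.Adj x y → s(u, v) ≠ s(x, y) →
    arc u v ∩ arc x y ⊆ ({vtx u, vtx v} : Set ℂ) ∩ ({vtx x, vtx y} : Set ℂ)
  arc_vtx : ∀ ⦃u v : V⦄, G.Adj u v → ∀ w : V, vtx w ∈ arc u v → w = u ∨ w = v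

/-- The set of points of the plane used by a plane embedding. -/
def PlaneEmbedding.drawing {G : SimpleGraph V} (E : PlaneEmbedding G) : Set ℂ :=
  Set.range E.vtx ∪ ⋃ (u : V) (v : V) (_ : G.Adj u v), E.arc u v

/-- A graph is planar if it admits a plane embedding. -/
def PlanarGraph (G : SimpleGraph V) : Prop := Nonempty (PlaneEmbedding G)

/-- A maximal planar graph (planar triangulation): a planar graph such that adding any
edge between nonadjacent vertices destroys planarity. -/
def MaximalPlanar (G : SimpleGraph V) : Prop :=
  PlanarGraph G ∧ ∀ u v : V, u ≠ v → ¬ G.Adj u v →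
    ¬ PlanarGraph (G ⊔ SimpleGraph.fromEdgeSet {s(u, v)})

/-!
A plane drawing satisfies the van Kampen relations modulo 2: for two disjoint edges, the parities of
the turns that each of them makes around the ends of the other are governed by the order of the four
ends. This is all that is used of planarity. The relations pass to subgraphs and to contractions of
edges, and if an edge `uv` lies in three triangles or more, then they imply that one of these
triangles separates the third vertices of two others.

By induction on `n`, a planar graph on `n ≥ 3` vertices has at most `3n - 6` edges, and *every* edge
`g` is in a triangle transversal of size at most `n - 2`. If some edge is in three triangles, split
the graph along a separating triangle `T`; a transversal of one part contains an edge of `T`, and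
the other part has a transversal through this edge, so that the union of the two has the right size.
Otherwise every edge is in at most two triangles. If an edge other than `g` is in at most one, or
`g` is in none, contract it. If every edge is in exactly two, the dual graph of the triangles is
cubic and its odd cuts have at least three edges, so it has a perfect matching through `g`
(Petersen, Plesník); the matched edges are a third of all edges, at most `n - 2`. These are all
cases, because the edges in an odd number of triangles form a cycle modulo 2, so that `g` cannot be
the only one.
-/

section LogVariation

open Complex

/-- `HasLogVariation γ z w` says that `log (γ t - z)`, continued along the curve `γ`, changes by `w`
as `t` goes from `0` to `1`; the imaginary part of `w` is the angle by which `γ` turns around `z`.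
It is a relation, so that no branch of the logarithm has to be chosen. -/
def HasLogVariation (γ : ℝ → ℂ) (z w : ℂ) : Prop :=
  ∃ L : ℝ → ℂ, Continuous L ∧ (∀ t, exp (L t) = γ t - z) ∧ L 1 - L 0 = w

lemma exists_continuous_exp_eq {X : Type*} [TopologicalSpace X] [LocallyPathConnectedSpace X]
    [ContractibleSpace X] {f : X → ℂ} (hf : Continuous f) (h0 : ∀ x, f x ≠ 0) :
    ∃ L : X → ℂ, Continuous L ∧ ∀ x, exp (L x) = f x := by
  obtain ⟨x₀⟩ : Nonempty X := inferInstance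
  obtain ⟨L, ⟨-, hL⟩, -⟩ := isCoveringMapOn_exp.existsUnique_continuousMap_lifts
    ⟨f, hf⟩ (exp_log (h0 x₀)) h0
  exact ⟨L, L.continuous, congrFun hL⟩

lemma sub_eq_sub_of_exp_eq {X : Type*} [TopologicalSpace X] [PreconnectedSpace X] {L M : X → ℂ}
    (hL : Continuous L) (hM : Continuous M) (h : ∀ x, exp (L x) = exp (M x)) (x y : X) :
    L x - M x = L y - M y := by
  choose n hn using fun x => exp_eq_exp_iff_exists_int.mp (h x)
  have hcast : (fun x => (n x : ℂ)) = fun x => (L x - M x) / (2 * Real.pi * I) := by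
    funext x
    rw [hn x, add_sub_cancel_left, mul_div_cancel_right₀ _ two_pi_I_ne_zero]
  have hcont : Continuous n := by
    refine isClosedEmbedding_intCast.isEmbedding.continuous_iff.mpr ?_
    change Continuous fun x => (n x : ℂ)
    rw [hcast]
    fun_prop
  have hxy : n x = n y := PreconnectedSpace.constant inferInstance hcont
  rw [hn x, hn y, hxy, add_sub_cancel_left, add_sub_cancel_left]

lemma exists_log_sub_log_neg {z : ℂ} (hz : z ≠ 0) :
    ∃ q : ℤ, log z - log (-z) = Real.pi * I * (2 * q + 1) := by
  have h : exp (log z) = exp (log (-z) + Real.pi * I) := by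
    rw [exp_add, exp_log hz, exp_log (neg_ne_zero.mpr hz), exp_pi_mul_I]
    ring
  obtain ⟨n, hn⟩ := exp_eq_exp_iff_exists_int.mp h
  exact ⟨n, by rw [hn]; ring⟩

lemma int_eq_of_two_pi_I_mul_eq {m n : ℤ} (h : 2 * Real.pi * I * m = 2 * Real.pi * I * n) :
    m = n := by
  have := mul_left_cancel₀ two_pi_I_ne_zero h
  exact_mod_cast this

namespace HasLogVariation

variable {γ δ : ℝ → ℂ} {z w w₀ w₁ : ℂ}

lemma unique (h₀ : HasLogVariation γ z w₀) (h₁ : HasLogVariation γ z w₁) : w₀ = w₁ := by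
  obtain ⟨L, hL, hLexp, rfl⟩ := h₀
  obtain ⟨M, hM, hMexp, rfl⟩ := h₁
  have := sub_eq_sub_of_exp_eq hL hM (fun t => (hLexp t).trans (hMexp t).symm) 1 0
  linear_combination this

/- `δ t - γ s` has a continuous logarithm on the whole square, whose variation from one corner to
the opposite one can be computed along either pair of sides. -/
lemma add_eq_add_of_disjoint (hγ : Continuous γ) (hδ : Continuous δ) (hdisj : ∀ s t, γ s ≠ δ t)
    {v₀ v₁ : ℂ} (hw₀ : HasLogVariation δ (γ 0) w₀) (hw₁ : HasLogVariation δ (γ 1) w₁)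
    (hv₀ : HasLogVariation γ (δ 0) v₀) (hv₁ : HasLogVariation γ (δ 1) v₁) :
    w₀ + v₁ = v₀ + w₁ := by
  obtain ⟨L, hL, hexp⟩ := exists_continuous_exp_eq (X := ℝ × ℝ)
    (f := fun x => δ x.2 - γ x.1) (by fun_prop) fun x => sub_ne_zero.mpr (hdisj x.1 x.2).symm
  have along_δ : ∀ s, HasLogVariation δ (γ s) (L (s, 1) - L (s, 0)) := fun s =>
    ⟨fun t => L (s, t), by fun_prop, fun t => hexp (s, t), rfl⟩
  have along_γ : ∀ t, HasLogVariation γ (δ t) (L (1, t) - L (0, t)) := fun t =>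
    ⟨fun s => L (s, t) + Real.pi * I, by fun_prop,
      fun s => by rw [exp_add, hexp, exp_pi_mul_I]; ring, by ring⟩
  linear_combination hw₀.unique (along_δ 0) + hv₁.unique (along_γ 1) - hv₀.unique (along_γ 0)
    - hw₁.unique (along_δ 1)

end HasLogVariation

/-- `IsTurn γ z k` says that the curve `γ` makes `k` turns around the point `z`, counted relative to
the principal values of the logarithm at the two ends of `γ - z`. -/
def IsTurn (γ : ℝ → ℂ) (z : ℂ) (k : ℤ) : Prop :=
  HasLogVariation γ z (log (γ 1 - z) - log (γ 0 - z) + 2 * Real.pi * I * k)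

lemma exists_isTurn {γ : ℝ → ℂ} {z : ℂ} (hγ : Continuous γ) (hz : ∀ t, γ t ≠ z) :
    ∃ k, IsTurn γ z k := by
  obtain ⟨L, hL, hexp⟩ := exists_continuous_exp_eq (f := fun t => γ t - z) (by fun_prop)
    fun t => sub_ne_zero.mpr (hz t)
  have hlog : ∀ t, ∃ n : ℤ, L t = log (γ t - z) + n * (2 * Real.pi * I) := fun t =>
    exp_eq_exp_iff_exists_int.mp <| by rw [hexp, exp_log (sub_ne_zero.mpr (hz t))]
  obtain ⟨m, hm⟩ := hlog 1
  obtain ⟨n, hn⟩ := hlog 0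
  refine ⟨m - n, L, hL, hexp, ?_⟩
  rw [hm, hn]
  push_cast
  ring

lemma IsTurn.sub_add_eq {γ δ : ℝ → ℂ} {a b c d : ℂ} {ka kb kc kd qac qad qbc qbd : ℤ}
    (hγ : Continuous γ) (hδ : Continuous δ) (hdisj : ∀ s t, γ s ≠ δ t)
    (ha : γ 0 = a) (hb : γ 1 = b) (hc : δ 0 = c) (hd : δ 1 = d)
    (hka : IsTurn δ a ka) (hkb : IsTurn δ b kb) (hkc : IsTurn γ c kc) (hkd : IsTurn γ d kd)
    (hac : log (c - a) - log (a - c) = Real.pi * I * (2 * qac + 1))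
    (had : log (d - a) - log (a - d) = Real.pi * I * (2 * qad + 1))
    (hbc : log (c - b) - log (b - c) = Real.pi * I * (2 * qbc + 1))
    (hbd : log (d - b) - log (b - d) = Real.pi * I * (2 * qbd + 1)) :
    ka - kb - kc + kd = qac - qad - qbc + qbd := by
  subst ha hb hc hd
  apply int_eq_of_two_pi_I_mul_eq
  push_cast
  linear_combination HasLogVariation.add_eq_add_of_disjoint hγ hδ hdisj hka hkb hkc hkd +
    hac - had - hbc + hbd

end LogVariation

section VanKampen

/-- The relation that the turns of two disjoint plane arcs `ab` and `cd` around each other's ends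
satisfy modulo 2 (van Kampen): `turn v e` is the parity of the number of turns of the arc `e` around
the vertex `v`, and `before` is a linear order of the vertices, as a 0-1 matrix. -/
def TurnsBalanced (before : V → V → ZMod 2) (turn : V → Sym2 V → ZMod 2) (a b c d : V) : Prop :=
  turn a s(c, d) + turn b s(c, d) + turn c s(a, b) + turn d s(a, b) =
    before a c + before a d + before b c + before b d

/-- A certificate for the vanishing of the van Kampen obstruction of `G` modulo 2. The matrix
`before` need not come from an order: antisymmetry is all that matters. -/
structure VanKampenCertificate (G : SimpleGraph V) where
  before : V → V → ZMod 2
  turn : V → Sym2 V → ZMod 2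
  before_add_before : ∀ ⦃a b⦄, a ≠ b → before a b + before b a = 1
  balanced : ∀ ⦃a b c d⦄, G.Adj a b → G.Adj c d → a ≠ c → a ≠ d → b ≠ c → b ≠ d →
    TurnsBalanced before turn a b c d

namespace TurnsBalanced

variable {before : V → V → ZMod 2} {turn : V → Sym2 V → ZMod 2} {a b c d : V}

lemma swap_left (h : TurnsBalanced before turn a b c d) : TurnsBalanced before turn b a c d := by
  unfold TurnsBalanced at *
  rw [Sym2.eq_swap (a := b)]
  linear_combination h

lemma swap_right (h : TurnsBalanced before turn a b c d) : TurnsBalanced before turn a b d c := by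
  unfold TurnsBalanced at *
  rw [Sym2.eq_swap (a := d)]
  linear_combination h

lemma symm (hbefore : ∀ ⦃a b⦄, a ≠ b → before a b + before b a = 1) (hac : a ≠ c) (had : a ≠ d)
    (hbc : b ≠ c) (hbd : b ≠ d) (h : TurnsBalanced before turn a b c d) :
    TurnsBalanced before turn c d a b := by
  unfold TurnsBalanced at *
  grind

end TurnsBalanced

namespace PlaneEmbedding

variable {G : SimpleGraph V} {a b c d : V} {γ δ : ℝ → ℂ}

/-- `γ` is a curve from `a` to `b` inside the arc of `ab`. The parameter ranges over all of `ℝ`, but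
only the values at `0` and `1` are prescribed. -/
structure IsCurve (E : PlaneEmbedding G) (γ : ℝ → ℂ) (a b : V) : Prop where
  continuous : Continuous γ
  zero : γ 0 = E.vtx a
  one : γ 1 = E.vtx b
  mem_arc : ∀ t, γ t ∈ E.arc a b

lemma exists_isCurve (E : PlaneEmbedding G) (h : G.Adj a b) : ∃ γ, E.IsCurve γ a b := by
  obtain ⟨γ, hγ, -, h0, h1, harc⟩ := E.arc_curve h
  refine ⟨Set.IccExtend zero_le_one (Set.domRestrict (Set.Icc 0 1) γ), ?_, ?_, ?_, fun t => ?_⟩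
  · exact (continuousOn_iff_continuous_domRestrict.mp hγ).Icc_extend'
  · rw [Set.IccExtend_left]
    exact h0
  · rw [Set.IccExtend_right]
    exact h1
  · rw [harc]
    exact ⟨_, (Set.projIcc (0 : ℝ) 1 zero_le_one t).2, rfl⟩

lemma disjoint_arc (E : PlaneEmbedding G) (hab : G.Adj a b) (hcd : G.Adj c d) (hac : a ≠ c)
    (had : a ≠ d) (hbc : b ≠ c) (hbd : b ≠ d) : Disjoint (E.arc a b) (E.arc c d) := by
  refine Set.disjoint_left.mpr fun x hx hx' => ?_
  obtain ⟨h1, h2⟩ := E.arc_inter hab hcd (by simp [hac, had]) ⟨hx, hx'⟩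
  simp only [Set.mem_insert_iff, Set.mem_singleton_iff] at h1 h2
  rcases h1 with rfl | rfl <;> rcases h2 with h | h
  exacts [hac (E.vtx_inj h), had (E.vtx_inj h), hbc (E.vtx_inj h), hbd (E.vtx_inj h)]

/-- `q a b` is `0` or `-1` according to whether `log (b - a) - log (a - b)` is `π * i` or `-π * i`,
that is, to the lexicographic order of the points `a` and `b`. -/
lemma exists_vtx_order (E : PlaneEmbedding G) : ∃ q : V → V → ℤ, ∀ a b, a ≠ b →
    Complex.log (E.vtx b - E.vtx a) - Complex.log (E.vtx a - E.vtx b) =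
      Real.pi * Complex.I * (2 * q a b + 1) := by
  have h : ∀ a b, a ≠ b → ∃ q : ℤ, Complex.log (E.vtx b - E.vtx a) -
      Complex.log (E.vtx a - E.vtx b) = Real.pi * Complex.I * (2 * q + 1) := fun a b hab => by
    rw [← neg_sub (E.vtx b)]
    exact exists_log_sub_log_neg (sub_ne_zero.mpr (E.vtx_inj.ne hab.symm))
  choose! q hq using h
  exact ⟨q, hq⟩

lemma IsCurve.exists_isTurn_vtx {E : PlaneEmbedding G} (hγ : E.IsCurve γ a b) (hab : G.Adj a b)
    {v : V} (hv : v ∉ s(a, b)) : ∃ k, IsTurn γ (E.vtx v) k :=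
  exists_isTurn hγ.continuous fun t ht =>
    hv <| Sym2.mem_iff.mpr <| E.arc_vtx hab v (ht ▸ hγ.mem_arc t)

lemma IsCurve.turnsBalanced {E : PlaneEmbedding G} {q : V → V → ℤ} {k : V → Sym2 V → ℤ}
    (hq : ∀ a b, a ≠ b → Complex.log (E.vtx b - E.vtx a) - Complex.log (E.vtx a - E.vtx b) =
      Real.pi * Complex.I * (2 * q a b + 1))
    (hγ : E.IsCurve γ a b) (hδ : E.IsCurve δ c d) (hγδ : Disjoint (E.arc a b) (E.arc c d))
    (hkγ : ∀ v ∉ s(a, b), IsTurn γ (E.vtx v) (k v s(a, b)))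
    (hkδ : ∀ v ∉ s(c, d), IsTurn δ (E.vtx v) (k v s(c, d)))
    (hac : a ≠ c) (had : a ≠ d) (hbc : b ≠ c) (hbd : b ≠ d) :
    TurnsBalanced (fun a b => (q a b : ZMod 2)) (fun v e => (k v e : ZMod 2)) a b c d := by
  have h := IsTurn.sub_add_eq hγ.continuous hδ.continuous
    (fun s t => hγδ.ne_of_mem (hγ.mem_arc s) (hδ.mem_arc t)) hγ.zero hγ.one hδ.zero hδ.one
    (hkδ a (by simp [hac, had])) (hkδ b (by simp [hbc, hbd]))
    (hkγ c (by simp [hac.symm, hbc.symm])) (hkγ d (by simp [had.symm, hbd.symm]))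
    (hq a c hac) (hq a d had) (hq b c hbc) (hq b d hbd)
  simpa [TurnsBalanced, CharTwo.sub_eq_add] using congrArg (Int.cast : ℤ → ZMod 2) h

lemma nonempty_vanKampenCertificate (E : PlaneEmbedding G) : Nonempty (VanKampenCertificate G) := by
  obtain ⟨q, hq⟩ := E.exists_vtx_order
  have hcurve : ∀ e ∈ G.edgeSet, ∃ γ, ∃ a b, e = s(a, b) ∧ E.IsCurve γ a b := by
    rintro ⟨a, b⟩ hab
    obtain ⟨γ, hγ⟩ := E.exists_isCurve hab
    exact ⟨γ, a, b, rfl, hγ⟩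
  choose! γ hγ using hcurve
  have hturn : ∀ e ∈ G.edgeSet, ∀ v ∉ e, ∃ k, IsTurn (γ e) (E.vtx v) k := by
    intro e he v hv
    obtain ⟨a, b, rfl, hcurve⟩ := hγ e he
    exact hcurve.exists_isTurn_vtx he hv
  choose! k hk using hturn
  have balanced : ∀ a b c d, G.Adj a b → G.Adj c d → a ≠ c → a ≠ d → b ≠ c → b ≠ d →
      E.IsCurve (γ s(a, b)) a b → E.IsCurve (γ s(c, d)) c d →
      TurnsBalanced (fun a b => (q a b : ZMod 2)) (fun v e => (k e v : ZMod 2)) a b c d :=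
    fun a b c d hab hcd hac had hbc hbd hγ hδ =>
      hγ.turnsBalanced (k := fun v e => k e v) hq hδ (E.disjoint_arc hab hcd hac had hbc hbd)
        (hk _ hab) (hk _ hcd) hac had hbc hbd
  refine ⟨fun a b => q a b, fun v e => k e v, fun a b hab => ?_, ?_⟩
  · have h : q a b + q b a = -1 := by
      apply int_eq_of_two_pi_I_mul_eq
      push_cast
      linear_combination -hq a b hab - hq b a hab.symm
    exact_mod_cast congrArg (Int.cast : ℤ → ZMod 2) h
  · intro a b c d hab hcd hac had hbc hbd
    obtain ⟨a', b', hab', hγ'⟩ := hγ s(a, b) hab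
    obtain ⟨c', d', hcd', hδ'⟩ := hγ s(c, d) hcd
    rcases Sym2.eq_iff.mp hab' with ⟨rfl, rfl⟩ | ⟨rfl, rfl⟩ <;>
      rcases Sym2.eq_iff.mp hcd' with ⟨rfl, rfl⟩ | ⟨rfl, rfl⟩
    · exact balanced _ _ _ _ hab hcd hac had hbc hbd hγ' hδ'
    · rw [hcd'] at hδ'
      exact (balanced _ _ _ _ hab hcd.symm had hac hbd hbc hγ' hδ').swap_right
    · rw [hab'] at hγ'
      exact (balanced _ _ _ _ hab.symm hcd hbc hbd hac had hγ' hδ').swap_left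
    · rw [hab'] at hγ'
      rw [hcd'] at hδ'
      exact (balanced _ _ _ _ hab.symm hcd.symm hbd hbc had hac hγ' hδ').swap_left.swap_right

end PlaneEmbedding

open scoped Classical in
/-- The graph obtained from `G` by contracting the edge `xy` onto the vertex `x`; the vertex `y`
stays, as an isolated vertex. -/
noncomputable def contractEdge (G : SimpleGraph V) (x y : V) : SimpleGraph V :=
  G.map (Function.update id y x)

lemma contractEdge_adj {G : SimpleGraph V} {x y a b : V} (hxy : x ≠ y)
    (h : (contractEdge G x y).Adj a b) :
    a ≠ y ∧ b ≠ y ∧ (G.Adj a b ∨ a = x ∧ G.Adj y b ∨ b = x ∧ G.Adj y a) := by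
  obtain ⟨hab, a', b', h, rfl, rfl⟩ := (SimpleGraph.map_adj' _ _ _ _).mp h
  grind [Function.update_apply, SimpleGraph.adj_comm]

namespace VanKampenCertificate

variable {G H : SimpleGraph V} {u v w x y z : V}

/-- A certificate restricts to subgraphs. -/
def mono (C : VanKampenCertificate G) (h : H ≤ G) : VanKampenCertificate H where
  before := C.before
  turn := C.turn
  before_add_before := C.before_add_before
  balanced _ _ _ _ hab hcd := C.balanced (h hab) (h hcd)

open scoped Classical in
/-- The turns of the contraction of `xy`: an edge `xb` that arises from `yb` follows the path `xyb`,
so its turns are the sum of those of `xy` and `yb`. -/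
noncomputable def contractTurn (C : VanKampenCertificate G) (x y v : V) (e : Sym2 V) : ZMod 2 :=
  if e ∈ G.edgeSet then C.turn v e else
    C.turn v (e.map (Function.update id x y)) + C.turn v s(x, y)

lemma contractTurn_of_adj (C : VanKampenCertificate G) {a b : V} (hab : G.Adj a b) :
    C.contractTurn x y v s(a, b) = C.turn v s(a, b) := by
  simp [contractTurn, hab]

lemma contractTurn_of_not_adj (C : VanKampenCertificate G) {b : V} (hbx : b ≠ x)
    (hxb : ¬ G.Adj x b) : C.contractTurn x y v s(x, b) = C.turn v s(y, b) + C.turn v s(x, y) := by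
  classical simp [contractTurn, hxb, Function.update_of_ne hbx]

lemma turnsBalanced_contractTurn (C : VanKampenCertificate G) (hxy : G.Adj x y) {b c d : V}
    (hbx : b ≠ x) (hyb : G.Adj y b) (hxb : ¬ G.Adj x b) (hcd : G.Adj c d)
    (hcy : c ≠ y) (hdy : d ≠ y) (hxc : x ≠ c) (hxd : x ≠ d) (hbc : b ≠ c) (hbd : b ≠ d) :
    TurnsBalanced C.before (C.contractTurn x y) x b c d := by
  have h₁ := C.balanced hyb hcd hcy.symm hdy.symm hbc hbd
  have h₂ := C.balanced hxy hcd hxc hxd hcy.symm hdy.symm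
  unfold TurnsBalanced at *
  rw [C.contractTurn_of_adj hcd, C.contractTurn_of_adj hcd, C.contractTurn_of_not_adj hbx hxb,
    C.contractTurn_of_not_adj hbx hxb]
  grind

/-- A certificate passes to contractions. -/
noncomputable def contract (C : VanKampenCertificate G) (hxy : G.Adj x y) :
    VanKampenCertificate (contractEdge G x y) where
  before := C.before
  turn := C.contractTurn x y
  before_add_before := C.before_add_before
  balanced a b c d hab hcd hac had hbc hbd := by
    have main {b c d} := C.turnsBalanced_contractTurn hxy (b := b) (c := c) (d := d)
    have hab' := (contractEdge G x y).ne_of_adj hab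
    have hcd' := (contractEdge G x y).ne_of_adj hcd
    obtain ⟨hay, hby, hab⟩ := contractEdge_adj hxy.ne hab
    obtain ⟨hcy, hdy, hcd⟩ := contractEdge_adj hxy.ne hcd
    by_cases h : G.Adj a b
    · by_cases h' : G.Adj c d
      · have := C.balanced h h' hac had hbc hbd
        simpa only [TurnsBalanced, C.contractTurn_of_adj h, C.contractTurn_of_adj h']
      · obtain ⟨rfl, hyd⟩ | ⟨rfl, hyc⟩ := hcd.resolve_left h'
        · exact (main hcd'.symm hyd h' h hay hby hac.symm hbc.symm had.symm hbd.symm).symm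
            C.before_add_before hac.symm hbc.symm had.symm hbd.symm
        · exact ((main hcd' hyc (mt .symm h') h hay hby had.symm hbd.symm hac.symm hbc.symm).symm
            C.before_add_before had.symm hbd.symm hac.symm hbc.symm).swap_right
    · obtain ⟨rfl, hyb⟩ | ⟨rfl, hya⟩ := hab.resolve_left h
      · exact main hab'.symm hyb h (by tauto) hcy hdy hac had hbc hbd
      · exact (main hab' hya (mt .symm h) (by tauto) hcy hdy hbc hbd hac had).swap_left

/-- The side of the triangle `uvw` on which the vertex `a` lies. -/
def side (C : VanKampenCertificate G) (u v w a : V) : ZMod 2 :=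
  C.turn a s(u, v) + C.turn a s(v, w) + C.turn a s(u, w)

lemma side_eq_of_adj (C : VanKampenCertificate G) (huv : G.Adj u v) (huw : G.Adj u w)
    (hvw : G.Adj v w) {a b : V} (hab : G.Adj a b) (hau : a ≠ u) (hav : a ≠ v) (haw : a ≠ w)
    (hbu : b ≠ u) (hbv : b ≠ v) (hbw : b ≠ w) : C.side u v w a = C.side u v w b := by
  have h₁ := C.balanced hab huv hau hav hbu hbv
  have h₂ := C.balanced hab hvw hav haw hbv hbw
  have h₃ := C.balanced hab huw hau haw hbu hbw
  unfold TurnsBalanced at h₁ h₂ h₃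
  unfold side
  grind

lemma sum_side_eq_one (C : VanKampenCertificate G) (huv : G.Adj u v)
    (hx : x ∈ G.commonNeighbors u v) (hy : y ∈ G.commonNeighbors u v)
    (hz : z ∈ G.commonNeighbors u v) (hxy : x ≠ y) (hxz : x ≠ z) (hyz : y ≠ z) :
    (C.side u v x y + C.side u v x z) + (C.side u v y x + C.side u v y z) +
      (C.side u v z x + C.side u v z y) = 1 := by
  have balanced : ∀ i ∈ G.commonNeighbors u v, ∀ j ∈ G.commonNeighbors u v, i ≠ j →
      TurnsBalanced C.before C.turn v i u j := fun i hi j hj hij =>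
    C.balanced hi.2 hj.1 huv.ne' (G.ne_of_adj hj.2) (G.ne_of_adj hi.1).symm hij
  have hxy₁ := balanced x hx y hy hxy
  have hxy₂ := balanced y hy x hx hxy.symm
  have hxz₁ := balanced x hx z hz hxz
  have hxz₂ := balanced z hz x hx hxz.symm
  have hyz₁ := balanced y hy z hz hyz
  have hyz₂ := balanced z hz y hy hyz.symm
  have := C.before_add_before hxy
  have := C.before_add_before hxz
  have := C.before_add_before hyz
  unfold TurnsBalanced at *
  unfold side
  grind

lemma exists_side_ne (C : VanKampenCertificate G) (huv : G.Adj u v)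
    (hx : x ∈ G.commonNeighbors u v) (hy : y ∈ G.commonNeighbors u v)
    (hz : z ∈ G.commonNeighbors u v) (hxy : x ≠ y) (hxz : x ≠ z) (hyz : y ≠ z) :
    ∃ w ∈ G.commonNeighbors u v, ∃ a ∈ G.commonNeighbors u v, ∃ b ∈ G.commonNeighbors u v,
      a ≠ w ∧ b ≠ w ∧ C.side u v w a ≠ C.side u v w b := by
  by_contra! h
  have hsum := C.sum_side_eq_one huv hx hy hz hxy hxz hyz
  rw [h x hx y hy z hz hxy.symm hxz.symm, h y hy x hx z hz hxy hyz.symm,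
    h z hz x hx y hy hxz hyz] at hsum
  simp [CharTwo.add_self_eq_zero] at hsum

end VanKampenCertificate

end VanKampen

open Finset

open scoped Classical

section PerfectMatching

lemma even_card_interedges_self {W : Type*} (D : SimpleGraph W) (K : Finset W) :
    Even #(D.interedges K K) := by
  rw [← ZMod.natCast_eq_zero_iff_even, card_eq_sum_ones, Nat.cast_sum]
  refine sum_involution (fun p _ => p.swap) (fun _ _ => by decide) (fun p hp _ h => ?_)
    (fun p hp => D.swap_mem_interedges_iff.mpr hp) (fun p _ => p.swap_swap)
  exact (D.mem_interedges_iff.mp hp).2.2.ne (congrArg Prod.snd h)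

variable {W : Type*} [Fintype W] {D : SimpleGraph W} {r : ℕ}

lemma card_interedges_univ_left (hD : D.IsRegularOfDegree r) (K : Finset W) :
    #(D.interedges univ K) = r * #K := by
  rw [D.interedges_def, card_filter, sum_product_right]
  simp [← D.neighborFinset_eq_filter, D.adj_comm, hD.degree_eq, mul_comm]

lemma ncard_add_two_le_of_isTutteViolator (hW : Even (Fintype.card W)) {U : Set W}
    (hU : D.IsTutteViolator U) :
    U.ncard + 2 ≤ ((⊤ : D.Subgraph).deleteVerts U).coe.oddComponents.ncard := by
  have hparity := ((⊤ : D.Subgraph).deleteVerts U).coe.odd_ncard_oddComponents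
  have hverts : ((⊤ : D.Subgraph).deleteVerts U).verts = Uᶜ := by
    ext
    simp
  have hsum : Nat.card ((⊤ : D.Subgraph).deleteVerts U).verts + U.ncard = Fintype.card W := by
    rw [hverts, Nat.card_coe_set_eq, add_comm, Set.ncard_add_ncard_compl, Nat.card_eq_fintype_card]
  have hlt : U.ncard < ((⊤ : D.Subgraph).deleteVerts U).coe.oddComponents.ncard := hU
  grind

variable [DecidableEq W]

lemma card_interedges_mem_le (D : SimpleGraph W) (B : Finset (Sym2 W)) :
    #{p ∈ D.interedges univ univ | s(p.1, p.2) ∈ B} ≤ 2 * #B := by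
  refine card_le_mul_card_image_of_maps_to (fun p hp => (mem_filter.mp hp).2) 2 ?_
  rintro ⟨a, b⟩ -
  refine (card_le_card (t := {(a, b), (b, a)}) fun p hp => ?_).trans card_le_two
  simpa [Prod.ext_iff] using (mem_filter.mp hp).2

lemma card_interedges_singleton_compl (D : SimpleGraph W) (a : W) :
    #(D.interedges {a} {a}ᶜ) = D.degree a := by
  rw [D.interedges_def, singleton_product, filter_map, card_map, ← D.card_neighborFinset_eq_degree]
  congr 1
  ext b
  simpa using fun h : D.Adj a b => h.ne'

lemma odd_card_interedges_compl (hD : D.IsRegularOfDegree r) (hr : Odd r) {K : Finset W}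
    (hK : Odd #K) : Odd #(D.interedges K Kᶜ) := by
  have hsplit : #(D.interedges K K) + #(D.interedges Kᶜ K) = r * #K := by
    rw [← card_interedges_univ_left hD, ← card_union_of_disjoint
      (D.interedges_disjoint_left disjoint_compl_right K)]
    congr 1
    ext p
    simp only [mem_union, D.mem_interedges_iff, mem_compl, mem_univ, true_and]
    tauto
  have hcomm : #(D.interedges Kᶜ K) = #(D.interedges K Kᶜ) :=
    haveI : Std.Symm D.Adj := D.symm
    Rel.card_interedges_comm _ _
  have hself := even_card_interedges_self D K
  have hodd : Odd (r * #K) := hr.mul hK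
  grind

lemma mul_card_parts_le {ι : Type*} (hD : D.IsRegularOfDegree r) {U : Finset W}
    {B : Finset (Sym2 W)} {C : Finset ι} {K : ι → Finset W}
    (hdisj : (C : Set ι).PairwiseDisjoint K)
    (hcut : ∀ c ∈ C, r ≤ #(D.interedges (K c) (K c)ᶜ))
    (hclosed : ∀ c ∈ C, ∀ s ∈ K c, ∀ t ∉ K c, t ∉ U → D.Adj s t → s(s, t) ∈ B) :
    r * #C ≤ r * #U + 2 * #B :=
  calc r * #C = ∑ _ ∈ C, r := by simp [mul_comm]
    _ ≤ ∑ c ∈ C, #(D.interedges (K c) (K c)ᶜ) := sum_le_sum hcut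
    _ = #(C.biUnion fun c => D.interedges (K c) (K c)ᶜ) := by
        refine (card_biUnion fun c hc d hd hcd => disjoint_left.mpr fun p hp hp' => ?_).symm
        rw [D.mem_interedges_iff] at hp hp'
        exact disjoint_left.mp (hdisj hc hd hcd) hp.1 hp'.1
    _ ≤ #(D.interedges univ U ∪ {p ∈ D.interedges univ univ | s(p.1, p.2) ∈ B}) := by
        refine card_le_card <| biUnion_subset.mpr fun c hc p hp => ?_
        obtain ⟨hs, ht, hst⟩ := D.mem_interedges_iff.mp hp
        have := hclosed c hc _ hs _ (mem_compl.mp ht)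
        simp only [mem_union, mem_filter, D.mem_interedges_iff, mem_univ, true_and]
        tauto
    _ ≤ r * #U + 2 * #B := by
        grw [card_union_le, card_interedges_univ_left hD, card_interedges_mem_le]

lemma exists_isPerfectMatching_deleteEdges (hD : D.IsRegularOfDegree r)
    (hcut : ∀ K, Odd #K → r ≤ #(D.interedges K Kᶜ)) {B : Finset (Sym2 W)} (hB : #B < r) :
    ∃ M : (D.deleteEdges (B : Set (Sym2 W))).Subgraph, M.IsPerfectMatching := by
  have hW : Even (Fintype.card W) := by
    by_contra h
    have := hcut univ (by simpa using h)
    simp [D.interedges_def] at this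
    omega
  refine SimpleGraph.tutte.mpr fun U hU => ?_
  set H := ((⊤ : (D.deleteEdges (B : Set (Sym2 W))).Subgraph).deleteVerts U).coe
  have hmany : U.ncard + 2 ≤ H.oddComponents.ncard := ncard_add_two_le_of_isTutteViolator hW hU
  let K : H.ConnectedComponent → Finset W := fun c => (Subtype.val '' c.supp).toFinset
  have hKcard : ∀ c, #(K c) = c.supp.ncard := fun c => by
    rw [← Set.ncard_eq_toFinset_card', Set.ncard_image_of_injective _ Subtype.val_injective]
  have hfew : r * #H.oddComponents.toFinset ≤ r * #U.toFinset + 2 * #B := by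
    refine mul_card_parts_le (K := K) hD (fun c _ d _ hcd => ?_) (fun c hc => hcut _ ?_)
      (fun c _ s hs t ht htU hst => ?_)
    · refine disjoint_left.mpr fun t hc hd => hcd ?_
      obtain ⟨t, htc, rfl⟩ := Set.mem_toFinset.mp hc
      obtain ⟨t', htd, h⟩ := Set.mem_toFinset.mp hd
      rw [Subtype.val_injective h] at htd
      exact ConnectedComponent.eq_of_common_vertex htc htd
    · rw [hKcard]
      exact (Set.mem_toFinset (s := H.oddComponents)).mp hc
    · obtain ⟨s, hsc, rfl⟩ := Set.mem_toFinset.mp hs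
      by_contra hB
      have htU : t ∉ U := mt Set.mem_toFinset.mpr htU
      have hadj : H.Adj s ⟨t, by simp [htU]⟩ := by
        have := s.2.2
        simp [H, this, htU, hst, hB]
      exact ht (Set.mem_toFinset.mpr ⟨_, c.mem_supp_of_adj_mem_supp hsc hadj, rfl⟩)
  rw [← Set.ncard_eq_toFinset_card', ← Set.ncard_eq_toFinset_card'] at hfew
  nlinarith

/-- Petersen's theorem in the form of Plesník, with Seymour's condition on odd cuts: every edge of
an `r`-graph is in a perfect matching. -/
lemma exists_isPerfectMatching_adj (hD : D.IsRegularOfDegree r)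
    (hcut : ∀ K, Odd #K → r ≤ #(D.interedges K Kᶜ)) {a b : W} (hab : D.Adj a b) :
    ∃ M : D.Subgraph, M.IsPerfectMatching ∧ M.Adj a b := by
  let B := (D.incidenceFinset a).erase s(a, b)
  have hB : #B < r := by
    have ha : s(a, b) ∈ D.incidenceFinset a := by simp [hab]
    rw [← hD a, ← D.card_incidenceFinset_eq_degree]
    exact card_erase_lt_of_mem ha
  obtain ⟨M, hM⟩ := exists_isPerfectMatching_deleteEdges hD hcut hB
  let hle := D.deleteEdges_le (B : Set (Sym2 W))
  have hmap : (M.map (.ofLE hle)).IsPerfectMatching :=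
    ⟨hM.1.map_ofLE hle, by simpa [Subgraph.isSpanning_iff] using hM.2.verts_eq_univ⟩
  refine ⟨_, hmap, ?_⟩
  obtain ⟨c, hac, -⟩ := Subgraph.isPerfectMatching_iff.mp hM a
  have hcb : c = b := by
    have := M.adj_sub hac
    simp_all [B]
  exact ⟨a, c, hac, rfl, hcb⟩

end PerfectMatching

section Triangles

variable {G : SimpleGraph V} {t : Finset V} {e f g : Sym2 V} {u v : V}

lemma exists_mem_commonNeighbors_eq (ht : G.IsNClique 3 t) (hu : u ∈ t) (hv : v ∈ t)
    (huv : u ≠ v) : ∃ w ∈ G.commonNeighbors u v, t = {u, v, w} := by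
  have hvt : v ∈ t.erase u := mem_erase.mpr ⟨huv.symm, hv⟩
  obtain ⟨w, hw⟩ : ∃ w, (t.erase u).erase v = {w} := by
    rw [← card_eq_one, card_erase_of_mem hvt, card_erase_of_mem hu, ht.card_eq]
  have hwt : w ∈ (t.erase u).erase v := hw ▸ mem_singleton_self w
  obtain ⟨hwv, hwu, hwt⟩ : w ≠ v ∧ w ≠ u ∧ w ∈ t := by simpa only [mem_erase] using hwt
  refine ⟨w, ⟨ht.isClique hu hwt hwu.symm, ht.isClique hv hwt hwv.symm⟩, ?_⟩
  rw [← hw, insert_erase hvt, insert_erase hu]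

/-- The type of triangles of `G`. -/
abbrev Triangle (G : SimpleGraph V) := {t : Finset V // G.IsNClique 3 t}

lemma edge_eq_of_mem_two_triangles {s t : Triangle G} (hst : s ≠ t)
    (he : e ∈ G.edgeSet) (hes : e ∈ s.1.sym2) (het : e ∈ t.1.sym2)
    (hf : f ∈ G.edgeSet) (hfs : f ∈ s.1.sym2) (hft : f ∈ t.1.sym2) : e = f := by
  have hinter : #(s.1 ∩ t.1) ≤ 2 := by
    have : #(s.1 ∩ t.1) < #s.1 := card_lt_card <| inter_subset_left.ssubset_of_ne fun h => hst <|
      Subtype.ext <| eq_of_subset_of_card_le (inter_eq_left.mp h)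
        (t.2.card_eq.trans s.2.card_eq.symm).le
    rw [s.2.card_eq] at this
    omega
  have key : ∀ e ∈ G.edgeSet, e ∈ s.1.sym2 → e ∈ t.1.sym2 → e.toFinset = s.1 ∩ t.1 := by
    intro e he hes het
    refine eq_of_subset_of_card_le (fun v hv => ?_) ?_
    · have hv := Sym2.mem_toFinset.mp hv
      exact mem_inter.mpr ⟨mem_sym2_iff.mp hes v hv, mem_sym2_iff.mp het v hv⟩
    · rwa [Sym2.card_toFinset_of_not_isDiag e (G.not_isDiag_of_mem_edgeSet he)]
  refine Sym2.ext fun v => ?_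
  rw [← Sym2.mem_toFinset, key e he hes het, ← Sym2.mem_toFinset, key f hf hfs hft]

/-- The dual graph of the triangles of `G`: two of them are adjacent if they share an edge. -/
def triangleGraph (G : SimpleGraph V) : SimpleGraph (Triangle G) where
  Adj s t := s ≠ t ∧ ∃ e ∈ G.edgeSet, e ∈ s.1.sym2 ∧ e ∈ t.1.sym2
  symm := ⟨fun _ _ ⟨hst, e, he, hes, het⟩ => ⟨hst.symm, e, he, het, hes⟩⟩
  loopless := ⟨fun _ h => h.1 rfl⟩

variable [Fintype V]

lemma card_edges_isNClique {n : ℕ} (ht : G.IsNClique n t) :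
    #{e ∈ G.edgeFinset | e ∈ t.sym2} = n.choose 2 := by
  rw [← ht.card_eq, ← Sym2.card_image_offDiag]
  congr 1
  ext e
  induction e with | _ a b
  simp only [mem_filter, SimpleGraph.mem_edgeFinset, SimpleGraph.mem_edgeSet, mk_mem_sym2_iff,
    mem_image, mem_offDiag, Prod.exists]
  constructor
  · rintro ⟨hab, ha, hb⟩
    exact ⟨a, b, ⟨ha, hb, hab.ne⟩, rfl⟩
  · rintro ⟨c, d, ⟨hc, hd, hcd⟩, h⟩
    have := ht.isClique hc hd hcd
    rcases Sym2.eq_iff.mp h with ⟨rfl, rfl⟩ | ⟨rfl, rfl⟩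
    exacts [⟨this, hc, hd⟩, ⟨this.symm, hd, hc⟩]

lemma even_card_edges_triangle_at (ht : G.IsNClique 3 t) (v : V) :
    Even #{e ∈ {e ∈ G.edgeFinset | v ∈ e} | e ∈ t.sym2} := by
  by_cases hv : v ∈ t
  · have : ({e ∈ {e ∈ G.edgeFinset | v ∈ e} | e ∈ t.sym2} : Finset (Sym2 V)) =
        (t.erase v).image (s(v, ·)) := by
      ext e
      simp only [mem_filter, SimpleGraph.mem_edgeFinset, mem_image, mem_erase]
      constructor
      · rintro ⟨⟨he, w, rfl⟩, hw⟩
        exact ⟨w, ⟨((SimpleGraph.mem_edgeSet _).mp he).ne', (mk_mem_sym2_iff.mp hw).2⟩, rfl⟩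
      · rintro ⟨w, ⟨hwv, hw⟩, rfl⟩
        exact ⟨⟨ht.isClique hv hw hwv.symm, by simp⟩, by simp [hv, hw]⟩
    rw [this, card_image_of_injective _ fun _ _ => Sym2.congr_right.mp, card_erase_of_mem hv,
      ht.card_eq]
    decide
  · rw [filter_false_of_mem fun e he het => hv (mem_sym2_iff.mp het v (mem_filter.mp he).2)]
    exact Even.zero

/-- The number of triangles that contain the edge `e`. -/
noncomputable def triangleDegree (G : SimpleGraph V) (e : Sym2 V) : ℕ :=
  #{t : Triangle G | e ∈ t.1.sym2}

lemma triangleDegree_of_adj (huv : G.Adj u v) :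
    triangleDegree G s(u, v) = #(G.commonNeighbors u v).toFinset := by
  symm
  refine card_bij (fun w hw => ⟨{u, v, w}, SimpleGraph.is3Clique_triple_iff.mpr
    ⟨huv, (Set.mem_toFinset (s := G.commonNeighbors u v)).mp hw⟩⟩)
    (fun w hw => by simp) (fun w hw w' _ h => ?_) fun t ht => ?_
  · have hww' : w ∈ ({u, v, w'} : Finset V) := (Subtype.ext_iff.mp h).subset (by simp)
    obtain ⟨huw, hvw⟩ := Set.mem_toFinset.mp hw
    simpa [huw.ne', hvw.ne'] using hww'
  · have ht := mk_mem_sym2_iff.mp (mem_filter.mp ht).2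
    obtain ⟨w, hw, h⟩ := exists_mem_commonNeighbors_eq t.2 ht.1 ht.2 huv.ne
    exact ⟨w, Set.mem_toFinset.mpr hw, Subtype.ext h.symm⟩

lemma sum_triangleDegree (G : SimpleGraph V) :
    ∑ e ∈ G.edgeFinset, triangleDegree G e = 3 * Fintype.card (Triangle G) := by
  have h := sum_card_bipartiteAbove_eq_sum_card_bipartiteBelow (s := G.edgeFinset)
    (t := (univ : Finset (Triangle G))) fun e t => e ∈ t.1.sym2
  simp only [bipartiteAbove, bipartiteBelow, card_edges_isNClique (Subtype.prop _)] at h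
  rw [sum_const, card_univ, smul_eq_mul, mul_comm] at h
  exact h

/-- Every sum of triangles modulo 2 is a cycle, hence never a single edge. -/
lemma card_odd_edges_ne_one (K : Finset (Triangle G)) :
    #{e ∈ G.edgeFinset | Odd #{t ∈ K | e ∈ t.1.sym2}} ≠ 1 := by
  intro hone
  obtain ⟨e, he⟩ := card_eq_one.mp hone
  induction e with | _ v w
  have heven : Even (∑ t ∈ K, #{e ∈ {e ∈ G.edgeFinset | v ∈ e} | e ∈ t.1.sym2}) :=
    even_sum _ fun t _ => even_card_edges_triangle_at t.2 v
  have hswap := sum_card_bipartiteAbove_eq_sum_card_bipartiteBelow (s := K)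
    (t := {e ∈ G.edgeFinset | v ∈ e}) fun t e => e ∈ t.1.sym2
  simp only [bipartiteAbove, bipartiteBelow] at hswap
  rw [hswap, ← Nat.not_odd_iff_even, odd_sum_iff_odd_card_odd, filter_filter] at heven
  refine heven ?_
  simp only [and_comm (a := v ∈ _)]
  rw [← filter_filter, he, filter_singleton, if_pos (Sym2.mem_mk_left v w), card_singleton]
  exact odd_one

lemma triangleDegree_ne_one_of_forall_ne (hg : g ∈ G.edgeFinset)
    (h2 : ∀ e ∈ G.edgeFinset, e ≠ g → triangleDegree G e = 2) : triangleDegree G g ≠ 1 := by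
  intro hone
  have hodd : {e ∈ G.edgeFinset | Odd (triangleDegree G e)} = {g} := by
    ext e
    rw [mem_filter, mem_singleton]
    refine ⟨fun ⟨he, hodd⟩ => not_imp_comm.mp (h2 e he) fun h => ?_, ?_⟩
    · rw [h] at hodd
      exact absurd hodd (by decide)
    · rintro rfl
      exact ⟨hg, hone ▸ odd_one⟩
  exact card_odd_edges_ne_one univ (card_eq_one.mpr ⟨g, hodd⟩)

lemma card_interedges_triangleGraph {K L : Finset (Triangle G)} (hKL : Disjoint K L) :
    #((triangleGraph G).interedges K L) =
      ∑ e ∈ G.edgeFinset, #{t ∈ K | e ∈ t.1.sym2} * #{t ∈ L | e ∈ t.1.sym2} := by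
  let shares (e : Sym2 V) (p : Triangle G × Triangle G) := e ∈ p.1.1.sym2 ∧ e ∈ p.2.1.sym2
  have hunique : ∀ p ∈ (triangleGraph G).interedges K L,
      #(bipartiteBelow shares G.edgeFinset p) = 1 := by
    intro p hp
    obtain ⟨-, -, hne, e, he, hes⟩ := (triangleGraph G).mem_interedges_iff.mp hp
    refine card_eq_one.mpr ⟨e, eq_singleton_iff_unique_mem.mpr ⟨?_, fun f hf => ?_⟩⟩
    · exact (mem_bipartiteBelow _).mpr ⟨SimpleGraph.mem_edgeFinset.mpr he, hes⟩
    · obtain ⟨hf, hfs⟩ := (mem_bipartiteBelow _).mp hf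
      exact edge_eq_of_mem_two_triangles hne (SimpleGraph.mem_edgeFinset.mp hf) hfs.1 hfs.2 he
        hes.1 hes.2
  rw [card_eq_sum_ones, ← sum_congr rfl hunique,
    ← sum_card_bipartiteAbove_eq_sum_card_bipartiteBelow]
  refine sum_congr rfl fun e he => ?_
  rw [← card_product]
  congr 1
  ext ⟨s, t⟩
  simp only [bipartiteAbove, mem_filter, mem_product, (triangleGraph G).mem_interedges_iff]
  constructor
  · tauto
  · rintro ⟨⟨hs, hes⟩, ht, het⟩
    exact ⟨⟨hs, ht, fun h => disjoint_left.mp hKL hs (h ▸ ht), e,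
      SimpleGraph.mem_edgeFinset.mp he, hes, het⟩, hes, het⟩

/-- The cut of the dual graph around `K` is the boundary of the sum of the triangles in `K`. -/
lemma card_interedges_triangleGraph_compl (h2 : ∀ e ∈ G.edgeFinset, triangleDegree G e = 2)
    (K : Finset (Triangle G)) :
    #((triangleGraph G).interedges K Kᶜ) =
      #{e ∈ G.edgeFinset | Odd #{t ∈ K | e ∈ t.1.sym2}} := by
  rw [card_interedges_triangleGraph disjoint_compl_right, card_filter]
  refine sum_congr rfl fun e he => ?_
  have hsum : #{t ∈ K | e ∈ t.1.sym2} + #{t ∈ Kᶜ | e ∈ t.1.sym2} = 2 := by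
    rw [← h2 e he, triangleDegree, ← card_union_of_disjoint
      (disjoint_filter_filter disjoint_compl_right), ← filter_union, union_compl]
  generalize #{t ∈ K | e ∈ t.1.sym2} = k at hsum ⊢
  generalize #{t ∈ Kᶜ | e ∈ t.1.sym2} = l at hsum ⊢
  obtain ⟨rfl, rfl⟩ | ⟨rfl, rfl⟩ | ⟨rfl, rfl⟩ :
    k = 0 ∧ l = 2 ∨ k = 1 ∧ l = 1 ∨ k = 2 ∧ l = 0 := by omega
  all_goals decide

lemma isRegularOfDegree_triangleGraph (h2 : ∀ e ∈ G.edgeFinset, triangleDegree G e = 2) :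
    (triangleGraph G).IsRegularOfDegree 3 := by
  intro t
  have hodd : ∀ e, Odd #{s ∈ {t} | e ∈ s.1.sym2} ↔ e ∈ t.1.sym2 := fun e => by
    rw [filter_singleton]
    split_ifs with he <;> simp only [he, card_singleton, card_empty] <;> decide
  rw [← card_interedges_singleton_compl, card_interedges_triangleGraph_compl h2]
  simp only [hodd]
  exact card_edges_isNClique t.2

lemma three_le_card_interedges_triangleGraph (h2 : ∀ e ∈ G.edgeFinset, triangleDegree G e = 2)
    {K : Finset (Triangle G)} (hK : Odd #K) : 3 ≤ #((triangleGraph G).interedges K Kᶜ) := by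
  have hodd := odd_card_interedges_compl (isRegularOfDegree_triangleGraph h2) (by decide) hK
  have hne : #((triangleGraph G).interedges K Kᶜ) ≠ 1 :=
    card_interedges_triangleGraph_compl h2 K ▸ card_odd_edges_ne_one K
  grind

/-- The edges across which the partial matching `M` of the triangles matches two triangles. -/
noncomputable def matchedEdges (M : (triangleGraph G).Subgraph) : Finset (Sym2 V) :=
  {e ∈ G.edgeFinset | ∃ s t, M.Adj s t ∧ e ∈ s.1.sym2 ∧ e ∈ t.1.sym2}

lemma mem_matchedEdges {M : (triangleGraph G).Subgraph} : e ∈ matchedEdges M ↔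
    e ∈ G.edgeFinset ∧ ∃ s t, M.Adj s t ∧ e ∈ s.1.sym2 ∧ e ∈ t.1.sym2 := by
  simp only [matchedEdges, mem_filter]

lemma isTriangleTransversal_matchedEdges {M : (triangleGraph G).Subgraph}
    (hM : M.IsPerfectMatching) : IsTriangleTransversal G (matchedEdges M) := by
  refine ⟨fun e he => SimpleGraph.mem_edgeFinset.mp (mem_matchedEdges.mp he).1, fun t ht => ?_⟩
  obtain ⟨s, hts, -⟩ := Subgraph.isPerfectMatching_iff.mp hM ⟨t, ht⟩
  obtain ⟨-, e, he, het, hes⟩ := M.adj_sub hts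
  exact ⟨e, mem_matchedEdges.mpr ⟨SimpleGraph.mem_edgeFinset.mpr he, _, _, hts, het, hes⟩,
    mem_sym2_iff.mp het⟩

lemma card_triangle_matchedEdges_le (h2 : ∀ e ∈ G.edgeFinset, triangleDegree G e = 2)
    {M : (triangleGraph G).Subgraph} (hM : M.IsMatching) (t : Triangle G) :
    #{e ∈ matchedEdges M | e ∈ t.1.sym2} ≤ 1 := by
  have hpartner : ∀ e ∈ matchedEdges M, e ∈ t.1.sym2 → ∃ s, M.Adj t s ∧ e ∈ s.1.sym2 := by
    intro e he het
    obtain ⟨he, s, s', hss', hes, hes'⟩ := mem_matchedEdges.mp he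
    have hpair : {s, s'} = ({t | e ∈ t.1.sym2} : Finset (Triangle G)) := by
      refine eq_of_subset_of_card_le ?_ ?_
      · simp only [insert_subset_iff, singleton_subset_iff, mem_filter_univ]
        exact ⟨hes, hes'⟩
      · rw [card_pair (M.adj_sub hss').ne]
        exact (h2 e he).le
    have ht : t ∈ ({s, s'} : Finset (Triangle G)) := hpair ▸ mem_filter.mpr ⟨mem_univ _, het⟩
    obtain rfl | rfl : t = s ∨ t = s' := by simpa only [mem_insert, mem_singleton] using ht
    exacts [⟨s', hss', hes'⟩, ⟨s, hss'.symm, hes⟩]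
  refine card_le_one.mpr fun e he f hf => ?_
  obtain ⟨he, het⟩ := mem_filter.mp he
  obtain ⟨hf, hft⟩ := mem_filter.mp hf
  obtain ⟨s, hts, hes⟩ := hpartner e he het
  obtain ⟨s', hts', hfs'⟩ := hpartner f hf hft
  obtain rfl := hM.eq_of_adj_left hts hts'
  exact edge_eq_of_mem_two_triangles (M.adj_sub hts).ne
    (SimpleGraph.mem_edgeFinset.mp (mem_matchedEdges.mp he).1) het hes
    (SimpleGraph.mem_edgeFinset.mp (mem_matchedEdges.mp hf).1) hft hfs'

lemma card_matchedEdges_mul_two_le (h2 : ∀ e ∈ G.edgeFinset, triangleDegree G e = 2)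
    {M : (triangleGraph G).Subgraph} (hM : M.IsMatching) :
    #(matchedEdges M) * 2 ≤ Fintype.card (Triangle G) := by
  have h := card_mul_le_card_mul (s := matchedEdges M) (t := univ)
    (fun e (t : Triangle G) => e ∈ t.1.sym2) (fun e he => (h2 e (mem_matchedEdges.mp he).1).ge)
    fun t _ => card_triangle_matchedEdges_le h2 hM t
  rwa [mul_one, card_univ] at h

lemma exists_isTriangleTransversal_of_triangleDegree_eq_two
    (h2 : ∀ e ∈ G.edgeFinset, triangleDegree G e = 2) (hg : g ∈ G.edgeFinset) :
    ∃ X, IsTriangleTransversal G X ∧ g ∈ X ∧ 3 * #X ≤ #G.edgeFinset := by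
  obtain ⟨s, hs, t, ht, hst⟩ := one_lt_card.mp ((h2 g hg).symm ▸ one_lt_two)
  have hgs : g ∈ s.1.sym2 := (mem_filter.mp hs).2
  have hgt : g ∈ t.1.sym2 := (mem_filter.mp ht).2
  obtain ⟨M, hM, hMst⟩ := exists_isPerfectMatching_adj (isRegularOfDegree_triangleGraph h2)
    (fun _ => three_le_card_interedges_triangleGraph h2)
    ⟨hst, g, SimpleGraph.mem_edgeFinset.mp hg, hgs, hgt⟩
  refine ⟨matchedEdges M, isTriangleTransversal_matchedEdges hM,
    mem_matchedEdges.mpr ⟨hg, s, t, hMst, hgs, hgt⟩, ?_⟩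
  have hX := card_matchedEdges_mul_two_le h2 hM.1
  have hsum := sum_triangleDegree G
  rw [sum_congr rfl h2, sum_const, smul_eq_mul] at hsum
  omega

end Triangles

section Contraction

variable {G : SimpleGraph V} {x y a b : V} {X Y : Finset (Sym2 V)}

lemma contractEdge_adj_update (hab : G.Adj a b) (h : s(a, b) ≠ s(x, y)) :
    (contractEdge G x y).Adj (Function.update id y x a) (Function.update id y x b) := by
  refine (SimpleGraph.map_adj' _ _ _ _).mpr ⟨fun heq => ?_, a, b, hab, rfl, rfl⟩
  grind [Function.update_apply, hab.ne]

lemma exists_mem_commonNeighbors_of_map_eq {e f : Sym2 V} (he : e ∈ G.edgeSet) (hf : f ∈ G.edgeSet)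
    (hef : e ≠ f) (h : e.map (Function.update id y x) = f.map (Function.update id y x)) :
    ∃ z ∈ G.commonNeighbors x y,
      e.map (Function.update id y x) = s(x, z) ∧ (e = s(y, z) ∨ f = s(y, z)) := by
  induction e with | _ a b
  induction f with | _ c d
  have key : ∀ {p q}, Function.update id y x p = Function.update id y x q →
      p = q ∨ p = x ∧ q = y ∨ p = y ∧ q = x := by grind [Function.update_apply]
  have hab : G.Adj a b := he
  wlog hac : Function.update id y x a = Function.update id y x c ∧
    Function.update id y x b = Function.update id y x d generalizing c d
  · have had := (Sym2.eq_iff.mp h).resolve_left hac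
    rw [Sym2.eq_swap (a := c)] at hf hef h ⊢
    exact this d c hf hef h had
  have hcd : G.Adj c d := hf
  rw [Sym2.map_mk]
  rcases key hac.1 with rfl | ⟨rfl, rfl⟩ | ⟨rfl, rfl⟩
  · rcases key hac.2 with rfl | ⟨rfl, rfl⟩ | ⟨rfl, rfl⟩
    · exact absurd rfl hef
    · exact ⟨a, ⟨hab.symm, hcd.symm⟩, by grind [Function.update_apply, hcd.ne], Or.inr Sym2.eq_swap⟩
    · exact ⟨a, ⟨hcd.symm, hab.symm⟩, by grind [Function.update_apply, hab.ne], Or.inl Sym2.eq_swap⟩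
  · have hbd : b = d := by grind [hab.ne, hcd.ne]
    exact ⟨b, ⟨hab, hbd ▸ hcd⟩, by grind [Function.update_apply, hcd.ne], Or.inr (by rw [hbd])⟩
  · have hbd : b = d := by grind [hab.ne, hcd.ne]
    exact ⟨b, ⟨hbd ▸ hcd, hab⟩, by grind [Function.update_apply, hab.ne], Or.inl rfl⟩

variable [Fintype V]

/-- The edges of `G` that the contraction of `xy` maps into `Y`. -/
noncomputable def liftEdges (G : SimpleGraph V) (x y : V) (Y : Finset (Sym2 V)) :
    Finset (Sym2 V) :=
  {e ∈ G.edgeFinset | e.map (Function.update id y x) ∈ Y}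

lemma mk_mem_liftEdges : s(a, b) ∈ liftEdges G x y Y ↔
    G.Adj a b ∧ s(Function.update id y x a, Function.update id y x b) ∈ Y := by
  simp [liftEdges]

lemma coe_liftEdges_subset : (liftEdges G x y Y : Set (Sym2 V)) ⊆ G.edgeSet := fun _ he =>
  SimpleGraph.mem_edgeFinset.mp (mem_filter.mp he).1

lemma card_liftEdges_le (G : SimpleGraph V) (x y : V) (Y : Finset (Sym2 V)) :
    #(liftEdges G x y Y) ≤ #Y + #{z ∈ (G.commonNeighbors x y).toFinset | s(x, z) ∈ Y} := by
  set Z := {z ∈ (G.commonNeighbors x y).toFinset | s(x, z) ∈ Y}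
  have hinj : Set.InjOn (Sym2.map (Function.update id y x))
      (liftEdges G x y Y \ Z.image (s(y, ·)) : Finset (Sym2 V)) := by
    intro e he f hf hef
    obtain ⟨he, heZ⟩ := mem_sdiff.mp he
    obtain ⟨hf, hfZ⟩ := mem_sdiff.mp hf
    by_contra hne
    obtain ⟨z, hz, hxz, hyz⟩ := exists_mem_commonNeighbors_of_map_eq (coe_liftEdges_subset he)
      (coe_liftEdges_subset hf) hne hef
    have hzZ : s(y, z) ∈ Z.image (s(y, ·)) := mem_image_of_mem _ <|
      mem_filter.mpr ⟨Set.mem_toFinset.mpr hz, hxz ▸ (mem_filter.mp he).2⟩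
    rcases hyz with rfl | rfl
    exacts [heZ hzZ, hfZ hzZ]
  have hmaps : ∀ e ∈ liftEdges G x y Y \ Z.image (s(y, ·)),
      e.map (Function.update id y x) ∈ Y := fun e he =>
    (mem_filter.mp (mem_sdiff.mp he).1).2
  calc #(liftEdges G x y Y)
      ≤ #(liftEdges G x y Y \ Z.image (s(y, ·))) + #(Z.image (s(y, ·))) :=
        card_le_card_sdiff_add_card
    _ ≤ #Y + #Z := add_le_add (card_le_card_of_injOn _ hmaps hinj) card_image_le

lemma card_edgeFinset_le_contractEdge (hxy : G.Adj x y) :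
    #G.edgeFinset ≤ #(contractEdge G x y).edgeFinset + triangleDegree G s(x, y) + 1 := by
  have hsub : G.edgeFinset ⊆ insert s(x, y) (liftEdges G x y (contractEdge G x y).edgeFinset) := by
    intro e he
    induction e with | _ a b
    have hab : G.Adj a b := SimpleGraph.mem_edgeFinset.mp he
    refine mem_insert.mpr (or_iff_not_imp_left.mpr fun h => mk_mem_liftEdges.mpr ⟨hab, ?_⟩)
    exact SimpleGraph.mem_edgeFinset.mpr (contractEdge_adj_update hab h)
  grw [hsub, card_insert_le, card_liftEdges_le, card_filter_le, triangleDegree_of_adj hxy]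

lemma exists_mem_liftEdges_of_isNClique
    (hX : IsTriangleTransversal (contractEdge G x y) X) {t : Finset V} (ht : G.IsNClique 3 t)
    (hxyt : ¬ (x ∈ t ∧ y ∈ t)) : ∃ e ∈ liftEdges G x y X, ∀ v ∈ e, v ∈ t := by
  have hadj : ∀ a ∈ t, ∀ b ∈ t, a ≠ b →
      (contractEdge G x y).Adj (Function.update id y x a) (Function.update id y x b) := by
    refine fun a ha b hb hab => contractEdge_adj_update (ht.isClique ha hb hab) fun h => hxyt ?_
    rcases Sym2.eq_iff.mp h with ⟨rfl, rfl⟩ | ⟨rfl, rfl⟩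
    exacts [⟨ha, hb⟩, ⟨hb, ha⟩]
  have hinj : Set.InjOn (Function.update id y x) t := fun a ha b hb h =>
    not_imp_comm.mp (hadj a ha b hb) (by simp [h])
  have hclique : (contractEdge G x y).IsNClique 3 (t.image (Function.update id y x)) := by
    refine ⟨?_, by rw [card_image_of_injOn hinj, ht.card_eq]⟩
    rw [coe_image]
    rintro _ ⟨a, ha, rfl⟩ _ ⟨b, hb, rfl⟩ hab
    exact hadj a ha b hb (ne_of_apply_ne _ hab)
  obtain ⟨e, he, het⟩ := hX.2 _ hclique
  induction e with | _ p q
  obtain ⟨a, ha, rfl⟩ := mem_image.mp (het p (Sym2.mem_mk_left _ _))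
  obtain ⟨b, hb, rfl⟩ := mem_image.mp (het q (Sym2.mem_mk_right _ _))
  have hab : a ≠ b := ne_of_apply_ne _ ((SimpleGraph.mem_edgeSet _).mp (hX.1 he)).ne
  exact ⟨s(a, b), mk_mem_liftEdges.mpr ⟨ht.isClique ha hb hab, he⟩, by simp [ha, hb]⟩

lemma isTriangleTransversal_liftEdges (hxy : G.Adj x y)
    (hX : IsTriangleTransversal (contractEdge G x y) X)
    (hN : ∀ z ∈ G.commonNeighbors x y, s(x, z) ∈ X) :
    IsTriangleTransversal G (liftEdges G x y X) := by
  refine ⟨coe_liftEdges_subset, fun t ht => ?_⟩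
  by_cases hxyt : x ∈ t ∧ y ∈ t
  · obtain ⟨z, hz, rfl⟩ := exists_mem_commonNeighbors_eq ht hxyt.1 hxyt.2 hxy.ne
    refine ⟨s(x, z), mk_mem_liftEdges.mpr ⟨hz.1, ?_⟩, by simp⟩
    rw [Function.update_of_ne hxy.ne, Function.update_of_ne (G.ne_of_adj hz.2).symm]
    exact hN z hz
  · exact exists_mem_liftEdges_of_isNClique hX ht hxyt

lemma isTriangleTransversal_insert_liftEdges (hxy : G.Adj x y)
    (hX : IsTriangleTransversal (contractEdge G x y) X) :
    IsTriangleTransversal G (insert s(x, y) (liftEdges G x y X)) := by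
  refine ⟨?_, fun t ht => ?_⟩
  · rw [coe_insert]
    exact Set.insert_subset hxy coe_liftEdges_subset
  · by_cases hxyt : x ∈ t ∧ y ∈ t
    · exact ⟨_, mem_insert_self _ _, by simpa using hxyt⟩
    · obtain ⟨e, he, het⟩ := exists_mem_liftEdges_of_isNClique hX ht hxyt
      exact ⟨e, mem_insert_of_mem he, het⟩

lemma card_insert_liftEdges_le (hN : ∀ z ∈ G.commonNeighbors x y, s(x, z) ∉ X) :
    #(insert s(x, y) (liftEdges G x y X)) ≤ #X + 1 := by
  grw [card_insert_le, card_liftEdges_le,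
    filter_false_of_mem fun z hz => hN z (Set.mem_toFinset.mp hz), card_empty]

lemma exists_isTriangleTransversal_of_contractEdge (hxy : G.Adj x y)
    (hle : triangleDegree G s(x, y) ≤ 1) (hX : IsTriangleTransversal (contractEdge G x y) X) :
    ∃ X', IsTriangleTransversal G X' ∧ liftEdges G x y X ⊆ X' ∧ #X' ≤ #X + 1 := by
  rw [triangleDegree_of_adj hxy] at hle
  by_cases hN : ∀ z ∈ G.commonNeighbors x y, s(x, z) ∈ X
  · refine ⟨_, isTriangleTransversal_liftEdges hxy hX hN, Subset.rfl, ?_⟩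
    grw [card_liftEdges_le, card_filter_le, hle]
  · refine ⟨_, isTriangleTransversal_insert_liftEdges hxy hX, subset_insert _ _,
      card_insert_liftEdges_le fun z hz hzX => hN fun w hw => ?_⟩
    rwa [card_le_one.mp hle w (Set.mem_toFinset.mpr hw) z (Set.mem_toFinset.mpr hz)]

end Contraction

section Induction

variable {G G₁ G₂ : SimpleGraph V} {T S S₁ S₂ : Finset V} {X₁ X₂ : Finset (Sym2 V)}
  {g : Sym2 V} {x y u v : V} {n n₁ n₂ : ℕ}

lemma spanningCoe_induce_adj {S : Set V} :
    (G.induce S).spanningCoe.Adj u v ↔ G.Adj u v ∧ u ∈ S ∧ v ∈ S := by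
  simp

lemma isNClique_spanningCoe_induce {t : Finset V} {S : Set V} (ht : G.IsNClique n t)
    (htS : (t : Set V) ⊆ S) : (G.induce S).spanningCoe.IsNClique n t :=
  ⟨fun _ ha _ hb hab => spanningCoe_induce_adj.mpr ⟨ht.isClique ha hb hab, htS ha, htS hb⟩,
    ht.card_eq⟩

lemma support_contractEdge_subset (hxy : G.Adj x y) :
    (contractEdge G x y).support ⊆ G.support \ {y} := by
  rintro a ⟨b, hab⟩
  obtain ⟨hay, -, hab | ⟨rfl, -⟩ | ⟨rfl, hya⟩⟩ := contractEdge_adj hxy.ne hab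
  exacts [⟨⟨b, hab⟩, hay⟩, ⟨⟨y, hxy⟩, hay⟩, ⟨⟨y, hya.symm⟩, hay⟩]

lemma support_spanningCoe_induce_subset {S : Set V} :
    (G.induce S).spanningCoe.support ⊆ G.support ∩ S := by
  rintro a ⟨b, hab⟩
  obtain ⟨hab, ha, -⟩ := spanningCoe_induce_adj.mp hab
  exact ⟨⟨b, hab⟩, ha⟩

lemma coe_subset_support_of_isNClique_three {t : Finset V} (ht : G.IsNClique 3 t) :
    (t : Set V) ⊆ G.support := fun a ha => by
  obtain ⟨b, hb, hba⟩ := exists_mem_ne (ht.card_eq ▸ (by decide : 1 < 3)) a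
  exact ⟨b, ht.isClique ha hb hba.symm⟩

lemma IsTriangleTransversal.union
    (hcl : ∀ t, (G₁ ⊔ G₂).IsNClique 3 t → G₁.IsNClique 3 t ∨ G₂.IsNClique 3 t)
    (hX₁ : IsTriangleTransversal G₁ X₁) (hX₂ : IsTriangleTransversal G₂ X₂) :
    IsTriangleTransversal (G₁ ⊔ G₂) (X₁ ∪ X₂) := by
  refine ⟨?_, fun t ht => ?_⟩
  · rw [coe_union, SimpleGraph.edgeSet_sup]
    exact Set.union_subset_union hX₁.1 hX₂.1
  · rcases hcl t ht with ht | ht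
    · obtain ⟨e, he, het⟩ := hX₁.2 t ht
      exact ⟨e, mem_union_left _ he, het⟩
    · obtain ⟨e, he, het⟩ := hX₂.2 t ht
      exact ⟨e, mem_union_right _ he, het⟩

variable [Fintype V]

/-- The statement proved by induction on the number `n` of vertices of a planar graph `G`. Vertices
are deleted by isolating them, so `n` can be less than the cardinality of `V`. -/
structure PlanarBounds (G : SimpleGraph V) (n : ℕ) : Prop where
  card_edgeFinset_le : #G.edgeFinset + 6 ≤ 3 * n
  exists_transversal : ∀ g ∈ G.edgeSet, ∃ X, IsTriangleTransversal G X ∧ g ∈ X ∧ #X + 2 ≤ n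

lemma planarBounds_three (hS : #S = 3) (hGS : G.support ⊆ S) : PlanarBounds G 3 := by
  refine ⟨?_, fun g hg => ⟨{g}, ⟨by simpa using hg, fun t ht => ?_⟩, mem_singleton_self g, by simp⟩⟩
  · have hsub : G.edgeFinset ⊆ {e ∈ (⊤ : SimpleGraph V).edgeFinset | e ∈ S.sym2} := by
      intro e he
      induction e with | _ a b
      have hab : G.Adj a b := SimpleGraph.mem_edgeFinset.mp he
      refine mem_filter.mpr ⟨SimpleGraph.mem_edgeFinset.mpr hab.ne, mk_mem_sym2_iff.mpr ⟨?_, ?_⟩⟩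
      exacts [hGS ⟨b, hab⟩, hGS ⟨a, hab.symm⟩]
    have hclique : (⊤ : SimpleGraph V).IsNClique 3 S := ⟨fun _ _ _ _ => id, hS⟩
    have hcard : #{e ∈ (⊤ : SimpleGraph V).edgeFinset | e ∈ S.sym2} = Nat.choose 3 2 := by
      convert card_edges_isNClique hclique
    grw [hsub, hcard]
    decide
  · have htS : t ⊆ S := coe_subset.mp ((coe_subset_support_of_isNClique_three ht).trans hGS)
    rw [eq_of_subset_of_card_le htS (hS.trans ht.card_eq.symm).le]
    refine ⟨g, mem_singleton_self g, fun v hv => ?_⟩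
    obtain ⟨w, rfl⟩ := hv
    exact hGS ⟨w, hg⟩

lemma card_edgeFinset_sup_add_le (hT₁ : G₁.IsNClique n T) (hT₂ : G₂.IsNClique n T) :
    #(G₁ ⊔ G₂).edgeFinset + n.choose 2 ≤ #G₁.edgeFinset + #G₂.edgeFinset := by
  have hsup : (G₁ ⊔ G₂).edgeFinset = G₁.edgeFinset ∪ G₂.edgeFinset := by ext; simp
  have hinter : {e ∈ G₁.edgeFinset | e ∈ T.sym2} ⊆ G₁.edgeFinset ∩ G₂.edgeFinset := by
    intro e he
    obtain ⟨he, heT⟩ := mem_filter.mp he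
    refine mem_inter.mpr ⟨he, ?_⟩
    induction e with | _ a b
    obtain ⟨ha, hb⟩ := mk_mem_sym2_iff.mp heT
    have hab : a ≠ b := (SimpleGraph.mem_edgeFinset.mp he).ne
    exact SimpleGraph.mem_edgeFinset.mpr (hT₂.isClique ha hb hab)
  grw [hsup, ← card_edges_isNClique hT₁, hinter, card_union_add_card_inter]

namespace PlanarBounds

lemma exists_transversal_sup (h₁ : PlanarBounds G₁ n₁) (h₂ : PlanarBounds G₂ n₂)
    (hT₁ : G₁.IsNClique 3 T) (hT₂ : G₂.IsNClique 3 T)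
    (hcl : ∀ t, (G₁ ⊔ G₂).IsNClique 3 t → G₁.IsNClique 3 t ∨ G₂.IsNClique 3 t)
    (hg : g ∈ G₁.edgeSet) :
    ∃ X, IsTriangleTransversal (G₁ ⊔ G₂) X ∧ g ∈ X ∧ #X + 5 ≤ n₁ + n₂ := by
  obtain ⟨X₁, hX₁, hgX₁, hcard₁⟩ := h₁.exists_transversal g hg
  obtain ⟨f, hfX₁, hfT⟩ := hX₁.2 T hT₁
  have hf : f ∈ G₂.edgeSet := by
    have hf : f ∈ G₁.edgeSet := hX₁.1 hfX₁
    induction f with | _ a b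
    have hab : a ≠ b := ((SimpleGraph.mem_edgeSet _).mp hf).ne
    exact hT₂.isClique (hfT a (by simp)) (hfT b (by simp)) hab
  obtain ⟨X₂, hX₂, hfX₂, hcard₂⟩ := h₂.exists_transversal f hf
  refine ⟨X₁ ∪ X₂, .union hcl hX₁ hX₂, mem_union_left _ hgX₁, ?_⟩
  have hunion := card_union_add_card_inter X₁ X₂
  have hinter : 0 < #(X₁ ∩ X₂) := card_pos.mpr ⟨f, mem_inter.mpr ⟨hfX₁, hfX₂⟩⟩
  omega

lemma sup (h₁ : PlanarBounds G₁ n₁) (h₂ : PlanarBounds G₂ n₂) (hT₁ : G₁.IsNClique 3 T)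
    (hT₂ : G₂.IsNClique 3 T)
    (hcl : ∀ t, (G₁ ⊔ G₂).IsNClique 3 t → G₁.IsNClique 3 t ∨ G₂.IsNClique 3 t)
    (hn : n₁ + n₂ = n + 3) : PlanarBounds (G₁ ⊔ G₂) n := by
  refine ⟨?_, fun g hg => ?_⟩
  · have hle := card_edgeFinset_sup_add_le hT₁ hT₂
    have hchoose : Nat.choose 3 2 = 3 := rfl
    have := h₁.card_edgeFinset_le
    have := h₂.card_edgeFinset_le
    convert (by omega : #(G₁ ⊔ G₂).edgeFinset + 6 ≤ 3 * n)
  · rw [SimpleGraph.edgeSet_sup] at hg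
    rcases hg with hg | hg
    · obtain ⟨X, hX, hgX, hcard⟩ := h₁.exists_transversal_sup h₂ hT₁ hT₂ hcl hg
      exact ⟨X, hX, hgX, by omega⟩
    · rw [sup_comm] at hcl ⊢
      obtain ⟨X, hX, hgX, hcard⟩ := h₂.exists_transversal_sup h₁ hT₂ hT₁
        (fun t ht => (hcl t ht).symm) hg
      exact ⟨X, hX, hgX, by omega⟩

lemma exists_transversal_of_contractEdge (hc : PlanarBounds (contractEdge G x y) n)
    (hxy : G.Adj x y) (hle : triangleDegree G s(x, y) ≤ 1) (hg : g ∈ G.edgeSet)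
    (hne : g ≠ s(x, y)) : ∃ X, IsTriangleTransversal G X ∧ g ∈ X ∧ #X + 2 ≤ n + 1 := by
  induction g with | _ a b
  obtain ⟨X, hX, hgX, hcard⟩ := hc.exists_transversal
    s(Function.update id y x a, Function.update id y x b) (contractEdge_adj_update hg hne)
  obtain ⟨X', hX', hsub, hcard'⟩ := exists_isTriangleTransversal_of_contractEdge hxy hle hX
  exact ⟨X', hX', hsub (mk_mem_liftEdges.mpr ⟨hg, hgX⟩), by omega⟩

lemma exists_isTriangleTransversal (h : PlanarBounds G n) (hn : 2 ≤ n) :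
    ∃ X, IsTriangleTransversal G X ∧ #X + 2 ≤ n := by
  rcases G.edgeSet.eq_empty_or_nonempty with hG | ⟨e, he⟩
  · refine ⟨∅, ⟨by simp, fun t ht => ?_⟩, by simpa⟩
    obtain ⟨a, b, -, hab, -⟩ := SimpleGraph.is3Clique_iff.mp ht
    exact absurd ((SimpleGraph.mem_edgeSet _).mpr hab) (hG ▸ Set.notMem_empty _)
  · obtain ⟨X, hX, -, hcard⟩ := h.exists_transversal e he
    exact ⟨X, hX, hcard⟩

lemma exists_mem_transversal_of_contractEdge (hc : PlanarBounds (contractEdge G x y) n)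
    (hn : 2 ≤ n) (hxy : G.Adj x y) (h0 : triangleDegree G s(x, y) = 0) :
    ∃ X, IsTriangleTransversal G X ∧ s(x, y) ∈ X ∧ #X + 2 ≤ n + 1 := by
  obtain ⟨X, hX, hcard⟩ := hc.exists_isTriangleTransversal hn
  rw [triangleDegree_of_adj hxy, card_eq_zero] at h0
  have hle : #(insert s(x, y) (liftEdges G x y X)) ≤ #X + 1 :=
    card_insert_liftEdges_le fun z hz => absurd (Set.mem_toFinset.mpr hz) (h0 ▸ notMem_empty z)
  exact ⟨_, isTriangleTransversal_insert_liftEdges hxy hX, mem_insert_self _ _, by omega⟩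

lemma of_contractEdge (hn : 2 ≤ n) (hc : ∀ x y, G.Adj x y → PlanarBounds (contractEdge G x y) n)
    (h2 : ∀ e ∈ G.edgeFinset, triangleDegree G e ≤ 2) : PlanarBounds G (n + 1) := by
  have hcard : #G.edgeFinset + 6 ≤ 3 * (n + 1) := by
    rcases G.edgeFinset.eq_empty_or_nonempty with hG | ⟨e, he⟩
    · rw [hG, card_empty]
      omega
    · induction e with | _ x y
      have hxy : G.Adj x y := SimpleGraph.mem_edgeFinset.mp he
      have := card_edgeFinset_le_contractEdge hxy
      have := (hc x y hxy).card_edgeFinset_le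
      have := h2 _ he
      omega
  refine ⟨hcard, fun g hg => ?_⟩
  by_cases hother : ∀ e ∈ G.edgeFinset, e ≠ g → triangleDegree G e = 2
  · have hg' : g ∈ G.edgeFinset := SimpleGraph.mem_edgeFinset.mpr hg
    have := triangleDegree_ne_one_of_forall_ne hg' hother
    have := h2 g hg'
    obtain h0 | htwo : triangleDegree G g = 0 ∨ triangleDegree G g = 2 := by omega
    · induction g with | _ x y
      exact (hc x y hg).exists_mem_transversal_of_contractEdge hn hg h0
    · obtain ⟨X, hX, hgX, hle⟩ := exists_isTriangleTransversal_of_triangleDegree_eq_two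
        (fun e he => (eq_or_ne e g).elim (· ▸ htwo) (hother e he)) hg'
      exact ⟨X, hX, hgX, by omega⟩
  · push Not at hother
    obtain ⟨⟨x, y⟩, he, hne, hxy2⟩ := hother
    have hxy : G.Adj x y := SimpleGraph.mem_edgeFinset.mp he
    exact (hc x y hxy).exists_transversal_of_contractEdge hxy
      (Nat.le_of_lt_succ ((h2 _ he).lt_of_ne hxy2)) hg hne.symm

end PlanarBounds

/-- A triangle `T` of `G` that separates `S₁ \ T` from `S₂ \ T`, where `S₁ ∪ S₂` is everything. -/
structure IsTriangleSeparation (G : SimpleGraph V) (T S₁ S₂ : Finset V) : Prop where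
  isNClique : G.IsNClique 3 T
  union_eq : S₁ ∪ S₂ = univ
  inter_eq : S₁ ∩ S₂ = T
  not_adj : ∀ a ∉ S₁, ∀ b ∉ S₂, ¬ G.Adj a b

namespace IsTriangleSeparation

lemma subset_or_subset_of_isClique (h : IsTriangleSeparation G T S₁ S₂) {K : Set V}
    (hK : G.IsClique K) : K ⊆ S₁ ∨ K ⊆ S₂ := by
  by_contra! hKS
  obtain ⟨⟨a, ha, ha₁⟩, b, hb, hb₂⟩ := hKS.imp Set.not_subset.mp Set.not_subset.mp
  have ha₂ : a ∈ S₂ := (mem_union.mp (h.union_eq ▸ mem_univ a)).resolve_left ha₁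
  exact h.not_adj a ha₁ b hb₂ (hK ha hb (ne_of_mem_of_not_mem ha₂ hb₂))

lemma spanningCoe_induce_sup (h : IsTriangleSeparation G T S₁ S₂) :
    (G.induce S₁).spanningCoe ⊔ (G.induce S₂).spanningCoe = G := by
  refine le_antisymm (sup_le (G.spanningCoe_induce_le _) (G.spanningCoe_induce_le _))
    fun a b hab => ?_
  have hclique : G.IsClique {a, b} := SimpleGraph.isClique_pair.mpr fun _ => hab
  simpa only [SimpleGraph.sup_adj, spanningCoe_induce_adj, hab, true_and, Set.pair_subset_iff]
    using h.subset_or_subset_of_isClique hclique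

end IsTriangleSeparation

lemma PlanarBounds.of_isTriangleSeparation (h : IsTriangleSeparation G T S₁ S₂)
    (h₁ : PlanarBounds (G.induce S₁).spanningCoe n₁)
    (h₂ : PlanarBounds (G.induce S₂).spanningCoe n₂) (hn : n₁ + n₂ = n + 3) :
    PlanarBounds G n := by
  have hT : T ⊆ S₁ ∧ T ⊆ S₂ := subset_inter_iff.mp h.inter_eq.ge
  rw [← h.spanningCoe_induce_sup]
  refine h₁.sup h₂ (isNClique_spanningCoe_induce h.isNClique (coe_subset.mpr hT.1))
    (isNClique_spanningCoe_induce h.isNClique (coe_subset.mpr hT.2)) (fun t ht => ?_) hn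
  rw [h.spanningCoe_induce_sup] at ht
  exact (h.subset_or_subset_of_isClique ht.isClique).imp (isNClique_spanningCoe_induce ht)
    (isNClique_spanningCoe_induce ht)

lemma VanKampenCertificate.exists_isTriangleSeparation (C : VanKampenCertificate G)
    (huv : G.Adj u v) (h : 2 < triangleDegree G s(u, v)) :
    ∃ T S₁ S₂, IsTriangleSeparation G T S₁ S₂ ∧ ¬ G.support ⊆ S₁ ∧ ¬ G.support ⊆ S₂ := by
  rw [triangleDegree_of_adj huv] at h
  obtain ⟨x, hx, y, hy, z, hz, hxy, hxz, hyz⟩ := two_lt_card.mp h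
  rw [Set.mem_toFinset] at hx hy hz
  obtain ⟨w, ⟨huw, hvw⟩, a, ⟨hua, hva⟩, b, ⟨hub, hvb⟩, haw, hbw, hab⟩ :=
    C.exists_side_ne huv hx hy hz hxy hxz hyz
  let T : Finset V := {u, v, w}
  have hT : ∀ {s}, s ∉ T ↔ s ≠ u ∧ s ≠ v ∧ s ≠ w := by simp [T]
  have haT : a ∉ T := hT.mpr ⟨hua.ne', hva.ne', haw⟩
  have hbT : b ∉ T := hT.mpr ⟨hub.ne', hvb.ne', hbw⟩
  let S₁ : Finset V := {s | s ∈ T ∨ C.side u v w s = C.side u v w a}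
  let S₂ : Finset V := {s | s ∈ T ∨ C.side u v w s ≠ C.side u v w a}
  refine ⟨T, S₁, S₂, ⟨?_, ?_, ?_, ?_⟩, fun hsub => ?_, fun hsub => ?_⟩
  · exact SimpleGraph.is3Clique_triple_iff.mpr ⟨huv, huw, hvw⟩
  · ext s
    simp only [S₁, S₂, mem_union, mem_filter_univ, mem_univ, iff_true]
    tauto
  · ext s
    simp only [S₁, S₂, mem_inter, mem_filter_univ]
    tauto
  · intro p hp q hq hpq
    simp only [S₁, S₂, mem_filter_univ, not_or, not_not] at hp hq
    obtain ⟨hpu, hpv, hpw⟩ := hT.mp hp.1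
    obtain ⟨hqu, hqv, hqw⟩ := hT.mp hq.1
    exact hp.2 ((C.side_eq_of_adj huv huw hvw hpq hpu hpv hpw hqu hqv hqw).trans hq.2)
  · exact absurd (hsub ⟨u, hub.symm⟩) (by simp [S₁, hbT, hab.symm])
  · exact absurd (hsub ⟨u, hua.symm⟩) (by simp [S₂, haT])

theorem VanKampenCertificate.planarBounds (C : VanKampenCertificate G) (hS : 3 ≤ #S)
    (hGS : G.support ⊆ S) : PlanarBounds G #S := by
  induction S using Finset.strongInduction generalizing G with | _ S ih
  rcases hS.eq_or_lt with hS3 | hS4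
  · exact hS3 ▸ planarBounds_three hS3.symm hGS
  by_cases h2 : ∀ e ∈ G.edgeFinset, triangleDegree G e ≤ 2
  · obtain ⟨n, hn⟩ : ∃ n, #S = n + 1 := ⟨#S - 1, by omega⟩
    rw [hn]
    refine .of_contractEdge (by omega) (fun x y hxy => ?_) h2
    have hy : y ∈ S := hGS ⟨x, hxy.symm⟩
    have hcard : #(S.erase y) = n := by rw [card_erase_of_mem hy, hn, Nat.add_sub_cancel]
    rw [← hcard]
    refine ih _ (erase_ssubset hy) (C.contract hxy) (by omega) ?_
    rw [coe_erase]
    exact (support_contractEdge_subset hxy).trans (Set.sdiff_subset_sdiff_left hGS)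
  · push Not at h2
    obtain ⟨⟨u, v⟩, he, h⟩ := h2
    obtain ⟨T, S₁, S₂, hsep, hS₁, hS₂⟩ :=
      C.exists_isTriangleSeparation (SimpleGraph.mem_edgeFinset.mp he) h
    have hT := hsep.isNClique
    have hTS : T ⊆ S := coe_subset.mp ((coe_subset_support_of_isNClique_three hT).trans hGS)
    have side : ∀ S' : Finset V, T ⊆ S' → ¬ G.support ⊆ S' →
        PlanarBounds (G.induce S').spanningCoe #(S ∩ S') := by
      intro S' hTS' hS'
      refine ih _ (inter_subset_left.ssubset_of_ne fun h => hS' ?_)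
        (C.mono (G.spanningCoe_induce_le _))
        (hT.card_eq ▸ card_le_card (subset_inter hTS hTS')) ?_
      · exact hGS.trans (coe_subset.mpr (inter_eq_left.mp h))
      · rw [coe_inter]
        exact support_spanningCoe_induce_subset.trans (Set.inter_subset_inter_left _ hGS)
    obtain ⟨hT₁, hT₂⟩ := subset_inter_iff.mp hsep.inter_eq.ge
    refine .of_isTriangleSeparation hsep (side S₁ hT₁ hS₁) (side S₂ hT₂ hS₂) ?_
    rw [← card_union_add_card_inter, ← inter_union_distrib_left, hsep.union_eq, inter_univ,
      ← inter_inter_distrib_left, hsep.inter_eq, inter_eq_right.mpr hTS, hT.card_eq]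

end Induction

/-- If `G` is a planar graph on `n` vertices, with at least one edge and distinct
from `K₃`, then `τ(G) ≤ n - 2`. -/
theorem tau_le_of_planar (V : Type) [Fintype V] (G : SimpleGraph V)
    (hplanar : PlanarGraph G) (hedge : G.edgeSet.Nonempty)
    (hK3 : ¬ Nonempty (G ≃g (⊤ : SimpleGraph (Fin 3)))) :
    tau G ≤ Fintype.card V - 2 := by
  obtain ⟨E⟩ := hplanar
  obtain ⟨C⟩ := E.nonempty_vanKampenCertificate
  obtain ⟨g, hg⟩ := hedge
  by_cases hn : 3 ≤ Fintype.card V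
  · have hG : PlanarBounds G (Fintype.card V) :=
      C.planarBounds hn fun a _ => mem_coe.mpr (mem_univ a)
    obtain ⟨X, hX, -, hcard⟩ := hG.exists_transversal g hg
    have hle : tau G ≤ #X := Nat.sInf_le ⟨X, hX, rfl⟩
    omega
  · have hempty : IsTriangleTransversal G ∅ :=
      ⟨by simp, fun t ht => absurd (ht.card_eq ▸ card_le_univ t) hn⟩
    have hle : tau G ≤ 0 := Nat.sInf_le ⟨∅, hempty, card_empty⟩
    omega
end
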